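/- arXiv:1804.07673 — 3 statements merged into one kernel-verified Lean document; each statement's English description precedes it below -/
import Mathlib

section
/- For every integer n ≥ 7, the maximum number of edges of a 3-uniform hypergraph on n vertices that does not contain the Fano plane equals b(n) = C(n,3) − C(⌊n/2⌋,3) − C(⌈n/2⌉,3); that is, every Fano-free 3-uniform hypergraph on n vertices has at most b(n) edges, and some Fano-free 3-uniform hypergraph on n vertices has exactly b(n) edges. -/
/-!
Count ordered triples, which multiplies all edge numbers by six, and write `S` for the vertex set.
For `#S = 7`, average the number of edges over all placements of the Fano plane; for even `#S`,
average over the deletion of a vertex.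

For odd `#S ≥ 9`, remove a clique `K` with six, five or four vertices, as large as possible, and
apply induction to `S \ K`. A vertex outside `K` misses an edge to `K`, which bounds the edges with
two vertices in `K`. For the edges with one vertex in `K`, superpose the links of four vertices of
`K`: by Hall's theorem, if all three perfect matchings of some four outer vertices were heavy in
this multigraph, then four outer vertices and three vertices of `K` would span a Fano plane, and a
multigraph without such quadruples has at most the weight `linkBound`. When `#K = 5` these two
bounds are not good enough separately, but they compete: two outer vertices with many edges to `K`
lie in few common links. If there is no clique on four vertices, averaging over quadruples suffices.
-/

/-- A `3`-uniform hypergraph (given by its edge set `E`) contains the Fano plane if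
there are seven distinct vertices `v 0, …, v 6` such that the seven triples below
(the lines of the projective plane over `GF(2)`) are all edges. -/
def ContainsFano {α : Type*} [DecidableEq α] (E : Finset (Finset α)) : Prop :=
  ∃ v : Fin 7 → α, Function.Injective v ∧
    ({v 0, v 1, v 2} : Finset α) ∈ E ∧ ({v 2, v 3, v 4} : Finset α) ∈ E ∧
    ({v 0, v 4, v 5} : Finset α) ∈ E ∧ ({v 0, v 3, v 6} : Finset α) ∈ E ∧
    ({v 2, v 5, v 6} : Finset α) ∈ E ∧ ({v 1, v 4, v 6} : Finset α) ∈ E ∧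
    ({v 1, v 3, v 5} : Finset α) ∈ E

/-- `b n = C(n,3) − C(⌊n/2⌋,3) − C(⌈n/2⌉,3)`, the number of edges of the balanced,
complete, bipartite `3`-uniform hypergraph on `n` vertices. -/
def b (n : ℕ) : ℕ := n.choose 3 - (n / 2).choose 3 - ((n + 1) / 2).choose 3

section TuranFano

open Finset

variable {α : Type*}

/-! ### Sums over ordered pairs and triples -/

/-- The sum of `w` over ordered pairs from `S`: twice the weight that a loopless weighted
graph `w` puts on `S`. -/
def pairSum (w : α → α → ℤ) (S : Finset α) : ℤ := ∑ x ∈ S, ∑ y ∈ S, w x y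

/-- The sum of `h` over ordered triples from `S`: six times the number of edges inside `S`
when `h` is the indicator function of a `3`-uniform hypergraph. -/
def tripleSum (h : α → α → α → ℤ) (S : Finset α) : ℤ := ∑ x ∈ S, pairSum (h x) S

/-- `w` is the weight function of a loopless undirected weighted graph. -/
structure IsEdgeWeight (w : α → α → ℤ) : Prop where
  symm : ∀ x y, w x y = w y x
  diag : ∀ x, w x x = 0

theorem mul_sum_le_card_mul_of_forall_subset {f : α → ℤ} {S : Finset α} {r : ℕ}
    {C : ℤ} (hr : 0 < r) (hrS : r ≤ #S) (hC : ∀ A ⊆ S, #A = r → ∑ x ∈ A, f x ≤ C) :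
    r * ∑ x ∈ S, f x ≤ #S * C := by
  classical
  obtain ⟨n, hs⟩ : ∃ n, #S = n := ⟨_, rfl⟩
  rw [hs] at hrS ⊢
  induction n, hrS using Nat.le_induction generalizing S with
  | base => exact mul_le_mul_of_nonneg_left (hC S Subset.rfl hs) (by positivity)
  | succ n hn ih =>
    have herase : ∀ v ∈ S, r * (∑ x ∈ S, f x - f v) ≤ n * C := fun v hv => by
      have hcard : #(S.erase v) = n := by rw [card_erase_of_mem hv, hs]; rfl
      rw [← sum_erase_eq_sub hv]
      exact ih (fun A hA => hC A (hA.trans (erase_subset v S))) hcard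
    have hsum := sum_le_sum herase
    simp only [← mul_sum, sum_sub_distrib, sum_const, nsmul_eq_mul, hs] at hsum
    have hn0 : (0 : ℤ) < n := by exact_mod_cast hr.trans_le hn
    refine le_of_mul_le_mul_left ?_ hn0
    push_cast at hsum ⊢
    linarith

theorem sum_le_mul_card {f : α → ℤ} {S : Finset α} {c : ℤ} (hf : ∀ x ∈ S, f x ≤ c) :
    ∑ x ∈ S, f x ≤ c * #S := by
  simpa [mul_comm] using sum_le_card_nsmul S f c hf

namespace IsEdgeWeight

variable {w : α → α → ℤ} {S : Finset α}

theorem pairSum_eq_sum_erase [DecidableEq α] (hw : IsEdgeWeight w) (S : Finset α) :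
    pairSum w S = ∑ x ∈ S, ∑ y ∈ S.erase x, w x y :=
  sum_congr rfl fun x _ => (sum_erase S (hw.diag x)).symm

theorem pairSum_eq_of_subset [DecidableEq α] (hw : IsEdgeWeight w) {A : Finset α} (hA : A ⊆ S) :
    pairSum w S = pairSum w A + pairSum w (S \ A) + 2 * ∑ y ∈ S \ A, ∑ x ∈ A, w x y := by
  have hcross : ∑ x ∈ A, ∑ y ∈ S \ A, w x y = ∑ y ∈ S \ A, ∑ x ∈ A, w x y := sum_comm
  have hcross' : ∑ y ∈ S \ A, ∑ x ∈ A, w y x = ∑ y ∈ S \ A, ∑ x ∈ A, w x y := by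
    simp only [hw.symm]
  simp only [pairSum, ← sum_sdiff hA, sum_add_distrib, hcross, hcross']
  ring

theorem pairSum_eq_erase [DecidableEq α] (hw : IsEdgeWeight w) {v : α} (hv : v ∈ S) :
    pairSum w S = pairSum w (S.erase v) + 2 * ∑ y ∈ S.erase v, w v y := by
  have hsplit := hw.pairSum_eq_of_subset (singleton_subset_iff.2 hv)
  have hsingle : pairSum w {v} = 0 := by simp [pairSum, hw.diag]
  simpa [sdiff_singleton_eq_erase, hsingle] using hsplit

theorem sum_pairSum_erase [DecidableEq α] (hw : IsEdgeWeight w) (S : Finset α) :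
    ∑ v ∈ S, pairSum w (S.erase v) = (#S - 2) * pairSum w S := by
  have herase : ∀ v ∈ S, pairSum w (S.erase v) = pairSum w S - 2 * ∑ y ∈ S.erase v, w v y :=
    fun v hv => by linarith [hw.pairSum_eq_erase hv]
  rw [sum_congr rfl herase, sum_sub_distrib, ← mul_sum, ← hw.pairSum_eq_sum_erase, sum_const,
    nsmul_eq_mul]
  ring

theorem even_pairSum (hw : IsEdgeWeight w) (S : Finset α) : Even (pairSum w S) := by
  classical
  induction S using Finset.induction_on with
  | empty => simp [pairSum]
  | insert v S hv ih =>
    rw [hw.pairSum_eq_erase (mem_insert_self v S), erase_insert hv]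
    exact ih.add (even_two_mul _)

theorem pairSum_le_mul (hw : IsEdgeWeight w) {c : ℤ}
    (hc : ∀ x ∈ S, ∀ y ∈ S, x ≠ y → w x y ≤ c) : pairSum w S ≤ c * (#S * (#S - 1)) := by
  classical
  have hrow : ∀ x ∈ S, ∑ y ∈ S.erase x, w x y ≤ c * (#S - 1) := fun x hx => by
    have := sum_le_mul_card fun y hy =>
      hc x hx y (mem_of_mem_erase hy) (ne_of_mem_erase hy).symm
    rwa [cast_card_erase_of_mem hx] at this
  rw [hw.pairSum_eq_sum_erase]
  linarith [sum_le_mul_card hrow]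

theorem pairSum_eq_mul (hw : IsEdgeWeight w) {c : ℤ}
    (hc : ∀ x ∈ S, ∀ y ∈ S, x ≠ y → w x y = c) : pairSum w S = c * (#S * (#S - 1)) := by
  classical
  have hrow : ∀ x ∈ S, ∑ y ∈ S.erase x, w x y = (#S - 1) * c := fun x hx => by
    rw [sum_congr rfl fun y hy => hc x hx y (mem_of_mem_erase hy) (ne_of_mem_erase hy).symm,
      sum_const, nsmul_eq_mul, cast_card_erase_of_mem hx]
  rw [hw.pairSum_eq_sum_erase, sum_congr rfl hrow, sum_const, nsmul_eq_mul]
  ring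

theorem pairSum_le_of_le_one (hw : IsEdgeWeight w) (hw1 : ∀ x y, w x y ≤ 1) {a b : α} (ha : a ∈ S)
    (hb : b ∈ S) (hab : a ≠ b) (hw0 : w a b ≤ 0) : pairSum w S ≤ #S * (#S - 1) - 2 := by
  classical
  have hb' : b ∈ S.erase a := mem_erase.2 ⟨hab.symm, hb⟩
  have hrest := hw.pairSum_le_mul (S := S.erase a) (c := 1) fun x _ y _ _ => hw1 x y
  have hrow := sum_le_mul_card (S := (S.erase a).erase b) fun y _ => hw1 a y
  rw [hw.pairSum_eq_erase ha, ← add_sum_erase _ _ hb']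
  rw [cast_card_erase_of_mem ha] at hrest
  rw [cast_card_erase_of_mem hb', cast_card_erase_of_mem ha] at hrow
  linarith

theorem mul_pairSum_add_le (hw : IsEdgeWeight w) {f : α → ℤ} {a c : ℤ}
    (hc : ∀ x ∈ S, ∀ y ∈ S, x ≠ y → a * w x y + (f x + f y) ≤ c) :
    a * pairSum w S + 2 * (#S - 1) * ∑ x ∈ S, f x ≤ c * (#S * (#S - 1)) := by
  classical
  have hrow : ∀ x ∈ S, a * ∑ y ∈ S.erase x, w x y + ((#S - 2) * f x + ∑ y ∈ S, f y) ≤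
      c * (#S - 1) := fun x hx => by
    have := sum_le_mul_card fun y hy =>
      hc x hx y (mem_of_mem_erase hy) (ne_of_mem_erase hy).symm
    rw [sum_add_distrib, sum_add_distrib, sum_const, nsmul_eq_mul, sum_erase_eq_sub (f := f) hx,
      cast_card_erase_of_mem hx, ← mul_sum] at this
    linarith
  have := sum_le_mul_card hrow
  rw [sum_add_distrib, sum_add_distrib, sum_const, nsmul_eq_mul, ← mul_sum, ← mul_sum,
    ← hw.pairSum_eq_sum_erase] at this
  linarith

end IsEdgeWeight

/-! ### Multigraphs without heavy quadruples -/

theorem IsEdgeWeight.pairSum_eq_triangle [DecidableEq α] {w : α → α → ℤ} (hw : IsEdgeWeight w)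
    {a b c : α} (hab : a ≠ b) (hac : a ≠ c) (hbc : b ≠ c) :
    pairSum w {a, b, c} = 2 * (w a b + w a c + w b c) := by
  simp [pairSum, sum_insert, hab, hac, hbc, hw.diag, hw.symm b a, hw.symm c]
  ring

theorem IsEdgeWeight.pairSum_le_of_triangle_le {w : α → α → ℤ} (hw : IsEdgeWeight w) {c : ℤ}
    (hle : ∀ x y, w x y ≤ c + 1) {S : Finset α}
    (htri : ∀ x ∈ S, ∀ y ∈ S, ∀ z ∈ S, x ≠ y → x ≠ z → y ≠ z →
      w x y + w x z + w y z ≤ 3 * c + 1) :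
    pairSum w S ≤ c * (#S * (#S - 1)) + 2 * (#S / 2 : ℕ) := by
  classical
  induction S using Finset.strongInduction with
  | H S ih =>
    by_cases hc : ∀ x ∈ S, ∀ y ∈ S, x ≠ y → w x y ≤ c
    · linarith [hw.pairSum_le_mul hc, Nat.cast_nonneg (α := ℤ) (#S / 2)]
    push Not at hc
    obtain ⟨u, hu, v, hv, huv, hwuv⟩ := hc
    have hsub : {u, v} ⊆ S := by simp [insert_subset_iff, hu, hv]
    have hcard : #(S \ {u, v}) + 2 = #S := by
      rw [← card_pair huv, card_sdiff_add_card_eq_card hsub]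
    have hrest := ih (S \ {u, v}) (sdiff_ssubset hsub (insert_nonempty u {v})) fun x hx y hy z hz =>
      htri x (sdiff_subset hx) y (sdiff_subset hy) z (sdiff_subset hz)
    have hcross : ∀ y ∈ S \ {u, v}, ∑ x ∈ {u, v}, w x y ≤ 2 * c := fun y hy => by
      simp only [mem_sdiff, mem_insert, mem_singleton, not_or] at hy
      rw [sum_pair huv]
      linarith [htri u hu v hv y hy.1 huv (Ne.symm hy.2.1) (Ne.symm hy.2.2)]
    have hpair : pairSum w {u, v} = 2 * w u v := by
      simp [pairSum, sum_pair huv, hw.diag, hw.symm v u, two_mul]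
    have hsum := sum_le_mul_card hcross
    rw [hw.pairSum_eq_of_subset hsub, hpair, ← hcard, Nat.add_div_right _ two_pos]
    push_cast at hrest ⊢
    linarith [hle u v]

/-- The bound, valid for `n ≠ 3`, on the ordered weight that the superposed links of the four
vertices of a clique in a Fano-free `3`-graph put on `n` vertices. -/
def linkBound (n : ℕ) : ℤ := 3 * (n * (n - 1)) + 2 * (n / 2 : ℕ)

theorem linkBound_add_three (r : ℕ) :
    linkBound (r + 3) = linkBound r + 18 * r + 20 + 2 * (r % 2 : ℕ) := by
  have : (r + 3) / 2 = r / 2 + 1 + r % 2 := by omega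
  simp only [linkBound, this]
  push_cast
  ring

theorem linkBound_two_mul (m : ℕ) : linkBound (2 * m) = 12 * m ^ 2 - 4 * m := by
  simp only [linkBound, Nat.mul_div_cancel_left m two_pos]
  push_cast
  ring

theorem linkBound_two_mul_add_one (m : ℕ) : linkBound (2 * m + 1) = 12 * m ^ 2 + 8 * m := by
  have : (2 * m + 1) / 2 = m := by omega
  simp only [linkBound, this]
  push_cast
  ring

/-- The weight condition satisfied by the superposition of the links of four vertices that span
a clique in a Fano-free `3`-graph: if the edges of all three perfect matchings of `xyzt` carried
too much weight, then the four links would contain a Fano plane together with the clique. -/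
structure IsMatchingBounded (w : α → α → ℤ) : Prop extends IsEdgeWeight w where
  le_four : ∀ x y, w x y ≤ 4
  matching : ∀ x y z t,
    w x y + w z t + (w x z + w y t) + (w x t + w y z) ≤ 18 ∨
      w x y + w z t ≤ 4 ∨ w x z + w y t ≤ 4 ∨ w x t + w y z ≤ 4

namespace IsMatchingBounded

variable {w : α → α → ℤ}

/-- A triangle of weight at least `11` whose vertex `a` is incident with two edges of
weight `4`. -/
structure IsHeavyTriangle (w : α → α → ℤ) (a b c : α) : Prop where
  ne : a ≠ b ∧ a ≠ c ∧ b ≠ c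
  fst : w a b = 4
  snd : w a c = 4
  base : 3 ≤ w b c

theorem exists_isHeavyTriangle (hw : IsMatchingBounded w) {S : Finset α} {x y z : α}
    (hx : x ∈ S) (hy : y ∈ S) (hz : z ∈ S) (hxy : x ≠ y) (hxz : x ≠ z) (hyz : y ≠ z)
    (h : 10 < w x y + w x z + w y z) :
    ∃ a ∈ S, ∃ b ∈ S, ∃ c ∈ S, IsHeavyTriangle w a b c := by
  have := hw.le_four x y
  have := hw.le_four x z
  have := hw.le_four y z
  have := hw.symm y x
  have := hw.symm z x
  have := hw.symm z y
  by_cases h₁ : w x y = 4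
  · by_cases h₂ : w x z = 4
    · exact ⟨x, hx, y, hy, z, hz, ⟨hxy, hxz, hyz⟩, h₁, h₂, by omega⟩
    · exact ⟨y, hy, x, hx, z, hz, ⟨hxy.symm, hyz, hxz⟩, by omega, by omega, by omega⟩
  · exact ⟨z, hz, x, hx, y, hy, ⟨hxz.symm, hyz.symm, hxy⟩, by omega, by omega, by omega⟩

theorem IsHeavyTriangle.sum_le_nine (hw : IsMatchingBounded w) {a b c : α}
    (habc : IsHeavyTriangle w a b c) (y : α) : w a y + w b y + w c y ≤ 9 := by
  have := habc.fst
  have := habc.snd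
  have := habc.base
  have := hw.le_four b c
  have := hw.matching a b c y
  have := hw.le_four a y
  have := hw.le_four b y
  have := hw.le_four c y
  omega

theorem IsHeavyTriangle.sum_le_eight (hw : IsMatchingBounded w) {a b c : α}
    (habc : IsHeavyTriangle w a b c) (hbc : w b c = 4) (y : α) : w a y + w b y + w c y ≤ 8 := by
  have := habc.fst
  have := habc.snd
  have := hw.matching a b c y
  have := hw.le_four a y
  have := hw.le_four b y
  have := hw.le_four c y
  omega

theorem IsHeavyTriangle.apex_le_one (hw : IsMatchingBounded w) {a b c y : α}
    (habc : IsHeavyTriangle w a b c) (hy : w a y + w b y + w c y = 9) : w a y ≤ 1 := by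
  have := hw.le_four a y
  have := hw.le_four b y
  have := hw.le_four c y
  have := habc.fst
  have := habc.snd
  have := habc.base
  have := hw.matching a b c y
  omega

section

variable [DecidableEq α] {S : Finset α} {a b c : α}

theorem IsHeavyTriangle.card_sdiff_add_three (habc : IsHeavyTriangle w a b c) (ha : a ∈ S)
    (hb : b ∈ S) (hc : c ∈ S) : #(S \ {a, b, c}) + 3 = #S := by
  obtain ⟨hab, hac, hbc⟩ := habc.ne
  have hsub : {a, b, c} ⊆ S := by simp [insert_subset_iff, ha, hb, hc]
  rw [← card_eq_three.2 ⟨a, b, c, hab, hac, hbc, rfl⟩, card_sdiff_add_card_eq_card hsub]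

theorem IsHeavyTriangle.pairSum_eq (hw : IsMatchingBounded w) (habc : IsHeavyTriangle w a b c)
    (ha : a ∈ S) (hb : b ∈ S) (hc : c ∈ S) :
    pairSum w S = pairSum w (S \ {a, b, c}) + 2 * (8 + w b c) +
      2 * ∑ y ∈ S \ {a, b, c}, (w a y + w b y + w c y) := by
  obtain ⟨hab, hac, hbc⟩ := habc.ne
  have hsub : {a, b, c} ⊆ S := by simp [insert_subset_iff, ha, hb, hc]
  have hstar : ∀ y, ∑ x ∈ {a, b, c}, w x y = w a y + w b y + w c y := fun y => by
    rw [sum_insert (by simp [hab, hac]), sum_pair hbc, add_assoc]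
  rw [hw.pairSum_eq_of_subset hsub, hw.pairSum_eq_triangle hab hac hbc, habc.fst, habc.snd]
  simp only [hstar]
  ring

theorem IsHeavyTriangle.sum_erase_apex (hw : IsMatchingBounded w) (habc : IsHeavyTriangle w a b c)
    (ha : a ∈ S) (hb : b ∈ S) (hc : c ∈ S) :
    ∑ y ∈ S.erase a, w a y = 8 + ∑ y ∈ S \ {a, b, c}, w a y := by
  obtain ⟨hab, hac, hbc⟩ := habc.ne
  have hsub : {a, b, c} ⊆ S := by simp [insert_subset_iff, ha, hb, hc]
  rw [sum_erase S (hw.diag a), ← sum_sdiff hsub, sum_insert (by simp [hab, hac]), sum_pair hbc,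
    hw.diag, habc.fst, habc.snd]
  ring

theorem IsHeavyTriangle.pairSum_le (hw : IsMatchingBounded w) (habc : IsHeavyTriangle w a b c)
    (ha : a ∈ S) (hb : b ∈ S) (hc : c ∈ S) {r : ℕ} (hS : #S = r + 3) (hr : 1 ≤ r)
    (hrest : pairSum w (S \ {a, b, c}) ≤ linkBound r)
    (herase : Even r → pairSum w (S.erase a) ≤ linkBound (r + 2)) :
    pairSum w S ≤ linkBound (r + 3) := by
  have hcard : #(S \ {a, b, c}) = r := by have := habc.card_sdiff_add_three ha hb hc; omega
  have hsplit := habc.pairSum_eq hw ha hb hc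
  have hbound := linkBound_add_three r
  have h_nine := sum_le_mul_card (S := S \ {a, b, c}) fun y _ => habc.sum_le_nine hw y
  have hbase := hw.le_four b c
  rw [hcard] at h_nine
  obtain hbc4 | hbc3 : w b c = 4 ∨ w b c = 3 := by have := habc.base; omega
  · have h_eight := sum_le_mul_card (S := S \ {a, b, c}) fun y _ => habc.sum_le_eight hw hbc4 y
    rw [hcard] at h_eight
    omega
  obtain hodd | heven := (Nat.even_or_odd r).symm
  · rw [Nat.odd_iff.1 hodd] at hbound
    push_cast at hbound
    linarith
  by_cases hall : ∀ y ∈ S \ {a, b, c}, w a y + w b y + w c y = 9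
  · have hdeg := sum_le_mul_card fun y hy => habc.apex_le_one hw (hall y hy)
    rw [hcard] at hdeg
    rw [hw.pairSum_eq_erase ha, habc.sum_erase_apex hw ha hb hc]
    have hstep : linkBound (r + 2) + 6 * (r + 2) ≤ linkBound (r + 3) := by
      have : (r + 2) / 2 ≤ (r + 3) / 2 := by omega
      simp only [linkBound]
      zify at this
      push_cast at this ⊢
      linarith
    linarith [herase heven]
  · push Not at hall
    obtain ⟨z, hz, hzne⟩ := hall
    have hlt := sum_lt_sum (fun y _ => habc.sum_le_nine hw y)
      ⟨z, hz, (habc.sum_le_nine hw z).lt_of_ne hzne⟩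
    rw [sum_const, nsmul_eq_mul, hcard] at hlt
    omega

end

theorem pairSum_le_linkBound (hw : IsMatchingBounded w) {S : Finset α} (hS : #S ≠ 3) :
    pairSum w S ≤ linkBound #S := by
  classical
  induction S using Finset.strongInduction with
  | H S ih =>
    by_cases htri : ∀ x ∈ S, ∀ y ∈ S, ∀ z ∈ S, x ≠ y → x ≠ z → y ≠ z →
        w x y + w x z + w y z ≤ 10
    · exact hw.pairSum_le_of_triangle_le hw.le_four htri
    push Not at htri
    obtain ⟨x, hx, y, hy, z, hz, hxy, hxz, hyz, hxyz⟩ := htri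
    obtain ⟨a, ha, b, hb, c, hc, habc⟩ := hw.exists_isHeavyTriangle hx hy hz hxy hxz hyz hxyz
    have hsub : {a, b, c} ⊆ S := by simp [insert_subset_iff, ha, hb, hc]
    have hcard := habc.card_sdiff_add_three ha hb hc
    -- For `#S = 6` the induction hypothesis is not available for the three-element set
    -- `S \ {a, b, c}`, so average over the five-element subsets instead.
    by_cases hsix : #S = 6
    · have herase : ∀ v ∈ S, pairSum w (S.erase v) ≤ linkBound 5 := fun v hv => by
        have hv5 : #(S.erase v) = 5 := by rw [card_erase_of_mem hv, hsix]
        exact hv5 ▸ ih _ (erase_ssubset hv) (by omega)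
      have hsum := sum_le_mul_card herase
      rw [hw.sum_pairSum_erase, hsix] at hsum
      have h5 : linkBound 5 = 64 := rfl
      have h6 : linkBound 6 = 96 := rfl
      rw [hsix]
      push_cast at hsum
      linarith
    · have hrest := ih (S \ {a, b, c}) (sdiff_ssubset hsub (insert_nonempty _ _)) (by omega)
      have hacard : #(S.erase a) = #(S \ {a, b, c}) + 2 := by
        rw [card_erase_of_mem ha, ← hcard, Nat.add_sub_assoc (by norm_num)]
      have herase := ih (S.erase a) (erase_ssubset ha)
      rw [hacard] at herase
      rw [← hcard]
      exact habc.pairSum_le hw ha hb hc hcard.symm (by omega) hrest fun heven =>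
        herase (by have := Nat.even_iff.1 heven; omega)

theorem pairSum_le_linkBound_add_four (hw : IsMatchingBounded w) (S : Finset α) :
    pairSum w S ≤ linkBound #S + 4 := by
  by_cases hS : #S = 3
  · have := hw.toIsEdgeWeight.pairSum_le_mul (S := S) fun x _ y _ _ => hw.le_four x y
    have h3 : linkBound 3 = 20 := rfl
    rw [hS] at this ⊢
    push_cast at this
    linarith
  · linarith [hw.pairSum_le_linkBound hS]

end IsMatchingBounded

/-! ### Counting in `3`-graphs -/

/-- `h` is the indicator function of the ordered edges of a `3`-uniform hypergraph. -/
structure IsThreeGraph (h : α → α → α → ℤ) : Prop where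
  zero_or_one : ∀ x y z, h x y z = 0 ∨ h x y z = 1
  swap_left : ∀ x y z, h x y z = h y x z
  swap_right : ∀ x y z, h x y z = h x z y
  diag : ∀ x y, h x x y = 0

/-- The superposition of the links of the vertices in `K`: the weight of `xy` is the number of
`v ∈ K` for which `vxy` is an edge. -/
def linkWeight (h : α → α → α → ℤ) (K : Finset α) (x y : α) : ℤ := ∑ v ∈ K, h v x y

theorem pairSum_linkWeight (h : α → α → α → ℤ) (K S : Finset α) :
    pairSum (linkWeight h K) S = ∑ v ∈ K, pairSum (h v) S := by
  simp only [pairSum, linkWeight, sum_comm (t := K)]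

namespace IsThreeGraph

variable {h : α → α → α → ℤ} {S : Finset α}

theorem nonneg (hh : IsThreeGraph h) (x y z : α) : 0 ≤ h x y z := by
  obtain hz | ho := hh.zero_or_one x y z <;> omega

theorem le_one (hh : IsThreeGraph h) (x y z : α) : h x y z ≤ 1 := by
  obtain hz | ho := hh.zero_or_one x y z <;> omega

theorem isEdgeWeight (hh : IsThreeGraph h) (v : α) : IsEdgeWeight (h v) where
  symm := hh.swap_right v
  diag x := by rw [hh.swap_left, hh.swap_right, hh.diag]

theorem isEdgeWeight_linkWeight (hh : IsThreeGraph h) (K : Finset α) :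
    IsEdgeWeight (linkWeight h K) where
  symm x y := sum_congr rfl fun v _ => hh.swap_right v x y
  diag x := sum_eq_zero fun v _ => (hh.isEdgeWeight v).diag x

theorem tripleSum_eq_of_subset [DecidableEq α] (hh : IsThreeGraph h) {K : Finset α} (hK : K ⊆ S) :
    tripleSum h S = tripleSum h K + tripleSum h (S \ K) +
      3 * pairSum (linkWeight h K) (S \ K) + 3 * ∑ x ∈ S \ K, pairSum (h x) K := by
  have hsplit : ∀ x, pairSum (h x) S = pairSum (h x) K + pairSum (h x) (S \ K) +
      2 * ∑ y ∈ S \ K, ∑ z ∈ K, h x z y := fun x => (hh.isEdgeWeight x).pairSum_eq_of_subset hK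
  have hinner : ∑ x ∈ K, ∑ y ∈ S \ K, ∑ z ∈ K, h x z y = ∑ x ∈ S \ K, pairSum (h x) K := by
    rw [sum_comm]
    refine sum_congr rfl fun y _ => sum_congr rfl fun x _ => sum_congr rfl fun z _ => ?_
    rw [hh.swap_right, hh.swap_left]
  have houter : ∑ x ∈ S \ K, ∑ y ∈ S \ K, ∑ z ∈ K, h x z y =
      pairSum (linkWeight h K) (S \ K) :=
    sum_congr rfl fun x _ => sum_congr rfl fun y _ => sum_congr rfl fun z _ => hh.swap_left x z y
  rw [tripleSum, ← sum_sdiff hK]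
  simp only [hsplit, sum_add_distrib, ← mul_sum, hinner, houter, tripleSum, pairSum_linkWeight]
  ring

theorem tripleSum_eq_erase [DecidableEq α] (hh : IsThreeGraph h) {v : α} (hv : v ∈ S) :
    tripleSum h S = tripleSum h (S.erase v) + 3 * pairSum (h v) (S.erase v) := by
  have hsplit := hh.tripleSum_eq_of_subset (singleton_subset_iff.2 hv)
  have hpair : ∀ x, pairSum (h x) {v} = 0 := fun x => by simp [pairSum, (hh.isEdgeWeight x).diag]
  simpa [sdiff_singleton_eq_erase, pairSum_linkWeight, tripleSum, hpair] using hsplit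

theorem pairSum_erase_self [DecidableEq α] (hh : IsThreeGraph h) (v : α) (S : Finset α) :
    pairSum (h v) (S.erase v) = pairSum (h v) S := by
  have hcol : ∀ x, h v x v = 0 := fun x => by rw [hh.swap_right, hh.diag]
  simp only [pairSum, sum_erase S (hcol _)]
  exact sum_erase S (sum_eq_zero fun y _ => hh.diag v y)

theorem tripleSum_mono (hh : IsThreeGraph h) {K : Finset α} (hK : K ⊆ S) :
    tripleSum h K ≤ tripleSum h S := by
  classical
  have hpair : ∀ x A, 0 ≤ pairSum (h x) A := fun x A =>
    sum_nonneg fun y _ => sum_nonneg fun z _ => hh.nonneg x y z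
  rw [hh.tripleSum_eq_of_subset hK, pairSum_linkWeight]
  have hrest : 0 ≤ tripleSum h (S \ K) := sum_nonneg fun x _ => hpair x _
  have hlinks : 0 ≤ ∑ v ∈ K, pairSum (h v) (S \ K) := sum_nonneg fun x _ => hpair x _
  have hcross : 0 ≤ ∑ x ∈ S \ K, pairSum (h x) K := sum_nonneg fun x _ => hpair x _
  linarith

theorem sum_tripleSum_erase [DecidableEq α] (hh : IsThreeGraph h) (S : Finset α) :
    ∑ v ∈ S, tripleSum h (S.erase v) = (#S - 3) * tripleSum h S := by
  have herase : ∀ v ∈ S, tripleSum h (S.erase v) = tripleSum h S - 3 * pairSum (h v) S :=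
    fun v hv => by linarith [hh.tripleSum_eq_erase hv, hh.pairSum_erase_self v S]
  rw [sum_congr rfl herase, sum_sub_distrib, ← mul_sum, ← tripleSum, sum_const, nsmul_eq_mul]
  ring

theorem tripleSum_le_of_forall_subset (hh : IsThreeGraph h) {r : ℕ} {C : ℤ} (hr : 3 ≤ r)
    (hrS : r ≤ #S) (hC : ∀ A ⊆ S, #A = r → tripleSum h A ≤ C) :
    r * (r - 1) * (r - 2) * tripleSum h S ≤ C * (#S * (#S - 1) * (#S - 2)) := by
  classical
  obtain ⟨n, hn⟩ : ∃ n, #S = n := ⟨_, rfl⟩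
  rw [hn] at hrS ⊢
  induction n, hrS using Nat.le_induction generalizing S with
  | base =>
    have hpos : (0 : ℤ) ≤ r * (r - 1) * (r - 2) :=
      mul_nonneg (mul_nonneg (by omega) (by omega)) (by omega)
    linarith [mul_le_mul_of_nonneg_left (hC S Subset.rfl hn) hpos]
  | succ n hrn ih =>
    have herase : ∀ v ∈ S, r * (r - 1) * (r - 2) * tripleSum h (S.erase v) ≤
        C * (n * (n - 1) * (n - 2)) := fun v hv =>
      ih (fun A hA => hC A (hA.trans (erase_subset v S))) (by rw [card_erase_of_mem hv, hn]; rfl)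
    have hsum := sum_le_mul_card herase
    rw [← mul_sum, hh.sum_tripleSum_erase, hn] at hsum
    have hn3 : (0 : ℤ) < n - 2 := by omega
    refine le_of_mul_le_mul_left ?_ hn3
    push_cast at hsum ⊢
    linarith

end IsThreeGraph

/-- Every three distinct vertices of `K` form an edge of `h`. -/
def IsHyperclique (h : α → α → α → ℤ) (K : Finset α) : Prop :=
  ∀ x ∈ K, ∀ y ∈ K, ∀ z ∈ K, x ≠ y → x ≠ z → y ≠ z → h x y z = 1

theorem IsHyperclique.subset {h : α → α → α → ℤ} {K L : Finset α} (hK : IsHyperclique h K)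
    (hLK : L ⊆ K) : IsHyperclique h L :=
  fun x hx y hy z hz => hK x (hLK hx) y (hLK hy) z (hLK hz)

namespace IsThreeGraph

variable {h : α → α → α → ℤ} {S K : Finset α}

theorem pairSum_le_of_mem (hh : IsThreeGraph h) {v : α} (hv : v ∈ S) :
    pairSum (h v) S ≤ (#S - 1) * (#S - 2) := by
  classical
  have := (hh.isEdgeWeight v).pairSum_le_mul (S := S.erase v) fun x _ y _ _ => hh.le_one v x y
  rw [hh.pairSum_erase_self, cast_card_erase_of_mem hv] at this
  linarith

theorem tripleSum_le_card (hh : IsThreeGraph h) (S : Finset α) :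
    tripleSum h S ≤ #S * (#S - 1) * (#S - 2) := by
  classical
  have := sum_le_mul_card fun v hv => hh.pairSum_le_of_mem (S := S) hv
  rw [tripleSum]
  linarith

theorem pairSum_le_card (hh : IsThreeGraph h) (x : α) (K : Finset α) :
    pairSum (h x) K ≤ #K * (#K - 1) := by
  linarith [(hh.isEdgeWeight x).pairSum_le_mul (S := K) fun y _ z _ _ => hh.le_one x y z]

theorem tripleSum_eq_card (hh : IsThreeGraph h) (hK : IsHyperclique h K) :
    tripleSum h K = #K * (#K - 1) * (#K - 2) := by
  classical
  have hlink : ∀ x ∈ K, pairSum (h x) K = (#K - 1) * (#K - 2) := fun x hx => by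
    rw [← hh.pairSum_erase_self, (hh.isEdgeWeight x).pairSum_eq_mul (c := 1) fun y hy z hz hyz =>
      hK x hx y (mem_of_mem_erase hy) z (mem_of_mem_erase hz) (ne_of_mem_erase hy).symm
        (ne_of_mem_erase hz).symm hyz, cast_card_erase_of_mem hx]
    ring
  rw [tripleSum, sum_congr rfl hlink, sum_const, nsmul_eq_mul]
  ring

theorem pairSum_le_of_not_isHyperclique_insert [DecidableEq α] (hh : IsThreeGraph h)
    (hK : IsHyperclique h K) {x : α} (hxK : ¬ IsHyperclique h (insert x K)) :
    pairSum (h x) K ≤ #K * (#K - 1) - 2 := by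
  have hmissing : ∃ y ∈ K, ∃ z ∈ K, y ≠ z ∧ h x y z ≤ 0 := by
    by_contra! hall
    have hone : ∀ y ∈ K, ∀ z ∈ K, y ≠ z → h x y z = 1 := fun y hy z hz hyz =>
      le_antisymm (hh.le_one x y z) (hall y hy z hz hyz)
    refine hxK fun u hu v hv t ht huv hut hvt => ?_
    obtain rfl | huK := mem_insert.1 hu
    · exact hone v (mem_of_mem_insert_of_ne hv huv.symm) t
        (mem_of_mem_insert_of_ne ht hut.symm) hvt
    obtain rfl | hvK := mem_insert.1 hv
    · rw [hh.swap_left]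
      exact hone u (mem_of_mem_insert_of_ne hu huv) t (mem_of_mem_insert_of_ne ht hvt.symm) hut
    obtain rfl | htK := mem_insert.1 ht
    · rw [hh.swap_right, hh.swap_left]
      exact hone u (mem_of_mem_insert_of_ne hu hut) v (mem_of_mem_insert_of_ne hv hvt) huv
    · exact hK u huK v hvK t htK huv hut hvt
  obtain ⟨y, hy, z, hz, hyz, hzero⟩ := hmissing
  exact (hh.isEdgeWeight x).pairSum_le_of_le_one (hh.le_one x) hy hz hyz hzero

theorem tripleSum_le_of_not_isHyperclique (hh : IsThreeGraph h) (hS : ¬ IsHyperclique h S) :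
    tripleSum h S ≤ #S * (#S - 1) * (#S - 2) - 6 := by
  classical
  simp only [IsHyperclique] at hS
  push Not at hS
  obtain ⟨x, hx, y, hy, z, hz, hxy, hxz, hyz, hne⟩ := hS
  have hzero : h x y z ≤ 0 := by have := hh.zero_or_one x y z; omega
  have hlink := (hh.isEdgeWeight x).pairSum_le_of_le_one (S := S.erase x) (hh.le_one x)
    (mem_erase.2 ⟨hxy.symm, hy⟩) (mem_erase.2 ⟨hxz.symm, hz⟩) hyz hzero
  have hrest := hh.tripleSum_le_card (S.erase x)
  rw [cast_card_erase_of_mem hx] at hlink hrest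
  linarith [hh.tripleSum_eq_erase hx]

end IsThreeGraph

/-- The lines of the Fano plane, with the points and the order of the lines as in
`ContainsFano`. -/
def fanoLine : Fin 7 → Fin 3 → Fin 7 :=
  ![![0, 1, 2], ![2, 3, 4], ![0, 4, 5], ![0, 3, 6], ![2, 5, 6], ![1, 4, 6], ![1, 3, 5]]

/-- A Fano-free `3`-graph: no map from the Fano plane sends all seven lines to edges. Injectivity
is not required of the map, since any two points lie on a line. -/
def IsFanoFree (h : α → α → α → ℤ) : Prop :=
  ∀ v : Fin 7 → α, ∑ i, h (v (fanoLine i 0)) (v (fanoLine i 1)) (v (fanoLine i 2)) ≤ 6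

theorem IsFanoFree.le_six {h : α → α → α → ℤ} (hf : IsFanoFree h) (hh : IsThreeGraph h)
    (p q r x y z t : α) :
    h p q r + h p x y + h p z t + h q x z + h q y t + h r x t + h r y z ≤ 6 := by
  have hseven : h p r q + h q z x + h p x y + h p z t + h q y t + h r x t + h r z y ≤ 6 := by
    simpa [Fin.sum_univ_succ, fanoLine, add_assoc] using hf ![p, r, q, z, x, y, t]
  linarith [hh.swap_right p q r, hh.swap_right q x z, hh.swap_right r y z]

theorem sum_perm_apply_eq {β : Type*} [Fintype β] [DecidableEq β] (f : β → β → β → ℤ)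
    {i j k i' j' k' : β} (hij : i ≠ j) (hik : i ≠ k) (hjk : j ≠ k) (hij' : i' ≠ j') (hik' : i' ≠ k')
    (hjk' : j' ≠ k') :
    ∑ σ : Equiv.Perm β, f (σ i) (σ j) (σ k) = ∑ σ : Equiv.Perm β, f (σ i') (σ j') (σ k') := by
  have hinj : ∀ {a b c : β}, a ≠ b → a ≠ c → b ≠ c → Function.Injective ![a, b, c] :=
    fun hab hac hbc => by
      intro m n
      fin_cases m <;> fin_cases n <;> simp [hab, hac, hbc, hab.symm, hac.symm, hbc.symm]
  have := Equiv.Perm.isMultiplyPretransitive β 3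
  obtain ⟨τ, hτ⟩ := MulAction.exists_smul_eq (Equiv.Perm β)
    (⟨_, hinj hij hik hjk⟩ : Fin 3 ↪ β) ⟨_, hinj hij' hik' hjk'⟩
  have hi : τ i = i' := DFunLike.congr_fun hτ 0
  have hj : τ j = j' := DFunLike.congr_fun hτ 1
  have hk : τ k = k' := DFunLike.congr_fun hτ 2
  rw [← Equiv.sum_comp (Equiv.mulRight τ)]
  simp [hi, hj, hk]

theorem tripleSum_comp_perm {β : Type*} [Fintype β] (f : β → β → β → ℤ) (σ : Equiv.Perm β) :
    ∑ i, ∑ j, ∑ k, f (σ i) (σ j) (σ k) = tripleSum f univ := by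
  simp only [tripleSum, pairSum, Equiv.sum_comp σ, Equiv.sum_comp σ fun i => ∑ j, ∑ k, f i j k,
    fun i => Equiv.sum_comp σ fun j => ∑ k, f i j k]

theorem IsThreeGraph.mul_sum_perm_eq_factorial_mul {f : Fin 7 → Fin 7 → Fin 7 → ℤ}
    (hf : IsThreeGraph f) {i j k : Fin 7} (hij : i ≠ j) (hik : i ≠ k) (hjk : j ≠ k) :
    210 * ∑ σ : Equiv.Perm (Fin 7), f (σ i) (σ j) (σ k) =
      (Nat.factorial 7 : ℕ) * tripleSum f univ := by
  set c := ∑ σ : Equiv.Perm (Fin 7), f (σ i) (σ j) (σ k) with hc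
  have hdistinct : ∀ x y z, ∑ σ : Equiv.Perm (Fin 7), f (σ x) (σ y) (σ z) =
      (if x ≠ y ∧ x ≠ z ∧ y ≠ z then 1 else 0) * c := fun x y z => by
    split_ifs with hxyz
    · rw [one_mul, hc, sum_perm_apply_eq f hxyz.1 hxyz.2.1 hxyz.2.2 hij hik hjk]
    · rw [zero_mul]
      exact sum_eq_zero fun σ _ => by grind [hf.diag, hf.swap_left, hf.swap_right]
  have hcount : ∑ x : Fin 7, ∑ y : Fin 7, ∑ z : Fin 7,
      (if x ≠ y ∧ x ≠ z ∧ y ≠ z then (1 : ℤ) else 0) = 210 := by rfl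
  calc
    210 * c = ∑ x, ∑ y, ∑ z, ∑ σ : Equiv.Perm (Fin 7), f (σ x) (σ y) (σ z) := by
      simp only [hdistinct, ← sum_mul, hcount]
    _ = ∑ σ : Equiv.Perm (Fin 7), ∑ x, ∑ y, ∑ z, f (σ x) (σ y) (σ z) := by
      simp only [sum_comm (t := (univ : Finset (Equiv.Perm (Fin 7))))]
    _ = (Nat.factorial 7 : ℕ) * tripleSum f univ := by
      rw [sum_congr rfl fun σ _ => tripleSum_comp_perm f σ, sum_const, card_univ,
        Fintype.card_perm, Fintype.card_fin, nsmul_eq_mul]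

theorem IsFanoFree.tripleSum_le_of_card_eq_seven {h : α → α → α → ℤ} (hf : IsFanoFree h)
    (hh : IsThreeGraph h) {S : Finset α} (hS : #S = 7) : tripleSum h S ≤ 180 := by
  let e := (S.equivFinOfCardEq hS).symm
  let g (i j k : Fin 7) : ℤ := h (e i) (e j) (e k)
  have hg : IsThreeGraph g :=
    ⟨fun _ _ _ => hh.zero_or_one _ _ _, fun _ _ _ => hh.swap_left _ _ _,
      fun _ _ _ => hh.swap_right _ _ _, fun _ _ => hh.diag _ _⟩
  have hT : tripleSum h S = tripleSum g univ := by
    simp only [tripleSum, pairSum, ← sum_coe_sort S, ← Equiv.sum_comp e, g]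
  have hline : ∀ i, fanoLine i 0 ≠ fanoLine i 1 ∧ fanoLine i 0 ≠ fanoLine i 2 ∧
      fanoLine i 1 ≠ fanoLine i 2 := by decide
  have hsum : ∑ σ : Equiv.Perm (Fin 7), ∑ i,
      g (σ (fanoLine i 0)) (σ (fanoLine i 1)) (σ (fanoLine i 2)) ≤ 6 * (Nat.factorial 7 : ℕ) := by
    have := sum_le_mul_card (S := (univ : Finset (Equiv.Perm (Fin 7))))
      fun σ _ => hf fun i => e (σ i)
    rwa [card_univ, Fintype.card_perm, Fintype.card_fin] at this
  have hmul := mul_le_mul_of_nonneg_left hsum (by norm_num : (0 : ℤ) ≤ 210)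
  rw [sum_comm, mul_sum, sum_congr rfl fun i _ =>
    hg.mul_sum_perm_eq_factorial_mul (hline i).1 (hline i).2.1 (hline i).2.2, ← hT] at hmul
  norm_num [Nat.factorial] at hmul
  linarith

/-! ### Links of cliques -/

theorem sum_card_le_of_not_exists_injective {ι β : Type*} [Fintype ι] {t : ι → Finset β}
    {K : Finset β} (htK : ∀ i, t i ⊆ K) (hK : #K ≤ Fintype.card ι + 1) (hne : ∀ i, (t i).Nonempty)
    (hsdr : ¬ ∃ f : ι → β, Function.Injective f ∧ ∀ i, f i ∈ t i) :
    ∑ i, (#(t i) : ℤ) ≤ Fintype.card ι * (Fintype.card ι - 1) := by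
  classical
  rw [← all_card_le_biUnion_card_iff_exists_injective] at hsdr
  push Not at hsdr
  obtain ⟨s, hs⟩ := hsdr
  have hs2 : 2 ≤ #s := by
    obtain ⟨i, hi⟩ := card_pos.1 (pos_of_gt hs)
    have := ((hne i).mono (subset_biUnion_of_mem t hi)).card_pos
    omega
  have hin : ∑ i ∈ s, (#(t i) : ℤ) ≤ (#s - 1) * #s := sum_le_mul_card fun i hi => by
    have := card_le_card (subset_biUnion_of_mem t hi)
    omega
  have hout : ∑ i ∈ sᶜ, (#(t i) : ℤ) ≤ (Fintype.card ι + 1) * #sᶜ := sum_le_mul_card fun i _ => by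
    have := card_le_card (htK i)
    omega
  have hcompl : (#s : ℤ) + #sᶜ = Fintype.card ι := by exact_mod_cast card_add_card_compl s
  rw [← sum_add_sum_compl s]
  nlinarith [mul_nonneg (sub_nonneg.2 (Nat.cast_le (α := ℤ).2 hs2)) (Nat.cast_nonneg (α := ℤ) #sᶜ)]

theorem sum_le_eighteen_or_of_forall_injective {K : Finset α} (hcard : #K = 4) {m : Fin 3 → α → ℤ}
    (hm : ∀ i, ∀ v ∈ K, m i v ≤ 2)
    (hinj : ∀ f : Fin 3 → α, Function.Injective f → (∀ i, f i ∈ K) → ∑ i, m i (f i) < 6) :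
    ∑ i, ∑ v ∈ K, m i v ≤ 18 ∨ ∃ i, ∑ v ∈ K, m i v ≤ 4 := by
  classical
  let t (i : Fin 3) : Finset α := {v ∈ K | m i v = 2}
  have hrow : ∀ i, ∑ v ∈ K, m i v ≤ 4 + #(t i) := fun i => by
    have hle : ∀ v ∈ K, m i v ≤ 1 + if m i v = 2 then 1 else 0 := fun v hv => by
      have := hm i v hv
      split_ifs <;> omega
    have := sum_le_sum hle
    rwa [sum_add_distrib, sum_boole, sum_const, hcard] at this
  by_contra! hlarge
  have hne : ∀ i, (t i).Nonempty := fun i => by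
    have := hrow i
    have := hlarge.2 i
    exact card_pos.1 (by omega)
  have hsdr := sum_card_le_of_not_exists_injective (t := t) (fun i => filter_subset _ K) hcard.le
    hne fun ⟨f, hf, hft⟩ => by
      have := hinj f hf fun i => (mem_filter.1 (hft i)).1
      rw [sum_congr rfl fun i _ => (mem_filter.1 (hft i)).2] at this
      norm_num at this
  have htotal := sum_le_sum fun i (_ : i ∈ univ) => hrow i
  rw [sum_add_distrib] at htotal
  norm_num at hsdr htotal
  linarith [hlarge.1]

theorem IsFanoFree.isMatchingBounded_linkWeight {h : α → α → α → ℤ} (hf : IsFanoFree h)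
    (hh : IsThreeGraph h) {K : Finset α} (hK : IsHyperclique h K) (hcard : #K = 4) :
    IsMatchingBounded (linkWeight h K) where
  toIsEdgeWeight := hh.isEdgeWeight_linkWeight K
  le_four x y := by
    have := sum_le_mul_card (S := K) fun v _ => hh.le_one v x y
    rwa [hcard] at this
  matching x y z t := by
    let m : Fin 3 → α → ℤ := ![fun v => h v x y + h v z t, fun v => h v x z + h v y t,
      fun v => h v x t + h v y z]
    have hm : ∀ i, ∀ v ∈ K, m i v ≤ 2 := fun i v _ => by
      have hle := hh.le_one v
      fin_cases i
      exacts [add_le_add (hle x y) (hle z t), add_le_add (hle x z) (hle y t),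
        add_le_add (hle x t) (hle y z)]
    have hmatch := sum_le_eighteen_or_of_forall_injective hcard hm fun f hinj hfK => by
      have hedge := hK _ (hfK 0) _ (hfK 1) _ (hfK 2) (hinj.ne (by decide)) (hinj.ne (by decide))
        (hinj.ne (by decide))
      have := hf.le_six hh (f 0) (f 1) (f 2) x y z t
      rw [Fin.sum_univ_three]
      simp only [m, Matrix.cons_val]
      linarith
    simpa [Fin.sum_univ_three, Fin.exists_fin_succ, m, linkWeight, sum_add_distrib, add_assoc,
      or_assoc] using hmatch

theorem IsFanoFree.four_mul_pairSum_linkWeight_le {h : α → α → α → ℤ} (hf : IsFanoFree h)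
    (hh : IsThreeGraph h) {K : Finset α} (hK : IsHyperclique h K) (hcard : 4 ≤ #K) {S : Finset α}
    {C : ℤ} (hC : ∀ w : α → α → ℤ, IsMatchingBounded w → pairSum w S ≤ C) :
    4 * pairSum (linkWeight h K) S ≤ #K * C := by
  rw [pairSum_linkWeight]
  refine mul_sum_le_card_mul_of_forall_subset (by norm_num) hcard fun A hA hA4 => ?_
  rw [← pairSum_linkWeight]
  exact hC _ (hf.isMatchingBounded_linkWeight hh (hK.subset hA) hA4)

theorem IsFanoFree.pairSum_le_of_six_clique {h : α → α → α → ℤ} (hf : IsFanoFree h)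
    (hh : IsThreeGraph h) {K : Finset α} (hK : IsHyperclique h K) (hcard : #K = 6) {x : α}
    (hx : x ∉ K) : pairSum (h x) K ≤ 20 := by
  classical
  have hseven := hf.tripleSum_le_of_card_eq_seven hh
    (by rw [card_insert_of_notMem hx, hcard] : #(insert x K) = 7)
  have hsix := hh.tripleSum_eq_card hK
  rw [hh.tripleSum_eq_erase (mem_insert_self x K), erase_insert hx, hsix, hcard] at hseven
  norm_num at hseven
  linarith

theorem IsFanoFree.pairSum_le_six_or_of_card_eq_four {h : α → α → α → ℤ} (hf : IsFanoFree h)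
    (hh : IsThreeGraph h) {L : Finset α} (hcard : #L = 4) {q x y : α}
    (hq : ∀ a ∈ L, ∀ b ∈ L, a ≠ b → h q a b = 1) (hqxy : h q x y = 1) :
    pairSum (h x) L ≤ 6 ∨ pairSum (h y) L ≤ 6 ∨ pairSum (h x) L ≤ 8 ∧ pairSum (h y) L ≤ 8 := by
  classical
  obtain ⟨a, b, c, d, hab, hac, had, hbc, hbd, hcd, rfl⟩ := card_eq_four.1 hcard
  have hsum : ∀ u, pairSum (h u) {a, b, c, d} = 2 * (h u a b + h u c d) + 2 * (h u a c + h u b d) +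
      2 * (h u a d + h u b c) := fun u => by
    have hu := hh.isEdgeWeight u
    simp [pairSum, hab, hac, had, hbc, hbd, hcd, hu.diag, hu.symm b a, hu.symm c a, hu.symm c b,
      hu.symm d]
    ring
  have hpair : ∀ a b c d, h q a d = 1 → h q b c = 1 →
      h x a b + h x c d + (h y a c + h y b d) ≤ 3 := fun a b c d had hbc => by
    -- The three lines through `q` are `qxy`, `qad` and `qbc`.
    have := hf.le_six hh q x y a d b c
    linarith [hh.swap_right x c d, hh.swap_right y b d]
  have hle : ∀ u a b c d, h u a b + h u c d ≤ 2 := fun u a b c d =>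
    add_le_add (hh.le_one u a b) (hh.le_one u c d)
  have h₁₂ := hpair a b c d (hq a (by simp) d (by simp) had) (hq b (by simp) c (by simp) hbc)
  have h₁₃ := hpair a b d c (hq a (by simp) c (by simp) hac) (hq b (by simp) d (by simp) hbd)
  have h₂₁ := hpair a c b d (hq a (by simp) d (by simp) had) (hq c (by simp) b (by simp) hbc.symm)
  have h₂₃ := hpair a c d b (hq a (by simp) b (by simp) hab) (hq c (by simp) d (by simp) hcd)
  have h₃₁ := hpair a d b c (hq a (by simp) c (by simp) hac) (hq d (by simp) b (by simp) hbd.symm)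
  have h₃₂ := hpair a d c b (hq a (by simp) b (by simp) hab) (hq d (by simp) c (by simp) hcd.symm)
  simp only [hh.swap_right _ d, hh.swap_right _ c b] at h₁₃ h₂₁ h₂₃ h₃₁ h₃₂
  have := hle x a b c d
  have := hle x a c b d
  have := hle x a d b c
  have := hle y a b c d
  have := hle y a c b d
  have := hle y a d b c
  rw [hsum, hsum]
  omega

theorem IsFanoFree.apply_eq_zero_or_of_mem [DecidableEq α] {h : α → α → α → ℤ} (hf : IsFanoFree h)
    (hh : IsThreeGraph h) {K : Finset α} (hK : IsHyperclique h K) (hcard : #K = 5) {q : α}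
    (hq : q ∈ K) (x y : α) :
    h q x y = 0 ∨ pairSum (h x) (K.erase q) ≤ 6 ∨ pairSum (h y) (K.erase q) ≤ 6 ∨
      pairSum (h x) (K.erase q) ≤ 8 ∧ pairSum (h y) (K.erase q) ≤ 8 := by
  refine (hh.zero_or_one q x y).imp_right fun hone =>
    hf.pairSum_le_six_or_of_card_eq_four hh (by rw [card_erase_of_mem hq, hcard]) ?_ hone
  exact fun a ha b hb hab => hK q hq a (mem_of_mem_erase ha) b (mem_of_mem_erase hb)
    (ne_of_mem_erase ha).symm (ne_of_mem_erase hb).symm hab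

theorem IsThreeGraph.pairSum_le_pairSum_erase_add [DecidableEq α] {h : α → α → α → ℤ}
    (hh : IsThreeGraph h) {K : Finset α} {q : α} (hq : q ∈ K) (x : α) :
    pairSum (h x) K ≤ pairSum (h x) (K.erase q) + 2 * (#K - 1) := by
  have := sum_le_mul_card (S := K.erase q) fun v _ => hh.le_one x q v
  rw [cast_card_erase_of_mem hq] at this
  linarith [(hh.isEdgeWeight x).pairSum_eq_erase hq]

theorem IsThreeGraph.mul_linkWeight_add_le [DecidableEq α] {h : α → α → α → ℤ}
    (hh : IsThreeGraph h) {K : Finset α} {c C : ℤ} {x y z : α}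
    (hC : ∀ q ∈ K, c * h q x y + pairSum (h z) (K.erase q) ≤ C) :
    c * linkWeight h K x y + (#K - 2) * pairSum (h z) K ≤ C * #K := by
  have := sum_le_mul_card hC
  rwa [sum_add_distrib, ← mul_sum, (hh.isEdgeWeight z).sum_pairSum_erase] at this

theorem IsFanoFree.six_mul_linkWeight_add_le {h : α → α → α → ℤ} (hf : IsFanoFree h)
    (hh : IsThreeGraph h) {K : Finset α} (hK : IsHyperclique h K) (hcard : #K = 5) {x y : α}
    (hx : pairSum (h x) K ≤ 18) (hy : pairSum (h y) K ≤ 18) :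
    6 * linkWeight h K x y + 5 * (pairSum (h x) K + pairSum (h y) K) ≤ 180 := by
  classical
  wlog hyx : pairSum (h y) K ≤ pairSum (h x) K generalizing x y
  · rw [(hh.isEdgeWeight_linkWeight K).symm, add_comm (pairSum (h x) K)]
    exact this hy hx (le_of_not_ge hyx)
  have hupper : ∀ u, ∀ q ∈ K, pairSum (h u) (K.erase q) ≤ 12 := fun u q hq => by
    simpa [card_erase_of_mem hq, hcard] using hh.pairSum_le_card u (K.erase q)
  have hlower : ∀ u, ∀ q ∈ K, pairSum (h u) K ≤ pairSum (h u) (K.erase q) + 8 := fun u q hq => by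
    simpa [hcard] using hh.pairSum_le_pairSum_erase_add hq u
  obtain ⟨a, ha⟩ := (hh.isEdgeWeight x).even_pairSum K
  obtain ⟨b, hb⟩ := (hh.isEdgeWeight y).even_pairSum K
  have hle_one : ∀ q ∈ K, h q x y ≤ 1 := fun q _ => hh.le_one q x y
  obtain hsmall | h99 | h88 | h97 : a + b ≤ 15 ∨ a = 9 ∧ 8 ≤ b ∨ a = 8 ∧ b = 8 ∨ a = 9 ∧ b = 7 := by
    omega
  · have : linkWeight h K x y ≤ 5 := by simpa [linkWeight, hcard] using sum_le_mul_card hle_one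
    linarith
  · have hzero : linkWeight h K x y = 0 := sum_eq_zero fun q hq => by
      have := hlower x q hq
      have := hlower y q hq
      have := hf.apply_eq_zero_or_of_mem hh hK hcard hq x y
      omega
    linarith
  · have := hh.mul_linkWeight_add_le (c := 4) (C := 12) (x := x) (y := y) (z := x) fun q hq => by
      have := hlower y q hq
      have := hupper x q hq
      have := hf.apply_eq_zero_or_of_mem hh hK hcard hq x y
      have := hle_one q hq
      omega
    rw [hcard] at this
    omega
  · have := hh.mul_linkWeight_add_le (c := 6) (C := 12) (x := x) (y := y) (z := y) fun q hq => by
      have := hlower x q hq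
      have := hupper y q hq
      have := hf.apply_eq_zero_or_of_mem hh hK hcard hq x y
      have := hle_one q hq
      omega
    rw [hcard] at this
    omega

/-! ### The induction -/

theorem six_mul_choose_three (n : ℕ) : 6 * (n.choose 3 : ℤ) = n * (n - 1) * (n - 2) := by
  obtain _ | _ | k := n
  · rfl
  · rfl
  have := Nat.descFactorial_eq_factorial_mul_choose (k + 2) 3
  zify [Nat.descFactorial] at this
  norm_num [Nat.factorial] at this
  push_cast
  linarith

theorem six_mul_b (n : ℕ) : 6 * (b n : ℤ) = 3 * (n / 2 : ℕ) * ((n + 1) / 2 : ℕ) * (n - 2) := by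
  obtain ⟨p, hp⟩ : ∃ p, n / 2 = p := ⟨_, rfl⟩
  obtain ⟨q, hq⟩ : ∃ q, (n + 1) / 2 = q := ⟨_, rfl⟩
  obtain rfl : n = p + q := by omega
  have hpq := six_mul_choose_three (p + q)
  have hp3 := six_mul_choose_three p
  have hq3 := six_mul_choose_three q
  rw [b, hp, hq]
  push_cast at hpq ⊢
  have hcross : 6 * ((p + q).choose 3 : ℤ) =
      6 * p.choose 3 + 6 * q.choose 3 + 3 * p * q * (p + q - 2) := by
    rw [hpq, hp3, hq3]
    ring
  have hnonneg : (0 : ℤ) ≤ 3 * p * q * (p + q - 2) := by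
    obtain rfl | hp0 := p.eq_zero_or_pos
    · simp
    · exact mul_nonneg (by positivity) (by omega)
  omega

theorem six_mul_b_two_mul (m : ℕ) : 6 * (b (2 * m) : ℤ) = 6 * m ^ 2 * (m - 1) := by
  rw [six_mul_b, show 2 * m / 2 = m by omega, show (2 * m + 1) / 2 = m by omega]
  push_cast
  ring

theorem six_mul_b_two_mul_add_one (m : ℕ) :
    6 * (b (2 * m + 1) : ℤ) = 3 * m * (m + 1) * (2 * m - 1) := by
  rw [six_mul_b, show (2 * m + 1) / 2 = m by omega, show (2 * m + 1 + 1) / 2 = m + 1 by omega]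
  push_cast
  ring

section

variable [DecidableEq α] {h : α → α → α → ℤ} {S K : Finset α}

theorem IsFanoFree.tripleSum_le_of_six_clique (hf : IsFanoFree h) (hh : IsThreeGraph h)
    (hK : IsHyperclique h K) (hKS : K ⊆ S) (hcard : #K = 6) {k : ℕ} (hk : 1 ≤ k)
    (hR : #(S \ K) = 2 * k + 1) (hrest : tripleSum h (S \ K) ≤ 6 * b (2 * k + 1) + 6) :
    tripleSum h S ≤ 6 * b (2 * (k + 3) + 1) := by
  have hlinks := hf.four_mul_pairSum_linkWeight_le hh hK (by omega) fun w hw =>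
    hw.pairSum_le_linkBound_add_four (S \ K)
  have hcross := sum_le_mul_card (S := S \ K) fun x hx =>
    hf.pairSum_le_of_six_clique hh hK hcard (mem_sdiff.1 hx).2
  rw [hcard, hR, linkBound_two_mul_add_one] at hlinks
  rw [hR] at hcross
  rw [six_mul_b_two_mul_add_one] at hrest ⊢
  rw [hh.tripleSum_eq_of_subset hKS, hh.tripleSum_eq_card hK, hcard]
  push_cast at hlinks hcross ⊢
  zify at hk
  linarith

theorem IsFanoFree.tripleSum_le_of_five_clique (hf : IsFanoFree h) (hh : IsThreeGraph h)
    (hK : IsHyperclique h K) (hKS : K ⊆ S) (hcard : #K = 5)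
    (hmax : ∀ L ⊆ S, #L = 6 → ¬ IsHyperclique h L) {k : ℕ} (hk : 2 ≤ k)
    (hR : #(S \ K) = 2 * k) (hrest : tripleSum h (S \ K) ≤ 6 * b (2 * k) + 6) :
    tripleSum h S ≤ 6 * b (2 * (k + 2) + 1) := by
  have hdeg : ∀ x ∈ S \ K, pairSum (h x) K ≤ 18 := fun x hx => by
    obtain ⟨hxS, hxK⟩ := mem_sdiff.1 hx
    have := hh.pairSum_le_of_not_isHyperclique_insert hK <|
      hmax (insert x K) (insert_subset hxS hKS) (by rw [card_insert_of_notMem hxK, hcard])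
    simpa [hcard] using this
  have hlinks := hf.four_mul_pairSum_linkWeight_le hh hK (by omega) fun w hw =>
    hw.pairSum_le_linkBound (S := S \ K) (by omega)
  have hmixed := (hh.isEdgeWeight_linkWeight K).mul_pairSum_add_le (S := S \ K) (a := 6)
    (f := fun x => 5 * pairSum (h x) K) (c := 180) fun x hx y hy _ => by
      linarith [hf.six_mul_linkWeight_add_le hh hK hcard (hdeg x hx) (hdeg y hy)]
  obtain ⟨p, hp⟩ : Even (∑ x ∈ S \ K, pairSum (h x) K) :=
    even_sum _ fun x _ => (hh.isEdgeWeight x).even_pairSum K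
  rw [← mul_sum, hR, hp] at hmixed
  rw [hcard, hR, linkBound_two_mul] at hlinks
  have hsmall := hh.tripleSum_le_card (S \ K)
  rw [six_mul_b_two_mul] at hrest
  rw [six_mul_b_two_mul_add_one, hh.tripleSum_eq_of_subset hKS, hh.tripleSum_eq_card hK, hcard, hp]
  rw [hR] at hsmall
  push_cast at hlinks hmixed hsmall ⊢
  have hk' : (2 : ℤ) ≤ k := by exact_mod_cast hk
  -- The bound on the links alone is good enough for small `p`; for large `p`, many pairs `x`, `y`
  -- have a large joint degree into `K` and hence few common links.
  obtain hple | hpge : p ≤ 16 * k - 2 ∨ 16 * k - 1 ≤ p := by omega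
  · linarith
  have hprod : (20 * k - 16) * (16 * k - 1) ≤ (20 * k - 16) * p :=
    mul_le_mul_of_nonneg_left hpge (by linarith)
  obtain rfl | hk3 := hk.eq_or_lt
  · push_cast at *
    linarith
  · have : (3 : ℤ) ≤ k := by exact_mod_cast hk3
    nlinarith

theorem IsFanoFree.tripleSum_le_of_four_clique (hf : IsFanoFree h) (hh : IsThreeGraph h)
    (hK : IsHyperclique h K) (hKS : K ⊆ S) (hcard : #K = 4)
    (hmax : ∀ L ⊆ S, #L = 5 → ¬ IsHyperclique h L) {j : ℕ} (hj : 2 ≤ j)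
    (hR : #(S \ K) = 2 * j + 1) (hrest : tripleSum h (S \ K) ≤ 6 * b (2 * j + 1)) :
    tripleSum h S ≤ 6 * b (2 * (j + 2) + 1) := by
  have hdeg : ∀ x ∈ S \ K, pairSum (h x) K ≤ 10 := fun x hx => by
    obtain ⟨hxS, hxK⟩ := mem_sdiff.1 hx
    have := hh.pairSum_le_of_not_isHyperclique_insert hK <|
      hmax (insert x K) (insert_subset hxS hKS) (by rw [card_insert_of_notMem hxK, hcard])
    simpa [hcard] using this
  have hlinks := hf.four_mul_pairSum_linkWeight_le hh hK hcard.ge fun w hw =>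
    hw.pairSum_le_linkBound (S := S \ K) (by omega)
  have hcross := sum_le_mul_card hdeg
  rw [hcard, hR, linkBound_two_mul_add_one] at hlinks
  rw [hR] at hcross
  rw [six_mul_b_two_mul_add_one] at hrest ⊢
  rw [hh.tripleSum_eq_of_subset hKS, hh.tripleSum_eq_card hK, hcard]
  push_cast at hlinks hcross ⊢
  linarith

end

section

variable {h : α → α → α → ℤ} {S : Finset α}

theorem IsThreeGraph.tripleSum_le_of_forall_four_not_isHyperclique (hh : IsThreeGraph h)
    (hmax : ∀ L ⊆ S, #L = 4 → ¬ IsHyperclique h L) {m : ℕ} (hm : 2 ≤ m) (hS : #S = 2 * m + 1) :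
    tripleSum h S ≤ 6 * b (2 * m + 1) := by
  have hfour := hh.tripleSum_le_of_forall_subset (r := 4) (C := 18) (S := S) (by norm_num)
    (by omega) fun A hA hA4 => by
      simpa [hA4] using hh.tripleSum_le_of_not_isHyperclique (hmax A hA hA4)
  rw [six_mul_b_two_mul_add_one]
  rw [hS] at hfour
  push_cast at hfour
  zify at hm
  nlinarith

theorem IsThreeGraph.tripleSum_le_six_mul_b_add_six (hh : IsThreeGraph h)
    (hlarge : 7 ≤ #S → tripleSum h S ≤ 6 * b #S) (hsix : #S = 6 → ¬ IsHyperclique h S) :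
    tripleSum h S ≤ 6 * b #S + 6 := by
  obtain hS | hS := le_or_gt 7 #S
  · linarith [hlarge hS]
  by_cases hS6 : #S = 6
  · have := hh.tripleSum_le_of_not_isHyperclique (hsix hS6)
    rw [hS6] at this ⊢
    exact this.trans (by decide)
  · have := hh.tripleSum_le_card S
    generalize #S = s at *
    exact this.trans (by interval_cases s <;> first | decide | contradiction)

theorem IsFanoFree.tripleSum_le_of_card_eq_two_mul_add_one (hf : IsFanoFree h)
    (hh : IsThreeGraph h) {m : ℕ} (hm : 4 ≤ m) (hS : #S = 2 * m + 1)
    (ih : ∀ R ⊂ S, 7 ≤ #R → tripleSum h R ≤ 6 * b #R) : tripleSum h S ≤ 6 * b #S := by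
  classical
  have hdiff : ∀ K ⊆ S, #(S \ K) = 2 * m + 1 - #K := fun K hK => by rw [card_sdiff_of_subset hK, hS]
  have hih : ∀ K ⊆ S, 0 < #K → 7 ≤ #(S \ K) → tripleSum h (S \ K) ≤ 6 * b #(S \ K) :=
    fun K hK hK0 => ih _ (sdiff_ssubset hK (card_pos.1 hK0))
  rw [hS]
  by_cases h6 : ∃ K ⊆ S, #K = 6 ∧ IsHyperclique h K
  · obtain ⟨K, hKS, hcard, hK⟩ := h6
    obtain ⟨k, rfl⟩ := Nat.exists_eq_add_of_le' (show 3 ≤ m by omega)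
    have hR : #(S \ K) = 2 * k + 1 := by rw [hdiff K hKS]; omega
    exact hf.tripleSum_le_of_six_clique hh hK hKS hcard (by omega) hR <| hR ▸
      hh.tripleSum_le_six_mul_b_add_six (hih K hKS (by omega)) (by omega)
  by_cases h5 : ∃ K ⊆ S, #K = 5 ∧ IsHyperclique h K
  · obtain ⟨K, hKS, hcard, hK⟩ := h5
    obtain ⟨k, rfl⟩ := Nat.exists_eq_add_of_le' (show 2 ≤ m by omega)
    have hR : #(S \ K) = 2 * k := by rw [hdiff K hKS]; omega
    exact hf.tripleSum_le_of_five_clique hh hK hKS hcard (fun L hL hL6 hclique =>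
      h6 ⟨L, hL, hL6, hclique⟩) (by omega) hR <| hR ▸ hh.tripleSum_le_six_mul_b_add_six
        (hih K hKS (by omega)) fun hR6 hclique => h6 ⟨_, sdiff_subset, hR6, hclique⟩
  by_cases h4 : ∃ K ⊆ S, #K = 4 ∧ IsHyperclique h K
  · obtain ⟨K, hKS, hcard, hK⟩ := h4
    obtain ⟨j, rfl⟩ := Nat.exists_eq_add_of_le' (show 2 ≤ m by omega)
    have hR : #(S \ K) = 2 * j + 1 := by rw [hdiff K hKS]; omega
    have hmax : ∀ L ⊆ S, #L = 5 → ¬ IsHyperclique h L := fun L hL hL5 hclique =>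
      h5 ⟨L, hL, hL5, hclique⟩
    refine hf.tripleSum_le_of_four_clique hh hK hKS hcard hmax (by omega) hR (hR ▸ ?_)
    obtain hlarge | hsmall : 7 ≤ #(S \ K) ∨ #(S \ K) = 5 := by omega
    · exact hih K hKS (by omega) hlarge
    · have := hh.tripleSum_le_of_not_isHyperclique (hmax _ sdiff_subset hsmall)
      rw [hsmall] at this ⊢
      exact this.trans (by decide)
  · exact hh.tripleSum_le_of_forall_four_not_isHyperclique (fun L hL hL4 hclique =>
      h4 ⟨L, hL, hL4, hclique⟩) (by omega) hS

theorem IsThreeGraph.tripleSum_le_of_card_eq_two_mul (hh : IsThreeGraph h) {m : ℕ} (hm : 2 ≤ m)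
    (hS : #S = 2 * m) (ih : ∀ R ⊂ S, #R = 2 * m - 1 → tripleSum h R ≤ 6 * b #R) :
    tripleSum h S ≤ 6 * b #S := by
  classical
  obtain ⟨k, rfl⟩ := Nat.exists_eq_add_of_le' (show 1 ≤ m by omega)
  have herase : ∀ v ∈ S, tripleSum h (S.erase v) ≤ 6 * b (2 * k + 1) := fun v hv => by
    have hcard : #(S.erase v) = 2 * k + 1 := by rw [card_erase_of_mem hv, hS]; omega
    exact hcard ▸ ih _ (erase_ssubset hv) hcard
  have hsum := sum_le_mul_card herase
  rw [hh.sum_tripleSum_erase, six_mul_b_two_mul_add_one, hS] at hsum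
  rw [hS, six_mul_b_two_mul]
  have hpos : (0 : ℤ) < 2 * k - 1 := by omega
  refine le_of_mul_le_mul_left ?_ hpos
  push_cast at hsum ⊢
  linarith

theorem IsFanoFree.tripleSum_le (hf : IsFanoFree h) (hh : IsThreeGraph h) (hS : 7 ≤ #S) :
    tripleSum h S ≤ 6 * b #S := by
  induction S using Finset.strongInduction with
  | H S ih =>
    obtain ⟨m, hm | hm⟩ := Nat.even_or_odd' #S
    · exact hh.tripleSum_le_of_card_eq_two_mul (by omega) hm fun R hR hcard => ih R hR (by omega)
    obtain rfl | hm4 : m = 3 ∨ 4 ≤ m := by omega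
    · rw [hm]
      exact hf.tripleSum_le_of_card_eq_seven hh hm
    · exact hf.tripleSum_le_of_card_eq_two_mul_add_one hh hm4 hm ih

end

/-! ### Hypergraphs as families of finite sets -/

section

variable [DecidableEq α] {E : Finset (Finset α)}

theorem containsFano_iff : ContainsFano E ↔ ∃ v : Fin 7 → α, Function.Injective v ∧
    ∀ i, {v (fanoLine i 0), v (fanoLine i 1), v (fanoLine i 2)} ∈ E := by
  simp [ContainsFano, Fin.forall_fin_succ, fanoLine]

theorem containsFano_of_forall_mem (h3 : ∀ e ∈ E, #e = 3) (v : Fin 7 → α)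
    (hv : ∀ i, {v (fanoLine i 0), v (fanoLine i 1), v (fanoLine i 2)} ∈ E) : ContainsFano E := by
  refine containsFano_iff.2 ⟨v, fun p q hpq => ?_, hv⟩
  let L (i : Fin 7) : Finset (Fin 7) := {fanoLine i 0, fanoLine i 1, fanoLine i 2}
  have hjoin : ∀ p q, ∃ i, p ∈ L i ∧ q ∈ L i := by decide
  have hline : ∀ i, #(L i) = 3 := by decide
  obtain ⟨i, hp, hq⟩ := hjoin p q
  have himage : #(image v (L i)) = #(L i) := by
    rw [hline]
    simpa [L, image_insert] using h3 _ (hv i)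
  exact card_image_iff.1 himage hp hq hpq

/-- The `{0, 1}`-valued function on ordered triples that represents the hypergraph `E`. -/
def edgeIndicator (E : Finset (Finset α)) (x y z : α) : ℤ := if {x, y, z} ∈ E then 1 else 0

theorem isThreeGraph_edgeIndicator (h3 : ∀ e ∈ E, #e = 3) : IsThreeGraph (edgeIndicator E) where
  zero_or_one x y z := by simp only [edgeIndicator]; split_ifs <;> simp
  swap_left x y z := by rw [edgeIndicator, edgeIndicator, insert_comm]
  swap_right x y z := by rw [edgeIndicator, edgeIndicator, pair_comm]
  diag x y := if_neg fun hmem => by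
    have := h3 _ hmem
    rw [insert_eq_of_mem (mem_insert_self x {y})] at this
    exact absurd this (by linarith [card_le_two (a := x) (b := y)] : #{x, y} ≠ 3)

theorem isFanoFree_edgeIndicator (h3 : ∀ e ∈ E, #e = 3) (hE : ¬ ContainsFano E) :
    IsFanoFree (edgeIndicator E) := fun v => by
  have hmissing : ∃ i, {v (fanoLine i 0), v (fanoLine i 1), v (fanoLine i 2)} ∉ E := by
    by_contra! hall
    exact hE (containsFano_of_forall_mem h3 v hall)
  obtain ⟨i, hi⟩ := hmissing
  have := sum_lt_sum (s := univ)
    (fun i _ => (isThreeGraph_edgeIndicator h3).le_one (v (fanoLine i 0)) (v (fanoLine i 1))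
      (v (fanoLine i 2))) ⟨i, mem_univ i, by simp [edgeIndicator, hi]⟩
  rw [sum_const, card_univ, Fintype.card_fin] at this
  exact Int.lt_add_one_iff.1 this

theorem isHyperclique_edgeIndicator_singleton {e : Finset α} (he : #e = 3) :
    IsHyperclique (edgeIndicator {e}) e := fun x hx y hy z hz hxy hxz hyz => by
  have hsub : {x, y, z} ⊆ e := by simp [insert_subset_iff, hx, hy, hz]
  have hcard : #{x, y, z} = 3 := card_eq_three.2 ⟨x, y, z, hxy, hxz, hyz, rfl⟩
  exact if_pos (mem_singleton.2 (eq_of_subset_of_card_le hsub (by rw [he, hcard])))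

theorem six_mul_card_le_tripleSum_edgeIndicator (h3 : ∀ e ∈ E, #e = 3) {S : Finset α}
    (hS : ∀ e ∈ E, e ⊆ S) : 6 * (#E : ℤ) ≤ tripleSum (edgeIndicator E) S := by
  have hdecomp : tripleSum (edgeIndicator E) S = ∑ e ∈ E, tripleSum (edgeIndicator {e}) S := by
    simp only [tripleSum, pairSum, sum_comm (s := E), edgeIndicator, mem_singleton, sum_ite_eq]
  have hedge : ∀ e ∈ E, 6 ≤ tripleSum (edgeIndicator {e}) S := fun e he => by
    have hthree : IsThreeGraph (edgeIndicator {e}) :=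
      isThreeGraph_edgeIndicator (by simpa using h3 e he)
    calc
      (6 : ℤ) = tripleSum (edgeIndicator {e}) e := by
        rw [hthree.tripleSum_eq_card (isHyperclique_edgeIndicator_singleton (h3 e he)), h3 e he]
        norm_num
      _ ≤ tripleSum (edgeIndicator {e}) S := hthree.tripleSum_mono (hS e he)
  rw [hdecomp]
  simpa [mul_comm] using card_nsmul_le_sum E _ 6 hedge

end

section

variable [Fintype α] [DecidableEq α]

theorem card_le_b_of_not_containsFano {E : Finset (Finset α)} (h3 : ∀ e ∈ E, #e = 3)
    (hE : ¬ ContainsFano E) (hα : 7 ≤ Fintype.card α) : #E ≤ b (Fintype.card α) := by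
  have hlower := six_mul_card_le_tripleSum_edgeIndicator h3 fun e _ => subset_univ e
  have hupper := (isFanoFree_edgeIndicator h3 hE).tripleSum_le (isThreeGraph_edgeIndicator h3)
    (S := univ) hα
  rw [card_univ] at hupper
  omega

/-- The complete bipartite `3`-graph with parts `A` and `Aᶜ`: all triples that meet both parts. -/
def bipartiteTriples (A : Finset α) : Finset (Finset α) :=
  powersetCard 3 univ \ (powersetCard 3 A ∪ powersetCard 3 Aᶜ)

theorem card_eq_three_of_mem_bipartiteTriples {A e : Finset α} (he : e ∈ bipartiteTriples A) :
    #e = 3 := (mem_powersetCard.1 (mem_sdiff.1 he).1).2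

theorem not_monochromatic_of_mem_bipartiteTriples {A : Finset α} {x y z : α}
    (he : {x, y, z} ∈ bipartiteTriples A) : ¬ ((x ∈ A ↔ y ∈ A) ∧ (x ∈ A ↔ z ∈ A)) := by
  have hcard := card_eq_three_of_mem_bipartiteTriples he
  simp only [bipartiteTriples, mem_sdiff, mem_union, mem_powersetCard, hcard, and_true, not_or,
    insert_subset_iff, singleton_subset_iff, mem_compl] at he
  tauto

theorem exists_monochromatic_fanoLine (p : Fin 7 → Prop) :
    ∃ i, (p (fanoLine i 0) ↔ p (fanoLine i 1)) ∧ (p (fanoLine i 0) ↔ p (fanoLine i 2)) := by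
  by_contra hnot
  have hline := not_exists.1 hnot
  have h012 : ¬((p 0 ↔ p 1) ∧ (p 0 ↔ p 2)) := hline 0
  have h234 : ¬((p 2 ↔ p 3) ∧ (p 2 ↔ p 4)) := hline 1
  have h045 : ¬((p 0 ↔ p 4) ∧ (p 0 ↔ p 5)) := hline 2
  have h036 : ¬((p 0 ↔ p 3) ∧ (p 0 ↔ p 6)) := hline 3
  have h256 : ¬((p 2 ↔ p 5) ∧ (p 2 ↔ p 6)) := hline 4
  have h146 : ¬((p 1 ↔ p 4) ∧ (p 1 ↔ p 6)) := hline 5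
  have h135 : ¬((p 1 ↔ p 3) ∧ (p 1 ↔ p 5)) := hline 6
  grind

theorem not_containsFano_bipartiteTriples (A : Finset α) : ¬ ContainsFano (bipartiteTriples A) := by
  rw [containsFano_iff]
  rintro ⟨v, -, hv⟩
  obtain ⟨i, hi⟩ := exists_monochromatic_fanoLine fun j => v j ∈ A
  exact not_monochromatic_of_mem_bipartiteTriples (hv i) hi

theorem card_bipartiteTriples (A : Finset α) :
    #(bipartiteTriples A) =
      (Fintype.card α).choose 3 - ((#A).choose 3 + (Fintype.card α - #A).choose 3) := by
  have hdisj : Disjoint (powersetCard 3 A) (powersetCard 3 Aᶜ) :=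
    disjoint_left.2 fun e hA hAc => by
      obtain ⟨hsub, hcard⟩ := mem_powersetCard.1 hA
      obtain ⟨x, hx⟩ := card_pos.1 (hcard ▸ three_pos)
      exact mem_compl.1 ((mem_powersetCard.1 hAc).1 hx) (hsub hx)
  rw [bipartiteTriples, card_sdiff_of_subset, card_union_of_disjoint hdisj]
  · simp only [card_powersetCard, card_univ, card_compl]
  · exact union_subset (powersetCard_mono (subset_univ A)) (powersetCard_mono (subset_univ Aᶜ))

theorem card_bipartiteTriples_eq_b {A : Finset α} (hA : #A = Fintype.card α / 2) :
    #(bipartiteTriples A) = b (Fintype.card α) := by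
  have : Fintype.card α - Fintype.card α / 2 = (Fintype.card α + 1) / 2 := by omega
  rw [card_bipartiteTriples, hA, this, b, Nat.sub_sub]

end

end TuranFano

/-- Turán's theorem for the Fano plane: for every `n ≥ 7` the maximum number of edges of
a Fano-free `3`-uniform hypergraph on `n` vertices is exactly `b n`. -/
theorem fano_turan (n : ℕ) (hn : 7 ≤ n) :
    (∀ E : Finset (Finset (Fin n)), (∀ e ∈ E, e.card = 3) → ¬ ContainsFano E →
      E.card ≤ b n) ∧
    (∃ E : Finset (Finset (Fin n)), (∀ e ∈ E, e.card = 3) ∧ ¬ ContainsFano E ∧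
      E.card = b n) := by
  refine ⟨fun E h3 hE => ?_, ?_⟩
  · simpa using card_le_b_of_not_containsFano h3 hE (by simpa using hn)
  · obtain ⟨A, -, hA⟩ := Finset.exists_subset_card_eq
      (show n / 2 ≤ (Finset.univ : Finset (Fin n)).card by simpa using n.div_le_self 2)
    refine ⟨bipartiteTriples A, fun e => card_eq_three_of_mem_bipartiteTriples,
      not_containsFano_bipartiteTriples A, ?_⟩
    simpa using card_bipartiteTriples_eq_b (A := A) (by simpa using hA)
end

section
/- For every integer n ≥ 8, if H is a 3-uniform hypergraph on n vertices with exactly b(n) edges that does not contain the Fano plane, then H is isomorphic to the balanced, complete, bipartite hypergraph B_n; that is, there is a partition of the vertex set of H into sets X and Y with ||X|−|Y|| ≤ 1 such that a 3-element vertex set is an edge of H if and only if it intersects both X and Y. -/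
/-!
A hypergraph with at least `b n` edges is dense enough to contain a `4`-clique `S`. The Fano plane
minus a line consists of the three perfect matchings of the four remaining points, each joined to
its own point of the line. Hence, if `S` is a clique and the Fano plane is absent, the multigraph
of pairs joined to points of `S` has no four vertices whose three matchings are joined to distinct
points of `S`, and this bounds its total weight by the value attained in `B_n`. If there is no
`5`-clique, every vertex outside `S` misses a pair of `S`, so removing `S` and inducting on `n` in
steps of four gives at most `b n` edges. If there is a `5`-clique and `n` is odd, removing a `5`- or
`6`-clique gives fewer than `b n` edges; even `n` follows by averaging over the deleted vertex.

In the case of equality there is no `5`-clique, even for even `n`, and every vertex outside a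
`4`-clique `S` misses exactly one pair of `S`. The pairs missed by two such vertices are equal or
complementary, so they split the vertices into two classes, neither of which contains an edge. Thus
the hypergraph lies in a complete bipartite one, and having `b n` edges it is all of it and the
parts are balanced.
-/

namespace FanoTuran

open Finset

variable {V : Type*}

/-! ### Averaging and weighted graphs -/

theorem descFactorial_mul_le_of_sum_erase [DecidableEq V] {f : Finset V → ℤ} {d k : ℕ} {c : ℤ}
    {W : Finset V} (hf : ∀ U, ∑ v ∈ U, f (U.erase v) = (#U - d) * f U) (hdk : d ≤ k) (hkW : k ≤ #W)
    (hc : ∀ Q ⊆ W, #Q = k → f Q ≤ c) :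
    k.descFactorial d * f W ≤ (#W).descFactorial d * c := by
  obtain ⟨n, hn⟩ : ∃ n, n = #W := ⟨_, rfl⟩
  rw [← hn] at hkW ⊢
  induction n, hkW using Nat.le_induction generalizing W with
  | base => gcongr; exact hc W Subset.rfl hn.symm
  | succ n hkn ih =>
    have herase : ∀ v ∈ W, k.descFactorial d * f (W.erase v) ≤ n.descFactorial d * c := by
      intro v hv
      have hsub : W.erase v ⊆ W := erase_subset v W
      exact ih (fun Q hQ => hc Q (hQ.trans hsub)) (by rw [card_erase_of_mem hv]; omega)
    have hsum : k.descFactorial d * (((n + 1 : ℕ) - d) * f W)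
        ≤ (n + 1 : ℕ) * (n.descFactorial d * c) := by
      rw [hn, ← hf W, mul_sum]
      simpa using sum_le_sum herase
    have hdesc : (((n + 1 : ℕ) : ℤ) - d) * (n + 1).descFactorial d
        = (n + 1 : ℕ) * n.descFactorial d := by
      rw [← Nat.cast_sub (by omega)]
      exact_mod_cast Nat.succ_descFactorial n d
    have hpos : (0 : ℤ) < (n + 1 : ℕ) - d := by omega
    refine le_of_mul_le_mul_left ?_ hpos
    linear_combination hsum - c * hdesc

/-- Integer edge weights on the complete graph with vertex set `V`. -/
structure WeightedGraph (V : Type*) where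
  weight : V → V → ℤ
  weight_comm : ∀ x y, weight x y = weight y x
  weight_self : ∀ x, weight x x = 0

namespace WeightedGraph

instance : CoeFun (WeightedGraph V) fun _ => V → V → ℤ := ⟨weight⟩

variable (w : WeightedGraph V)

theorem comm (x y : V) : w x y = w y x := w.weight_comm x y

@[simp] theorem self (x : V) : w x x = 0 := w.weight_self x

/-- The total weight inside `W`, summed over ordered pairs, so that every edge counts twice. -/
def total (W : Finset V) : ℤ := ∑ x ∈ W, ∑ y ∈ W, w x y

@[simp] theorem total_empty : w.total ∅ = 0 := rfl

theorem total_le {W : Finset V} {c : ℤ} (h : ∀ x ∈ W, ∀ y ∈ W, x ≠ y → w x y ≤ c) :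
    w.total W ≤ c * (#W * (#W - 1)) := by
  classical
  calc w.total W = ∑ x ∈ W, ∑ y ∈ W.erase x, w x y :=
        sum_congr rfl fun x hx => by rw [← add_sum_erase W _ hx, w.self, zero_add]
    _ ≤ ∑ x ∈ W, ∑ _y ∈ W.erase x, c := sum_le_sum fun x hx => sum_le_sum fun y hy =>
        h x hx y (mem_of_mem_erase hy) (ne_of_mem_erase hy).symm
    _ = ∑ _x ∈ W, (#W - 1) * c := sum_congr rfl fun x hx => by
        rw [sum_const, card_erase_of_mem hx, nsmul_eq_mul,
          Nat.cast_pred (card_pos.2 ⟨x, hx⟩)]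
    _ = c * (#W * (#W - 1)) := by rw [sum_const, nsmul_eq_mul]; ring

variable [DecidableEq V]

theorem total_union {A B : Finset V} (h : Disjoint A B) :
    w.total (A ∪ B) = w.total A + w.total B + 2 * ∑ y ∈ B, ∑ x ∈ A, w x y := by
  have hcross : ∑ x ∈ B, ∑ y ∈ A, w x y = ∑ y ∈ B, ∑ x ∈ A, w x y :=
    sum_congr rfl fun _ _ => sum_congr rfl fun _ _ => w.comm _ _
  simp only [total, sum_union h, sum_add_distrib]
  rw [sum_comm (s := A) (t := B), hcross]
  ring

theorem total_insert {W : Finset V} {v : V} (hv : v ∉ W) :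
    w.total (insert v W) = w.total W + 2 * ∑ y ∈ W, w v y := by
  rw [insert_eq, w.total_union (disjoint_singleton_left.2 hv)]
  simp [total]

theorem total_eq_add_sdiff {A W : Finset V} (h : A ⊆ W) :
    w.total W = w.total A + w.total (W \ A) + 2 * ∑ y ∈ W \ A, ∑ x ∈ A, w x y := by
  rw [← w.total_union disjoint_sdiff, union_sdiff_of_subset h]

theorem total_eq_add_erase {W : Finset V} {v : V} (hv : v ∈ W) :
    w.total W = w.total (W.erase v) + 2 * ∑ y ∈ W, w v y := by
  have h := w.total_insert (notMem_erase v W)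
  rw [insert_erase hv] at h
  rw [h, ← add_sum_erase W _ hv, w.self, zero_add]

theorem sum_total_erase (W : Finset V) :
    ∑ v ∈ W, w.total (W.erase v) = (#W - 2) * w.total W := by
  rw [sum_congr rfl fun v hv => eq_sub_of_add_eq (w.total_eq_add_erase hv).symm,
    sum_sub_distrib, ← mul_sum]
  simp only [sum_const, nsmul_eq_mul]
  unfold total
  ring

theorem total_pair {x y : V} (hxy : x ≠ y) : w.total {x, y} = 2 * w x y := by
  rw [w.total_insert (by simpa using hxy)]
  simp [total]

theorem total_triple {x y z : V} (hxy : x ≠ y) (hxz : x ≠ z) (hyz : y ≠ z) :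
    w.total {x, y, z} = 2 * (w x y + w x z + w y z) := by
  rw [w.total_insert (by simp [hxy, hxz]), w.total_pair hyz, sum_pair hyz]
  ring

theorem total_quadruple {x y z u : V} (hxy : x ≠ y) (hxz : x ≠ z) (hxu : x ≠ u) (hyz : y ≠ z)
    (hyu : y ≠ u) (hzu : z ≠ u) :
    w.total {x, y, z, u}
      = 2 * ((w x y + w z u) + (w x z + w y u) + (w x u + w y z)) := by
  rw [w.total_insert (by simp [hxy, hxz, hxu]), w.total_triple hyz hyu hzu,
    sum_insert (by simp [hyz, hyu]), sum_pair hzu]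
  ring

end WeightedGraph

/-! ### Weighted graphs without heavy perfect matchings -/

/-- Twice the weight of the graph on `m` vertices that counts, for each pair, the edges of `B_m`
joined to it by a fixed `4`-set with two vertices in either part: pairs across the parts have
weight `4`, pairs inside a part weight `2`. -/
def linkBound (m : ℕ) : ℤ := 3 * m ^ 2 - 2 * m - (m % 2 : ℕ)

theorem linkBound_add_two (m : ℕ) : linkBound (m + 2) = linkBound m + 12 * m + 8 := by
  have hmod : (m + 2) % 2 = m % 2 := by omega
  rw [linkBound, linkBound, hmod]
  push_cast
  ring

theorem linkBound_add_one (m : ℕ) : linkBound m + 6 * m ≤ linkBound (m + 1) := by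
  have hmod : ((m + 1) % 2 : ℕ) ≤ (1 : ℤ) + (m % 2 : ℕ) := by omega
  rw [linkBound, linkBound]
  push_cast at hmod ⊢
  linarith

theorem linkBound_add_three (m : ℕ) : linkBound m + 18 * m + 20 ≤ linkBound (m + 3) := by
  have h := linkBound_add_one (m + 2)
  rw [linkBound_add_two] at h
  push_cast at h
  linarith

namespace WeightedGraph

variable (w : WeightedGraph V)

/-- All weights in `W` are at most `k`, and of the three perfect matchings of any four vertices
of `W`, one has weight at most `k`, or another at most `k + 1`, or the third at most `k + 2`.
If the weights count the elements of a `k`-set that are adjacent to a pair, then this says that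
the three matchings cannot be assigned distinct elements adjacent to both of their pairs. -/
structure MatchingBounded (k : ℤ) (W : Finset V) : Prop where
  weight_le : ∀ x ∈ W, ∀ y ∈ W, w x y ≤ k
  matching_le : ∀ x ∈ W, ∀ y ∈ W, ∀ z ∈ W, ∀ u ∈ W,
    w x y + w z u ≤ k ∨ w x z + w y u ≤ k + 1 ∨ w x u + w y z ≤ k + 2

namespace MatchingBounded

variable {w} {W : Finset V} {k : ℤ}

theorem mono {A : Finset V} (h : w.MatchingBounded k W) (hA : A ⊆ W) : w.MatchingBounded k A where
  weight_le x hx y hy := h.weight_le x (hA hx) y (hA hy)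
  matching_le x hx y hy z hz u hu := h.matching_le x (hA hx) y (hA hy) z (hA hz) u (hA hu)

theorem matching_sum_le (h : w.MatchingBounded 4 W) {x y z u : V} (hx : x ∈ W) (hy : y ∈ W)
    (hz : z ∈ W) (hu : u ∈ W) :
    (w x y + w z u) + (w x z + w y u) + (w x u + w y z) ≤ 20 := by
  have hxyzu := h.matching_le x hx y hy z hz u hu
  have hxzuy := h.matching_le x hx z hz u hu y hy
  have hxuyz := h.matching_le x hx u hu y hy z hz
  rw [w.comm u y, w.comm z y] at hxzuy
  rw [w.comm u z, w.comm u y] at hxuyz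
  have := h.weight_le x hx y hy
  have := h.weight_le x hx z hz
  have := h.weight_le x hx u hu
  have := h.weight_le y hy z hz
  have := h.weight_le y hy u hu
  have := h.weight_le z hz u hu
  omega

theorem apex_le_one (h : w.MatchingBounded 4 W) {x y z u : V} (hx : x ∈ W) (hy : y ∈ W)
    (hz : z ∈ W) (hu : u ∈ W) (hxy : w x y = 3) (hxz : w x z = 4) (hyz : w y z = 4)
    (hsum : 9 ≤ w x u + w y u + w z u) : w z u ≤ 1 := by
  have hxyzu := h.matching_le x hx y hy z hz u hu
  have hxzuy := h.matching_le x hx z hz u hu y hy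
  have hxuyz := h.matching_le x hx u hu y hy z hz
  rw [w.comm u y, w.comm z y] at hxzuy
  rw [w.comm u z, w.comm u y] at hxuyz
  have := h.weight_le x hx u hu
  have := h.weight_le y hy u hu
  have := h.weight_le z hz u hu
  omega

theorem total_le_of_card_eq_four (h : w.MatchingBounded 4 W) (hW : #W = 4) : w.total W ≤ 40 := by
  classical
  obtain ⟨x, y, z, u, hxy, hxz, hxu, hyz, hyu, hzu, rfl⟩ := card_eq_four.1 hW
  rw [w.total_quadruple hxy hxz hxu hyz hyu hzu]
  have := h.matching_sum_le (x := x) (y := y) (z := z) (u := u) (by simp) (by simp) (by simp)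
    (by simp)
  omega

theorem total_add_two_mul_sum_le [DecidableEq V] {T : Finset V} {u : V}
    (h : w.MatchingBounded 4 W) (hT : T ⊆ W) (hT3 : #T = 3) (hu : u ∈ W \ T) :
    w.total T + 2 * ∑ x ∈ T, w x u ≤ 40 := by
  rw [mem_sdiff] at hu
  have hins := (h.mono (insert_subset hu.1 hT)).total_le_of_card_eq_four
    (by rw [card_insert_of_notMem hu.2, hT3])
  rwa [w.total_insert hu.2, sum_congr rfl fun x _ => w.comm u x] at hins

end MatchingBounded

variable {w} {W : Finset V}

theorem total_le_linkBound_of_triple_le (hw : ∀ x ∈ W, ∀ y ∈ W, w x y ≤ 4)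
    (hT : ∀ T ⊆ W, #T = 3 → w.total T ≤ 20) : w.total W ≤ linkBound #W := by
  classical
  induction hn : #W using Nat.strong_induction_on generalizing W with | _ n ih
  by_cases hheavy : ∃ x ∈ W, ∃ y ∈ W, w x y = 4
  · obtain ⟨x, hx, y, hy, hxy4⟩ := hheavy
    have hxy : x ≠ y := by rintro rfl; simp at hxy4
    have hsub : {x, y} ⊆ W := by simp [insert_subset_iff, hx, hy]
    have hcard : #(W \ {x, y}) + 2 = n := by
      rw [← hn, ← card_pair hxy, card_sdiff_add_card_eq_card hsub]
    have hrest := ih _ (by omega) (W := W \ {x, y}) (fun z hz u hu => hw z (mem_sdiff.1 hz).1 u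
      (mem_sdiff.1 hu).1) (fun T hTW => hT T (hTW.trans sdiff_subset)) rfl
    have hcross : ∑ z ∈ W \ {x, y}, ∑ a ∈ {x, y}, w a z ≤ #(W \ {x, y}) • 6 := by
      refine sum_le_card_nsmul _ _ _ fun z hz => ?_
      simp only [mem_sdiff, mem_insert, mem_singleton, not_or] at hz
      have htriple := hT {x, y, z} (by simp [insert_subset_iff, hx, hy, hz.1])
        (card_eq_three.2 ⟨x, y, z, hxy, Ne.symm hz.2.1, Ne.symm hz.2.2, rfl⟩)
      rw [w.total_triple hxy (Ne.symm hz.2.1) (Ne.symm hz.2.2)] at htriple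
      rw [sum_pair hxy]
      omega
    rw [w.total_eq_add_sdiff hsub, w.total_pair hxy, hxy4, ← hcard, linkBound_add_two]
    rw [nsmul_eq_mul] at hcross
    linarith
  · push Not at hheavy
    have hle3 := w.total_le (W := W) (c := 3) fun x hx y hy _ => by
      have := hheavy x hx y hy
      have := hw x hx y hy
      omega
    have hmod : ((n % 2 : ℕ) : ℤ) ≤ n := by exact_mod_cast Nat.mod_le _ _
    rw [hn] at hle3
    rw [linkBound]
    linarith

theorem total_le_linkBound_of_erase [DecidableEq V] {v : V} (hv : v ∈ W)
    (herase : w.total (W.erase v) ≤ linkBound #(W.erase v))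
    (hsum : ∑ x ∈ W, w v x ≤ 3 * #(W.erase v)) : w.total W ≤ linkBound #W := by
  have hstep := linkBound_add_one #(W.erase v)
  rw [card_erase_add_one hv] at hstep
  rw [w.total_eq_add_erase hv]
  linarith

theorem total_le_linkBound_of_card_eq_six [DecidableEq V] (hW : #W = 6)
    (herase : ∀ v ∈ W, w.total (W.erase v) ≤ linkBound 5) : w.total W ≤ linkBound #W := by
  have hsum := sum_le_card_nsmul W _ _ herase
  rw [w.sum_total_erase, hW] at hsum
  norm_num [linkBound, hW] at hsum ⊢
  linarith

namespace MatchingBounded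

theorem total_le_add_sdiff [DecidableEq V] {T : Finset V} (h : w.MatchingBounded 4 W) (hT : T ⊆ W)
    (hT3 : #T = 3) :
    w.total W ≤ w.total T + w.total (W \ T) + #(W \ T) * (40 - w.total T) := by
  have hcross : ∑ u ∈ W \ T, 2 * ∑ x ∈ T, w x u ≤ #(W \ T) • (40 - w.total T) :=
    sum_le_card_nsmul _ _ _ fun u hu => by linarith [h.total_add_two_mul_sum_le hT hT3 hu]
  rw [w.total_eq_add_sdiff hT, mul_sum]
  rw [nsmul_eq_mul] at hcross
  linarith

theorem total_le_linkBound_of_total_eq [DecidableEq V] {T : Finset V} (h : w.MatchingBounded 4 W)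
    (hT : T ⊆ W) (hT3 : #T = 3) (hT24 : w.total T = 24)
    (hrest : w.total (W \ T) ≤ linkBound #(W \ T)) (hW : 4 < #W) :
    w.total W ≤ linkBound #W := by
  have hcard := card_sdiff_add_card_eq_card hT
  have hsplit := h.total_le_add_sdiff hT hT3
  have hstep := linkBound_add_three #(W \ T)
  rw [hT3] at hcard
  rw [hcard] at hstep
  rw [hT24] at hsplit
  omega

/-- If no outside vertex is joined to the triangle with weight less than `9`, then all of them
are joined to its apex `z` with weight at most `1`, so it pays to remove `z` alone. -/
theorem total_le_linkBound_of_triple (h : w.MatchingBounded 4 W) (hn : 4 < #W)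
    (ih : ∀ A ⊂ W, #A ≠ 3 → w.total A ≤ linkBound #A) (hn6 : #W ≠ 6) {x y z : V} (hx : x ∈ W)
    (hy : y ∈ W) (hz : z ∈ W) (hxy : w x y = 3) (hxz : w x z = 4) (hyz : w y z = 4) :
    w.total W ≤ linkBound #W := by
  classical
  have hxy' : x ≠ y := by rintro rfl; simp at hxy
  have hxz' : x ≠ z := by rintro rfl; simp at hxz
  have hyz' : y ≠ z := by rintro rfl; simp at hyz
  have hsub : {x, y, z} ⊆ W := by simp [insert_subset_iff, hx, hy, hz]
  have hcard3 : #{x, y, z} = 3 := card_eq_three.2 ⟨x, y, z, hxy', hxz', hyz', rfl⟩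
  have htriple : w.total {x, y, z} = 22 := by
    rw [w.total_triple hxy' hxz' hyz', hxy, hxz, hyz]; norm_num
  have hcard := card_sdiff_add_card_eq_card hsub
  have hsum : ∀ u, ∑ a ∈ {x, y, z}, w a u = w x u + w y u + w z u := fun u => by
    rw [sum_insert (by simp [hxy', hxz']), sum_pair hyz', add_assoc]
  by_cases hall : ∀ u ∈ W \ {x, y, z}, 9 ≤ w x u + w y u + w z u
  · have hapex : ∑ u ∈ W \ {x, y, z}, w z u ≤ #(W \ {x, y, z}) • 1 :=
      sum_le_card_nsmul _ _ _ fun u hu =>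
        h.apex_le_one hx hy hz (mem_sdiff.1 hu).1 hxy hxz hyz (hall u hu)
    have hz8 : ∑ u ∈ {x, y, z}, w z u = 8 := by
      rw [sum_insert (by simp [hxy', hxz']), sum_pair hyz', w.comm z x, w.comm z y, hxz, hyz]
      simp
    have hcard' := card_erase_add_one hz
    refine total_le_linkBound_of_erase hz (ih _ (erase_ssubset hz) (by omega)) ?_
    rw [← sum_sdiff hsub, hz8]
    rw [nsmul_eq_mul] at hapex
    omega
  · push Not at hall
    obtain ⟨v, hv, hv9⟩ := hall
    have hle9 : ∀ u ∈ W \ {x, y, z}, ∑ a ∈ {x, y, z}, w a u ≤ 9 := fun u hu => by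
      linarith [h.total_add_two_mul_sum_le hsub hcard3 hu]
    have hcross := sum_lt_sum hle9 ⟨v, hv, by rwa [hsum]⟩
    rw [sum_const, nsmul_eq_mul] at hcross
    have hrest := ih _ (sdiff_ssubset hsub ⟨x, by simp⟩) (by omega)
    have hstep := linkBound_add_three #(W \ {x, y, z})
    rw [hcard3] at hcard
    rw [hcard] at hstep
    rw [w.total_eq_add_sdiff hsub, htriple]
    omega

theorem total_le_linkBound (h : w.MatchingBounded 4 W) (hW : #W ≠ 3) :
    w.total W ≤ linkBound #W := by
  classical
  induction W using Finset.strongInduction with | _ W ih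
  replace ih : ∀ A ⊂ W, #A ≠ 3 → w.total A ≤ linkBound #A :=
    fun A hA => ih A hA (h.mono hA.subset)
  by_cases hlight : ∀ T ⊆ W, #T = 3 → w.total T ≤ 20
  · exact total_le_linkBound_of_triple_le h.weight_le hlight
  push Not at hlight
  obtain ⟨T, hTW, hT3, hT⟩ := hlight
  have hcard := card_sdiff_add_card_eq_card hTW
  obtain hn4 | hn6 | ⟨hn, hn6⟩ : #W = 4 ∨ #W = 6 ∨ 4 < #W ∧ #W ≠ 6 := by omega
  · rw [hn4]
    exact h.total_le_of_card_eq_four hn4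
  · refine total_le_linkBound_of_card_eq_six hn6 fun v hv => ?_
    have hv5 : #(W.erase v) = 5 := by rw [card_erase_of_mem hv, hn6]
    simpa [hv5] using ih _ (erase_ssubset hv) (by omega)
  obtain ⟨x, y, z, hxy, hxz, hyz, rfl⟩ := card_eq_three.1 hT3
  have hx : x ∈ W := hTW (by simp)
  have hy : y ∈ W := hTW (by simp)
  have hz : z ∈ W := hTW (by simp)
  have htriple := w.total_triple hxy hxz hyz
  have := h.weight_le x hx y hy
  have := h.weight_le x hx z hz
  have := h.weight_le y hy z hz
  obtain h24 | ⟨h1, h2, h3⟩ | ⟨h1, h2, h3⟩ | ⟨h1, h2, h3⟩ :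
      w.total {x, y, z} = 24 ∨ (w x y = 3 ∧ w x z = 4 ∧ w y z = 4) ∨
      (w x y = 4 ∧ w x z = 3 ∧ w y z = 4) ∨ (w x y = 4 ∧ w x z = 4 ∧ w y z = 3) := by omega
  · exact h.total_le_linkBound_of_total_eq hTW hT3 h24 (ih _ (sdiff_ssubset hTW ⟨x, by simp⟩)
      (by omega)) hn
  · exact h.total_le_linkBound_of_triple hn ih hn6 hx hy hz h1 h2 h3
  · exact h.total_le_linkBound_of_triple hn ih hn6 hx hz hy h2 h1 (by rw [w.comm, h3])
  · exact h.total_le_linkBound_of_triple hn ih hn6 hy hz hx h3 (by rw [w.comm, h1])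
      (by rw [w.comm, h2])

end MatchingBounded

end WeightedGraph

/-! ### Counting edges of `3`-uniform hypergraphs -/

section Counting

variable [DecidableEq V]

theorem card_filter_powersetCard_succ_insert {W : Finset V} {v : V} (hv : v ∉ W) (k : ℕ)
    (p : Finset V → Prop) [DecidablePred p] :
    #{e ∈ (insert v W).powersetCard (k + 1) | p e}
      = #{e ∈ W.powersetCard (k + 1) | p e} + #{e ∈ W.powersetCard k | p (insert v e)} := by
  have hnot : ∀ j, ∀ e ∈ W.powersetCard j, v ∉ e := fun j e he hve =>
    hv ((mem_powersetCard.1 he).1 hve)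
  rw [powersetCard_succ_insert hv, filter_union, card_union_of_disjoint, filter_image,
    card_image_of_injOn]
  · intro e he f hf hef
    rw [← erase_insert (hnot k e (mem_filter.1 he).1), hef,
      erase_insert (hnot k f (mem_filter.1 hf).1)]
  · refine disjoint_filter_filter (disjoint_left.2 fun e he he' => ?_)
    obtain ⟨f, -, rfl⟩ := mem_image.1 he'
    exact hnot _ _ he (mem_insert_self v f)

/-- `x`, `y`, `z` are distinct and form an edge of the hypergraph with edge set `E`. -/
def IsEdge (E : Finset (Finset V)) (x y z : V) : Prop :=
  x ≠ y ∧ x ≠ z ∧ y ≠ z ∧ {x, y, z} ∈ E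

instance (E : Finset (Finset V)) (x y z : V) : Decidable (IsEdge E x y z) :=
  inferInstanceAs (Decidable (_ ∧ _))

variable {E : Finset (Finset V)} {x y z v : V} {A B S W : Finset V}

theorem isEdge_swap_left : IsEdge E x y z ↔ IsEdge E y x z := by
  rw [IsEdge, IsEdge, insert_comm, ne_comm (a := x) (b := y)]
  tauto

theorem isEdge_swap_right : IsEdge E x y z ↔ IsEdge E x z y := by
  rw [IsEdge, IsEdge, pair_comm y z, ne_comm (a := y) (b := z)]
  tauto

variable (E) in
/-- The indicator function of `IsEdge E`. -/
def edgeInd (x y z : V) : ℤ := if IsEdge E x y z then 1 else 0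

theorem edgeInd_swap_left : edgeInd E x y z = edgeInd E y x z := by
  simp only [edgeInd, isEdge_swap_left (x := x)]

theorem edgeInd_swap_right : edgeInd E x y z = edgeInd E x z y := by
  simp only [edgeInd, isEdge_swap_right (y := y)]

theorem edgeInd_le_one : edgeInd E x y z ≤ 1 := by
  rw [edgeInd]
  split_ifs <;> norm_num

variable (E) in
/-- The link graph of the vertices in `S`: a pair weighs the number of vertices of `S` that form an
edge with it. -/
def link (S : Finset V) : WeightedGraph V where
  weight x y := ∑ s ∈ S, edgeInd E s x y
  weight_comm _ _ := sum_congr rfl fun _ _ => edgeInd_swap_right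
  weight_self _ := sum_eq_zero fun _ _ => if_neg fun h => h.2.2.1 rfl

theorem link_apply : link E S x y = ∑ s ∈ S, edgeInd E s x y := rfl

theorem link_singleton : link E {z} x y = edgeInd E z x y := by rw [link_apply, sum_singleton]

theorem link_le_card : link E S x y ≤ #S := by
  calc link E S x y ≤ #S • 1 := sum_le_card_nsmul _ _ _ fun _ _ => edgeInd_le_one
    _ = #S := by simp

theorem sum_link_singleton : ∑ y ∈ W, link E {z} x y = link E W x z :=
  sum_congr rfl fun _ _ => by
    rw [link_singleton, edgeInd_swap_right, edgeInd_swap_left, edgeInd_swap_right]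

variable (E) in
/-- Twice the number of edges that consist of `z` and two vertices of `W`. -/
def degree (z : V) (W : Finset V) : ℤ := (link E {z}).total W

variable (E) in
/-- Six times the number of edges inside `W`. -/
def count (W : Finset V) : ℤ := ∑ z ∈ W, degree E z W

theorem total_link : (link E S).total W = ∑ s ∈ S, degree E s W := by
  simp only [degree, WeightedGraph.total, link_singleton]
  exact sum_comm_cycle

theorem sum_link_self : ∑ x ∈ W, link E W z x = degree E z W :=
  sum_congr rfl fun x _ => by rw [sum_link_singleton, (link E W).comm]

theorem degree_union (h : Disjoint A B) :
    degree E z (A ∪ B) = degree E z A + degree E z B + 2 * ∑ y ∈ B, link E A z y := by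
  simp only [degree, WeightedGraph.total_union _ h, (link E {z}).comm _, sum_link_singleton,
    (link E A).comm z]

theorem count_union (h : Disjoint A B) :
    count E (A ∪ B) = count E A + 3 * ∑ z ∈ B, degree E z A + 3 * (link E A).total B
      + count E B := by
  have hA : ∑ z ∈ A, ∑ y ∈ B, link E A z y = ∑ y ∈ B, degree E y A := by
    rw [sum_comm]
    exact sum_congr rfl fun y _ => by simp only [← sum_link_self, (link E A).comm y]
  have hB : ∑ z ∈ B, ∑ y ∈ B, link E A z y = (link E A).total B := rfl
  simp only [count, sum_union h, degree_union h, sum_add_distrib, ← mul_sum, hA, hB, total_link]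
  ring

theorem count_eq_add_sdiff (h : A ⊆ W) :
    count E W = count E A + 3 * ∑ z ∈ W \ A, degree E z A + 3 * (link E A).total (W \ A)
      + count E (W \ A) := by
  rw [← count_union disjoint_sdiff, union_sdiff_of_subset h]

theorem degree_insert (hv : v ∉ W) : degree E z (insert v W) = degree E z W + 2 * link E W v z := by
  rw [degree, WeightedGraph.total_insert _ hv, sum_link_singleton, degree]

theorem count_insert (hv : v ∉ W) : count E (insert v W) = count E W + 3 * degree E v W := by
  rw [insert_eq, union_comm, count_union (disjoint_singleton_right.2 hv)]
  simp [count, degree, WeightedGraph.total]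

theorem count_eq_add_erase (hv : v ∈ W) :
    count E W = count E (W.erase v) + 3 * degree E v W := by
  have hdegree := degree_insert (E := E) (z := v) (notMem_erase v W)
  have hcount := count_insert (E := E) (notMem_erase v W)
  rw [insert_erase hv, WeightedGraph.self] at hdegree
  rw [insert_erase hv] at hcount
  rw [hcount, hdegree, mul_zero, add_zero]

theorem sum_count_erase : ∑ v ∈ W, count E (W.erase v) = (#W - 3) * count E W := by
  rw [sum_congr rfl fun v hv => eq_sub_of_add_eq (count_eq_add_erase hv).symm, sum_sub_distrib,
    ← mul_sum, ← count]
  simp only [sum_const, nsmul_eq_mul]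
  ring

theorem sum_total_link_erase :
    ∑ s ∈ S, (link E (S.erase s)).total W = (#S - 1) * (link E S).total W := by
  simp only [total_link]
  rw [sum_congr rfl fun s hs => sum_erase_eq_sub hs, sum_sub_distrib]
  simp only [sum_const, nsmul_eq_mul]
  ring

theorem degree_eq_two_mul_card (hz : z ∉ W) :
    degree E z W = 2 * #{e ∈ W.powersetCard 2 | insert z e ∈ E} := by
  induction W using Finset.induction_on with
  | empty => simp [degree, WeightedGraph.total_empty]
  | insert v W hv ih =>
    simp only [mem_insert, not_or] at hz
    have hlink : link E W v z = #{e ∈ W.powersetCard 1 | insert z (insert v e) ∈ E} := by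
      rw [powersetCard_one, filter_map, card_map, card_filter]
      push_cast
      refine sum_congr rfl fun y hy => ?_
      have hvy : y ≠ v := ne_of_mem_of_not_mem hy hv
      have hzy : y ≠ z := ne_of_mem_of_not_mem hy hz.2
      have hset : ({z, v, y} : Finset V) = {y, v, z} := by ext; simp; tauto
      simp [edgeInd, IsEdge, hvy, hzy, Ne.symm hz.1, hset]
    rw [degree_insert hv, ih hz.2, hlink, card_filter_powersetCard_succ_insert hv]
    push_cast
    ring

theorem count_eq_six_mul_card : count E W = 6 * #{e ∈ W.powersetCard 3 | e ∈ E} := by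
  induction W using Finset.induction_on with
  | empty => simp [count]
  | insert v W hv ih =>
    rw [count_insert hv, degree_eq_two_mul_card hv, ih, card_filter_powersetCard_succ_insert hv]
    push_cast
    ring

/-! ### Cliques and missing pairs -/

variable (E) in
/-- All triples in `S` are edges. -/
def IsClique (S : Finset V) : Prop := S.powersetCard 3 ⊆ E

variable (E) in
/-- No `k` vertices of `W` form a clique. -/
def CliqueFreeOn (k : ℕ) (W : Finset V) : Prop := ∀ S ⊆ W, #S = k → ¬ IsClique E S

variable (E) in
/-- The pairs in `S` that do not form an edge with `z`. -/
def missingPairs (S : Finset V) (z : V) : Finset (Finset V) :=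
  {e ∈ S.powersetCard 2 | insert z e ∉ E}

omit [DecidableEq V] in
theorem IsClique.mono (hS : IsClique E S) (hA : A ⊆ S) : IsClique E A :=
  (powersetCard_mono hA).trans hS

omit [DecidableEq V] in
theorem CliqueFreeOn.mono {k : ℕ} (hW : CliqueFreeOn E k W) (hA : A ⊆ W) : CliqueFreeOn E k A :=
  fun S hS => hW S (hS.trans hA)

theorem cast_descFactorial_three (n : ℕ) :
    (n.descFactorial 3 : ℤ) = n * (n - 1) * (n - 2) := by
  rcases lt_or_ge n 2 with hn | hn
  · interval_cases n <;> simp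
  · rw [Nat.descFactorial_succ, Nat.cast_mul, Nat.cast_descFactorial_two, Nat.cast_sub hn]
    push_cast
    ring

theorem count_add_six_mul_card_filter :
    count E W + 6 * #{e ∈ W.powersetCard 3 | e ∉ E} = #W * (#W - 1) * (#W - 2) := by
  have hsplit := card_filter_add_card_filter_not (s := W.powersetCard 3) (· ∈ E)
  rw [count_eq_six_mul_card, ← cast_descFactorial_three, Nat.descFactorial_eq_factorial_mul_choose,
    ← card_powersetCard, ← hsplit]
  push_cast [Nat.factorial]
  ring

theorem count_le : count E W ≤ #W * (#W - 1) * (#W - 2) := by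
  linarith [count_add_six_mul_card_filter (E := E) (W := W)]

theorem IsClique.count_eq (hS : IsClique E S) : count E S = #S * (#S - 1) * (#S - 2) := by
  rw [← count_add_six_mul_card_filter (E := E), filter_false_of_mem fun e he => not_not.2 (hS he)]
  simp

theorem count_add_six_le (hS : ¬ IsClique E S) : count E S + 6 ≤ #S * (#S - 1) * (#S - 2) := by
  have hpos : 0 < #{e ∈ S.powersetCard 3 | e ∉ E} := by
    obtain ⟨e, he, heE⟩ := not_subset.1 hS
    exact card_pos.2 ⟨e, mem_filter.2 ⟨he, heE⟩⟩
  have hsum := count_add_six_mul_card_filter (E := E) (W := S)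
  omega

theorem degree_add_two_mul_card_missingPairs (hz : z ∉ S) :
    degree E z S + 2 * #(missingPairs E S z) = #S * (#S - 1) := by
  have hsplit := card_filter_add_card_filter_not (s := S.powersetCard 2) (insert z · ∈ E)
  rw [degree_eq_two_mul_card hz, missingPairs, ← Nat.cast_descFactorial_two,
    Nat.descFactorial_eq_factorial_mul_choose, ← card_powersetCard, ← hsplit]
  push_cast [Nat.factorial]
  ring

theorem missingPairs_nonempty (hS : IsClique E S) (hz : z ∉ S) (hins : ¬ IsClique E (insert z S)) :
    (missingPairs E S z).Nonempty := by
  obtain ⟨e, he, heE⟩ := not_subset.1 hins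
  rw [powersetCard_succ_insert hz, mem_union, mem_image] at he
  obtain heS | ⟨f, hf, rfl⟩ := he
  · exact absurd (hS heS) heE
  · exact ⟨f, mem_filter.2 ⟨hf, heE⟩⟩

theorem IsClique.isEdge (hS : IsClique E S) (hx : x ∈ S) (hy : y ∈ S) (hz : z ∈ S) (hxy : x ≠ y)
    (hxz : x ≠ z) (hyz : y ≠ z) : IsEdge E x y z :=
  ⟨hxy, hxz, hyz, hS (mem_powersetCard.2
    ⟨by simp [insert_subset_iff, hx, hy, hz], card_eq_three.2 ⟨x, y, z, hxy, hxz, hyz, rfl⟩⟩)⟩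

end Counting

/-! ### The number of edges of `B_n` -/

theorem six_mul_choose_three (n : ℕ) : 6 * (n.choose 3 : ℤ) = n * (n - 1) * (n - 2) := by
  rw [← cast_descFactorial_three, Nat.descFactorial_eq_factorial_mul_choose]
  push_cast [Nat.factorial]
  ring

theorem choose_three_add_le (p q : ℕ) : p.choose 3 + q.choose 3 ≤ (p + q).choose 3 := by
  rw [Nat.add_choose_eq]
  calc p.choose 3 + q.choose 3
      = ∑ ij ∈ {(3, 0), (0, 3)}, p.choose ij.1 * q.choose ij.2 := by simp
    _ ≤ ∑ ij ∈ antidiagonal 3, p.choose ij.1 * q.choose ij.2 :=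
        sum_le_sum_of_subset (by decide)

theorem six_mul_choose_three_add_sub (p q : ℕ) :
    6 * (((p + q).choose 3 - p.choose 3 - q.choose 3 : ℕ) : ℤ) = 3 * (p * q) * (p + q - 2) := by
  rw [Nat.sub_sub, Nat.cast_sub (choose_three_add_le p q)]
  have hpq := six_mul_choose_three (p + q)
  push_cast at hpq ⊢
  linarith [six_mul_choose_three p, six_mul_choose_three q]

theorem six_mul_b (n : ℕ) :
    6 * (b n : ℤ) = 3 * ((n / 2 : ℕ) * ((n + 1) / 2 : ℕ)) * (n - 2) := by
  have hn : n / 2 + (n + 1) / 2 = n := by omega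
  have h := six_mul_choose_three_add_sub (n / 2) ((n + 1) / 2)
  rwa [hn, ← Nat.cast_add, hn] at h

theorem six_mul_b_two_mul (k : ℕ) : 6 * (b (2 * k) : ℤ) = 6 * k ^ 2 * (k - 1) := by
  rw [six_mul_b, show 2 * k / 2 = k by omega, show (2 * k + 1) / 2 = k by omega]
  push_cast
  ring

theorem six_mul_b_two_mul_add_one (k : ℕ) :
    6 * (b (2 * k + 1) : ℤ) = 3 * k * (k + 1) * (2 * k - 1) := by
  rw [six_mul_b, show (2 * k + 1) / 2 = k by omega, show (2 * k + 1 + 1) / 2 = k + 1 by omega]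
  push_cast
  ring

theorem six_mul_b_add_four (m : ℕ) :
    6 * (b (m + 4) : ℤ) = 6 * b m + 24 + 30 * m + 3 * linkBound m := by
  obtain ⟨k, rfl | rfl⟩ := m.even_or_odd'
  · rw [show 2 * k + 4 = 2 * (k + 2) by ring, six_mul_b_two_mul, six_mul_b_two_mul, linkBound,
      Nat.mul_mod_right]
    push_cast
    ring
  · rw [show 2 * k + 1 + 4 = 2 * (k + 2) + 1 by ring, six_mul_b_two_mul_add_one,
      six_mul_b_two_mul_add_one, linkBound, show (2 * k + 1) % 2 = 1 by omega]
    push_cast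
    ring

/-! ### Averaging over the embeddings of the Fano plane -/

theorem card_smul_sum_smul {G X M : Type*} [Group G] [Fintype G] [Fintype X] [MulAction G X]
    [MulAction.IsPretransitive G X] [AddCommMonoid M] (f : X → M) (x : X) :
    Fintype.card X • ∑ g : G, f (g • x) = Fintype.card G • ∑ y, f y := by
  have hconst : ∀ y : X, ∑ g : G, f (g • y) = ∑ g : G, f (g • x) := fun y => by
    obtain ⟨g, rfl⟩ := MulAction.exists_smul_eq G x y
    simpa only [Equiv.coe_mulRight, mul_smul] using
      Equiv.sum_comp (Equiv.mulRight g) fun h => f (h • x)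
  calc Fintype.card X • ∑ g : G, f (g • x) = ∑ y : X, ∑ g : G, f (g • y) := by
        simp [hconst]
    _ = ∑ g : G, ∑ y, f y := by
        rw [sum_comm]
        exact sum_congr rfl fun g _ => Equiv.sum_comp (MulAction.toPerm g) f
    _ = Fintype.card G • ∑ y, f y := by simp

/-- The lines of the Fano plane, numbered as in `ContainsFano`. -/
def fanoLine : Fin 7 → Fin 3 ↪ Fin 7 :=
  ![⟨![0, 1, 2], by decide⟩, ⟨![2, 3, 4], by decide⟩, ⟨![0, 4, 5], by decide⟩,
    ⟨![0, 3, 6], by decide⟩, ⟨![2, 5, 6], by decide⟩, ⟨![1, 4, 6], by decide⟩,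
    ⟨![1, 3, 5], by decide⟩]

section Fano

variable [DecidableEq V] {E : Finset (Finset V)} {S W : Finset V}

theorem not_forall_isEdge_fanoLine (hE : ¬ ContainsFano E) {v : Fin 7 → V}
    (hv : Function.Injective v) :
    ∃ l, ¬ IsEdge E (v (fanoLine l 0)) (v (fanoLine l 1)) (v (fanoLine l 2)) := by
  by_contra! h
  exact hE ⟨v, hv, (h 0).2.2.2, (h 1).2.2.2, (h 2).2.2.2, (h 3).2.2.2, (h 4).2.2.2,
    (h 5).2.2.2, (h 6).2.2.2⟩

theorem count_image_eq_sum_embedding {v : Fin 7 → V} (hv : Function.Injective v) :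
    count E (univ.image v) = ∑ f : Fin 3 ↪ Fin 7, edgeInd E (v (f 0)) (v (f 1)) (v (f 2)) := by
  simp only [count, degree, WeightedGraph.total, link_singleton, sum_image hv.injOn]
  simp only [← sum_product', univ_product_univ]
  symm
  refine sum_of_injOn (fun f => (f 0, f 1, f 2)) ?_ (fun _ _ => mem_univ _) ?_ fun _ _ => rfl
  · intro f _ g _ hfg
    simp only [Prod.mk.injEq] at hfg
    ext i
    fin_cases i <;> simp [hfg]
  · rintro ⟨i, j, k⟩ - hijk
    refine if_neg fun hE => hijk ?_
    have hij : i ≠ j := fun h => hE.1 (congrArg v h)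
    have hik : i ≠ k := fun h => hE.2.1 (congrArg v h)
    have hjk : j ≠ k := fun h => hE.2.2.1 (congrArg v h)
    exact ⟨⟨![i, j, k], List.nodup_ofFn.1 (by simp [hij, hik, hjk])⟩, mem_univ _, rfl⟩

theorem sum_perm_sum_fanoLine {v : Fin 7 → V} (hv : Function.Injective v) :
    ∑ g : Equiv.Perm (Fin 7), ∑ l, edgeInd E (v (g (fanoLine l 0))) (v (g (fanoLine l 1)))
      (v (g (fanoLine l 2))) = 168 * count E (univ.image v) := by
  have := Equiv.Perm.isMultiplyPretransitive (Fin 7) 3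
  have hline : ∀ l, ∑ g : Equiv.Perm (Fin 7), edgeInd E (v (g (fanoLine l 0)))
      (v (g (fanoLine l 1))) (v (g (fanoLine l 2))) = 24 * count E (univ.image v) := fun l => by
    have h := card_smul_sum_smul (G := Equiv.Perm (Fin 7))
      (fun f : Fin 3 ↪ Fin 7 => edgeInd E (v (f 0)) (v (f 1)) (v (f 2))) (fanoLine l)
    rw [← count_image_eq_sum_embedding hv, Fintype.card_embedding_eq, Fintype.card_perm,
      Fintype.card_fin, Fintype.card_fin] at h
    simp [Nat.descFactorial, Nat.factorial] at h
    omega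
  rw [sum_comm, sum_congr rfl fun l _ => hline l]
  simp
  ring

theorem sum_fanoLine_le (hE : ¬ ContainsFano E) {v : Fin 7 → V} (hv : Function.Injective v) :
    ∑ l, edgeInd E (v (fanoLine l 0)) (v (fanoLine l 1)) (v (fanoLine l 2)) ≤ 6 := by
  obtain ⟨l, hl⟩ := not_forall_isEdge_fanoLine hE hv
  have hrest := sum_le_card_nsmul (univ.erase l)
    (fun l => edgeInd E (v (fanoLine l 0)) (v (fanoLine l 1)) (v (fanoLine l 2))) 1
    fun _ _ => edgeInd_le_one
  rw [← add_sum_erase _ _ (mem_univ l), edgeInd, if_neg hl]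
  simpa using hrest

theorem exists_injective_image_eq (hW : #W = 7) :
    ∃ v : Fin 7 → V, Function.Injective v ∧ univ.image v = W := by
  refine ⟨fun i => (W.equivFinOfCardEq hW).symm i,
    Subtype.val_injective.comp (Equiv.injective _), ?_⟩
  ext x
  simp only [mem_image, mem_univ, true_and]
  exact ⟨fun ⟨i, hi⟩ => hi ▸ Subtype.property _,
    fun hx => ⟨W.equivFinOfCardEq hW ⟨x, hx⟩, by simp⟩⟩

theorem count_le_of_card_eq_seven (hE : ¬ ContainsFano E) (hW : #W = 7) : count E W ≤ 180 := by
  obtain ⟨v, hv, rfl⟩ := exists_injective_image_eq hW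
  have hle := sum_le_card_nsmul univ _ _ fun (g : Equiv.Perm (Fin 7)) _ =>
    sum_fanoLine_le hE (hv.comp g.injective)
  simp only [Function.comp_apply] at hle
  rw [sum_perm_sum_fanoLine hv, card_univ, Fintype.card_perm, Fintype.card_fin] at hle
  norm_num [Nat.factorial] at hle
  linarith

theorem isEdge_fanoLine_or (hE : ¬ ContainsFano E) {v : Fin 7 → V} (hv : Function.Injective v)
    (hcount : count E (univ.image v) = 180) {l m : Fin 7} (hlm : l ≠ m) :
    IsEdge E (v (fanoLine l 0)) (v (fanoLine l 1)) (v (fanoLine l 2)) ∨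
      IsEdge E (v (fanoLine m 0)) (v (fanoLine m 1)) (v (fanoLine m 2)) := by
  have hle : ∀ g ∈ (univ : Finset (Equiv.Perm (Fin 7))), ∑ l, edgeInd E (v (g (fanoLine l 0)))
      (v (g (fanoLine l 1))) (v (g (fanoLine l 2))) ≤ 6 := fun g _ =>
    sum_fanoLine_le hE (hv.comp g.injective)
  have htotal := sum_perm_sum_fanoLine (E := E) hv
  have hsix := (sum_eq_sum_iff_of_le hle).1 (by
    rw [htotal, hcount, sum_const, card_univ, Fintype.card_perm, Fintype.card_fin]
    norm_num [Nat.factorial]) 1 (mem_univ _)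
  simp only [Equiv.Perm.coe_one, id_eq] at hsix
  by_contra! h
  have hm : m ∈ univ.erase l := mem_erase.2 ⟨hlm.symm, mem_univ m⟩
  have hrest := sum_le_card_nsmul ((univ.erase l).erase m)
    (fun l => edgeInd E (v (fanoLine l 0)) (v (fanoLine l 1)) (v (fanoLine l 2))) 1
    fun _ _ => edgeInd_le_one
  rw [← add_sum_erase _ _ (mem_univ l), ← add_sum_erase _ _ hm, edgeInd, if_neg h.1, edgeInd,
    if_neg h.2] at hsix
  rw [card_erase_of_mem hm, card_erase_of_mem (mem_univ l)] at hrest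
  simp only [card_univ, Fintype.card_fin] at hrest
  norm_num at hrest
  linarith

theorem card_inter_ne_one (hE : ¬ ContainsFano E) (hW : #W = 7) (hcount : count E W = 180)
    {e f : Finset V} (he : e ∈ W.powersetCard 3) (hf : f ∈ W.powersetCard 3) (heE : e ∉ E)
    (hfE : f ∉ E) : #(e ∩ f) ≠ 1 := by
  intro hef
  rw [mem_powersetCard] at he hf
  obtain ⟨p, hp⟩ := card_eq_one.1 hef
  have hpe : p ∈ e := mem_of_mem_inter_left (hp.symm ▸ mem_singleton_self p)
  have hpf : p ∈ f := mem_of_mem_inter_right (hp.symm ▸ mem_singleton_self p)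
  obtain ⟨a, c, -, hac⟩ := card_eq_two.1 (show #(e.erase p) = 2 by rw [card_erase_of_mem hpe, he.2])
  obtain ⟨s, t, -, hst⟩ := card_eq_two.1 (show #(f.erase p) = 2 by rw [card_erase_of_mem hpf, hf.2])
  have hunion := card_union_add_card_inter e f
  have hsub : e ∪ f ⊆ W := union_subset he.1 hf.1
  obtain ⟨g, k, -, hgk⟩ := card_eq_two.1 (show #(W \ (e ∪ f)) = 2 by
    rw [card_sdiff_of_subset hsub]; omega)
  obtain rfl : e = {p, a, c} := by rw [← hac, insert_erase hpe]
  obtain rfl : f = {p, s, t} := by rw [← hst, insert_erase hpf]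
  have himage : univ.image ![p, a, c, g, s, t, k] = W := by
    rw [← union_sdiff_of_subset hsub, hgk]
    ext x
    simp [Fin.exists_fin_succ]
    tauto
  have hinj : Function.Injective ![p, a, c, g, s, t, k] := by
    rw [← Set.injOn_univ, ← coe_univ, ← card_image_iff, himage, hW, card_univ, Fintype.card_fin]
  rcases isEdge_fanoLine_or hE hinj (himage.symm ▸ hcount) (show (0 : Fin 7) ≠ 2 by decide)
    with h | h
  · exact heE h.2.2.2
  · exact hfE h.2.2.2

end Fano

/-! ### Links of cliques -/

section CliqueLink

variable [DecidableEq V] {E : Finset (Finset V)} {S W : Finset V} {x y z u : V}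

theorem exists_distinct_of_card {α : Type*} {A B C : Finset α} (hA : 0 < #A) (hB : 1 < #B)
    (hC : 2 < #C) : ∃ p ∈ A, ∃ q ∈ B, ∃ r ∈ C, p ≠ q ∧ p ≠ r ∧ q ≠ r := by
  classical
  obtain ⟨p, hp⟩ := card_pos.1 hA
  obtain ⟨q, hq, hqp⟩ := exists_mem_ne hB p
  obtain ⟨r, hr, hrpq⟩ := exists_mem_notMem_of_card_lt_card (card_le_two.trans_lt hC : #{p, q} < #C)
  simp only [mem_insert, mem_singleton, not_or] at hrpq
  exact ⟨p, hp, q, hq, r, hr, hqp.symm, Ne.symm hrpq.1, Ne.symm hrpq.2⟩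

theorem link_add_link_le :
    link E S x y + link E S z u ≤ #S + #{s ∈ S | IsEdge E s x y ∧ IsEdge E s z u} := by
  rw [card_filter, card_eq_sum_ones, link_apply, link_apply, ← sum_add_distrib]
  push_cast
  rw [← sum_add_distrib]
  refine sum_le_sum fun s _ => ?_
  by_cases hxy : IsEdge E s x y <;> by_cases hzu : IsEdge E s z u <;> simp [edgeInd, hxy, hzu]

theorem IsClique.matchingBounded (hE : ¬ ContainsFano E) (hS : IsClique E S) :
    (link E S).MatchingBounded #S W where
  weight_le _ _ _ _ := link_le_card
  matching_le x _ y _ z _ u _ := by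
    by_contra! hlt
    have hxyzu := link_add_link_le (E := E) (S := S) (x := x) (y := y) (z := z) (u := u)
    have hxzyu := link_add_link_le (E := E) (S := S) (x := x) (y := z) (z := y) (u := u)
    have hxuyz := link_add_link_le (E := E) (S := S) (x := x) (y := u) (z := y) (u := z)
    obtain ⟨p, hp, q, hq, r, hr, hpq, hpr, hqr⟩ := exists_distinct_of_card
      (A := {s ∈ S | IsEdge E s x y ∧ IsEdge E s z u})
      (B := {s ∈ S | IsEdge E s x z ∧ IsEdge E s y u})
      (C := {s ∈ S | IsEdge E s x u ∧ IsEdge E s y z}) (by omega) (by omega) (by omega)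
    obtain ⟨hpS, hpxy, hpzu⟩ := mem_filter.1 hp
    obtain ⟨hqS, hqxz, hqyu⟩ := mem_filter.1 hq
    obtain ⟨hrS, hrxu, hryz⟩ := mem_filter.1 hr
    have hinj : Function.Injective ![p, q, r, x, u, z, y] := List.nodup_ofFn.1 (by
      simp [hpq, hpr, hqr, hpxy.1, hpxy.2.1, hpxy.2.2.1, hpzu.1, hpzu.2.1, hqxz.1, hqxz.2.1,
        hqxz.2.2.1, hqyu.1, hqyu.2.1, hrxu.1, hrxu.2.1, hrxu.2.2.1, hryz.1, hryz.2.1,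
        hpzu.2.2.1.symm, hqyu.2.2.1.symm, hryz.2.2.1.symm])
    obtain ⟨l, hl⟩ := not_forall_isEdge_fanoLine hE hinj
    fin_cases l
    exacts [hl (hS.isEdge hpS hqS hrS hpq hpr hqr), hl hrxu, hl (isEdge_swap_right.1 hpzu), hl hpxy,
      hl (isEdge_swap_right.1 hryz), hl (isEdge_swap_right.1 hqyu), hl hqxz]

theorem IsClique.four_mul_total_link_le (hE : ¬ ContainsFano E) (hS : IsClique E S)
    (h4 : 4 ≤ #S) (hW : #W ≠ 3) : 4 * (link E S).total W ≤ #S * linkBound #W := by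
  have h := descFactorial_mul_le_of_sum_erase (f := fun A => (link E A).total W) (d := 1)
    (fun U => by simpa using sum_total_link_erase) (by omega) h4 fun Q hQ hQ4 => by
      have hbounded := (hS.mono hQ).matchingBounded (W := W) hE
      rw [hQ4] at hbounded
      exact hbounded.total_le_linkBound hW
  simpa using h

theorem IsClique.link_le_card_missingPairs_add (hE : ¬ ContainsFano E) (hS : IsClique E S)
    (hS5 : #S = 5) (hx : x ∉ S) (hy : y ∉ S) (hxy : x ≠ y) :
    link E S x y ≤ #(missingPairs E S x) + #(missingPairs E S y) := by
  have hyxS : y ∉ insert x S := by simp [hy, hxy.symm]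
  have hseven := count_le_of_card_eq_seven hE (W := insert y (insert x S))
    (by rw [card_insert_of_notMem hyxS, card_insert_of_notMem hx, hS5])
  have hdx := degree_add_two_mul_card_missingPairs (E := E) hx
  have hdy := degree_add_two_mul_card_missingPairs (E := E) hy
  rw [hS5] at hdx hdy
  rw [count_insert hyxS, degree_insert hx, count_insert hx, hS.count_eq, hS5] at hseven
  push_cast at hdx hdy hseven
  linarith

theorem CliqueFreeOn.one_le_card_missingPairs {k : ℕ} (hW : CliqueFreeOn E (k + 1) W)
    (hSW : S ⊆ W) (hS : IsClique E S) (hSk : #S = k) (hz : z ∈ W \ S) :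
    1 ≤ #(missingPairs E S z) := by
  obtain ⟨hzW, hzS⟩ := mem_sdiff.1 hz
  exact card_pos.2 (missingPairs_nonempty hS hzS
    (hW _ (insert_subset hzW hSW) (by rw [card_insert_of_notMem hzS, hSk])))

theorem CliqueFreeOn.descFactorial_mul_count_le {k : ℕ} (hW : CliqueFreeOn E k W) (hk : 3 ≤ k)
    (hkW : k ≤ #W) : k.descFactorial 3 * count E W
      ≤ (#W).descFactorial 3 * (k * (k - 1) * (k - 2) - 6) :=
  descFactorial_mul_le_of_sum_erase (fun _ => sum_count_erase) hk hkW fun Q hQ hQk => by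
    have h := count_add_six_le (hW Q hQ hQk)
    rw [hQk] at h
    linarith

theorem sum_degree_eq : ∑ z ∈ W \ S, degree E z S
    = #(W \ S) * (#S * (#S - 1)) - 2 * ∑ z ∈ W \ S, (#(missingPairs E S z) : ℤ) := by
  rw [sum_congr rfl fun z hz => eq_sub_of_add_eq
    (degree_add_two_mul_card_missingPairs (mem_sdiff.1 hz).2), sum_sub_distrib, mul_sum]
  simp

end CliqueLink

/-! ### Weighted graphs dominated by a vertex weighting -/

namespace WeightedGraph

variable {w : WeightedGraph V} {W : Finset V} {a : V → ℤ}

theorem six_mul_total_le_of_forall_card_four {p q r : ℤ} (h4 : 4 ≤ #W)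
    (hQ : ∀ Q ⊆ W, #Q = 4 → p * w.total Q ≤ 2 * (q * ∑ x ∈ Q, a x + r)) :
    6 * p * w.total W ≤ 4 * q * (#W - 1) * ∑ x ∈ W, a x + r * (#W * (#W - 1)) := by
  classical
  have herase : ∀ U : Finset V, ∑ v ∈ U, (3 * p * w.total (U.erase v)
      - 2 * q * (#(U.erase v) - 1) * ∑ x ∈ U.erase v, a x)
      = (#U - (2 : ℕ)) * (3 * p * w.total U - 2 * q * (#U - 1) * ∑ x ∈ U, a x) := by
    intro U
    have hterm : ∀ v ∈ U, 2 * q * (#(U.erase v) - 1 : ℤ) * ∑ x ∈ U.erase v, a x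
        = 2 * q * (#U - 2) * (∑ x ∈ U, a x - a v) := fun v hv => by
      rw [sum_erase_eq_sub hv, card_erase_of_mem hv, Nat.cast_pred (card_pos.2 ⟨v, hv⟩)]
      ring
    rw [sum_sub_distrib, ← mul_sum, w.sum_total_erase, sum_congr rfl hterm, ← mul_sum,
      sum_sub_distrib]
    simp only [sum_const, nsmul_eq_mul]
    push_cast
    ring
  have h := descFactorial_mul_le_of_sum_erase (d := 2)
    (f := fun U => 3 * p * w.total U - 2 * q * (#U - 1) * ∑ x ∈ U, a x) (c := 6 * r)
    herase (by norm_num) h4 fun Q hQW hQ4 => by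
      have := hQ Q hQW hQ4
      rw [hQ4]
      push_cast
      linarith
  rw [Nat.cast_descFactorial_two, Nat.cast_descFactorial_two] at h
  push_cast at h
  linarith

variable (h : w.MatchingBounded 5 W) (ha : ∀ x ∈ W, ∀ y ∈ W, x ≠ y → w x y ≤ a x + a y)

include h ha

theorem MatchingBounded.three_mul_total_le_and {Q : Finset V} (hQW : Q ⊆ W) (hQ : #Q = 4) :
    3 * w.total Q ≤ 2 * (4 * ∑ x ∈ Q, a x + 35) ∧
      (8 ≤ ∑ x ∈ Q, a x → w.total Q ≤ 2 * (2 * ∑ x ∈ Q, a x + 5)) := by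
  classical
  obtain ⟨x, y, z, u, hxy, hxz, hxu, hyz, hyu, hzu, rfl⟩ := card_eq_four.1 hQ
  simp only [insert_subset_iff, singleton_subset_iff] at hQW
  obtain ⟨hx, hy, hz, hu⟩ := hQW
  rw [w.total_quadruple hxy hxz hxu hyz hyu hzu, sum_insert (by simp [hxy, hxz, hxu]),
    sum_insert (by simp [hyz, hyu]), sum_pair hzu]
  have hxyzu := h.matching_le x hx y hy z hz u hu
  have hxzuy := h.matching_le x hx z hz u hu y hy
  have hxuyz := h.matching_le x hx u hu y hy z hz
  rw [w.comm u y, w.comm z y] at hxzuy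
  rw [w.comm u z, w.comm u y] at hxuyz
  have := h.weight_le x hx y hy
  have := ha x hx y hy hxy
  have := h.weight_le x hx z hz
  have := ha x hx z hz hxz
  have := h.weight_le x hx u hu
  have := ha x hx u hu hxu
  have := h.weight_le y hy z hz
  have := ha y hy z hz hyz
  have := h.weight_le y hy u hu
  have := ha y hy u hu hyu
  have := h.weight_le z hz u hu
  have := ha z hz u hu hzu
  omega

theorem MatchingBounded.eighteen_mul_total_le (h4 : 4 ≤ #W) :
    18 * w.total W ≤ 16 * (#W - 1) * ∑ x ∈ W, a x + 35 * (#W * (#W - 1)) := by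
  simpa using six_mul_total_le_of_forall_card_four (p := 3) (q := 4) h4 fun Q hQ hQ4 =>
    (h.three_mul_total_le_and ha hQ hQ4).1

theorem MatchingBounded.total_lt_of_card_eq_six (hW : #W = 6) (hsum : ∑ x ∈ W, a x = 14)
    (ha1 : ∀ x ∈ W, 1 ≤ a x) (h5 : ∀ A ⊆ W, #A = 5 → w.total A ≤ 80) : w.total W < 120 := by
  classical
  by_cases hlarge : ∀ x ∈ W, 2 ≤ a x
  · have htotal := six_mul_total_le_of_forall_card_four (w := w) (p := 1) (q := 2) (r := 5)
      (by omega : 4 ≤ #W) fun Q hQ hQ4 => by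
        have h8 := card_nsmul_le_sum Q a 2 fun x hx => hlarge x (hQ hx)
        rw [hQ4] at h8
        rw [one_mul]
        exact (h.three_mul_total_le_and ha hQ hQ4).2 (by simpa using h8)
    rw [hW, hsum] at htotal
    norm_num at htotal
    linarith
  · push Not at hlarge
    obtain ⟨v, hv, hv2⟩ := hlarge
    have hav : a v = 1 := le_antisymm (Int.lt_add_one_iff.1 hv2) (ha1 v hv)
    have hrest : ∑ y ∈ W.erase v, a y = 13 := by rw [sum_erase_eq_sub hv, hsum, hav]; norm_num
    have hcard : #(W.erase v) = 5 := by rw [card_erase_of_mem hv, hW]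
    have hstar : ∑ y ∈ W, w v y ≤ 18 := calc
      ∑ y ∈ W, w v y = ∑ y ∈ W.erase v, w v y := by rw [← add_sum_erase W _ hv, w.self, zero_add]
      _ ≤ ∑ y ∈ W.erase v, (a v + a y) := sum_le_sum fun y hy =>
          ha v hv y (mem_of_mem_erase hy) (ne_of_mem_erase hy).symm
      _ = 18 := by rw [sum_add_distrib, hrest, sum_const, hcard, hav]; norm_num
    linarith [w.total_eq_add_erase hv, h5 _ (erase_subset v W) hcard]

end WeightedGraph

/-! ### The extremal bound -/

section Extremal

variable [DecidableEq V] {E : Finset (Finset V)} {S W : Finset V}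

theorem exists_isClique_four (hW : 8 ≤ #W) (hb : 6 * (b #W : ℤ) ≤ count E W) :
    ∃ S ⊆ W, #S = 4 ∧ IsClique E S := by
  by_contra! hfree
  have hcount := CliqueFreeOn.descFactorial_mul_count_le (E := E) hfree (by norm_num) (by omega)
  have hcompare : 3 * ((#W : ℤ) * (#W - 1) * (#W - 2)) < 4 * (6 * b #W) := by
    obtain ⟨k, hk | hk⟩ := (#W).even_or_odd'
    · have hk4 : (4 : ℤ) ≤ k := by omega
      rw [hk, six_mul_b_two_mul]
      push_cast
      nlinarith [hk4]
    · have hk4 : (4 : ℤ) ≤ k := by omega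
      rw [hk, six_mul_b_two_mul_add_one]
      push_cast
      nlinarith [hk4]
  rw [cast_descFactorial_three, cast_descFactorial_three] at hcount
  norm_num at hcount
  linarith

theorem IsClique.count_add_sum_card_missingPairs_le (hE : ¬ ContainsFano E) (hS : IsClique E S)
    (hS4 : #S = 4) (hSW : S ⊆ W) (hW : #W ≠ 7) (hR : count E (W \ S) ≤ 6 * b #(W \ S)) :
    count E W + 6 * ∑ z ∈ W \ S, (#(missingPairs E S z) - 1 : ℤ) ≤ 6 * b #W := by
  have hcard : #(W \ S) + 4 = #W := by rw [← hS4, card_sdiff_add_card_eq_card hSW]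
  have hlink := hS.four_mul_total_link_le hE hS4.ge (W := W \ S) (by omega)
  have hb := six_mul_b_add_four #(W \ S)
  rw [hcard] at hb
  rw [count_eq_add_sdiff hSW, sum_degree_eq, hS.count_eq, sum_sub_distrib, hS4]
  simp only [sum_const, nsmul_eq_mul]
  rw [hS4] at hlink
  push_cast at hlink ⊢
  linarith

theorem IsClique.count_lt_of_card_eq_six (hE : ¬ ContainsFano E) (hS : IsClique E S) (hS6 : #S = 6)
    (hSW : S ⊆ W) {k : ℕ} (hk : 1 ≤ k) (hW : #W = 2 * k + 7)
    (hR : count E (W \ S) ≤ 6 * b (2 * k + 1) + 6) : count E W < 6 * b #W := by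
  have hcard : #(W \ S) = 2 * k + 1 := by rw [card_sdiff_of_subset hSW]; omega
  have hdegree : ∑ z ∈ W \ S, degree E z S ≤ 20 * (2 * k + 1) := by
    calc ∑ z ∈ W \ S, degree E z S ≤ ∑ _z ∈ W \ S, 20 := sum_le_sum fun z hz => by
          have hzS := (mem_sdiff.1 hz).2
          have hseven := count_le_of_card_eq_seven hE (W := insert z S)
            (by rw [card_insert_of_notMem hzS, hS6])
          rw [count_insert hzS, hS.count_eq, hS6] at hseven
          push_cast at hseven
          linarith
      _ = 20 * (2 * k + 1) := by rw [sum_const, hcard]; simp [mul_comm]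
  rw [six_mul_b_two_mul_add_one] at hR
  rw [count_eq_add_sdiff hSW, hS.count_eq, hS6, hW, show 2 * k + 7 = 2 * (k + 3) + 1 by ring,
    six_mul_b_two_mul_add_one]
  push_cast
  obtain rfl | hk2 := hk.eq_or_lt
  · have hlink := (link E S).total_le (W := W \ S) fun _ _ _ _ _ => link_le_card
    have hcount := count_le (E := E) (W := W \ S)
    rw [hcard] at hlink hcount
    rw [hS6] at hlink
    norm_num at hlink hcount hdegree ⊢
    linarith
  · have hlink := hS.four_mul_total_link_le hE (by omega) (W := W \ S) (by omega)
    rw [hS6, hcard, linkBound, show (2 * k + 1) % 2 = 1 by omega] at hlink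
    push_cast at hlink
    have : (2 : ℤ) ≤ k := by omega
    linarith

theorem IsClique.total_link_lt_of_card_eq_five (hE : ¬ ContainsFano E) (hS : IsClique E S)
    (hS5 : #S = 5) (hSW : S ⊆ W) (hfree : CliqueFreeOn E 6 W) (hW : #W = 11)
    (hsum : ∑ z ∈ W \ S, (#(missingPairs E S z) : ℤ) = 14) : (link E S).total (W \ S) < 120 := by
  have hbounded := hS.matchingBounded hE (W := W \ S)
  rw [hS5] at hbounded
  refine hbounded.total_lt_of_card_eq_six (fun x hx y hy => hS.link_le_card_missingPairs_add hE hS5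
    (mem_sdiff.1 hx).2 (mem_sdiff.1 hy).2) (by rw [card_sdiff_of_subset hSW]; omega) hsum
    (fun z hz => ?_) fun A _ hA => ?_
  · exact_mod_cast hfree.one_le_card_missingPairs hSW hS hS5 hz
  · have hlink := hS.four_mul_total_link_le hE (by omega) (W := A) (by omega)
    norm_num [hA, hS5, linkBound] at hlink
    linarith

theorem IsClique.count_lt_of_card_eq_five (hE : ¬ ContainsFano E) (hS : IsClique E S) (hS5 : #S = 5)
    (hSW : S ⊆ W) (hfree : CliqueFreeOn E 6 W) {k : ℕ} (hk : 2 ≤ k) (hW : #W = 2 * k + 5)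
    (hR : count E (W \ S) ≤ 6 * b (2 * k) + 6)
    (hR' : k ≠ 3 → count E (W \ S) ≤ 6 * b (2 * k)) : count E W < 6 * b #W := by
  have hcard : #(W \ S) = 2 * k := by rw [card_sdiff_of_subset hSW]; omega
  have hbounded := hS.matchingBounded hE (W := W \ S)
  rw [hS5] at hbounded
  have hlink := hS.four_mul_total_link_le hE (by omega) (W := W \ S) (by omega)
  have hlinkA := hbounded.eighteen_mul_total_le (fun x hx y hy =>
    hS.link_le_card_missingPairs_add hE hS5 (mem_sdiff.1 hx).2 (mem_sdiff.1 hy).2) (by omega)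
  have hexceptional := hS.total_link_lt_of_card_eq_five hE hS5 hSW hfree
  rw [six_mul_b_two_mul] at hR hR'
  rw [count_eq_add_sdiff hSW, hS.count_eq, sum_degree_eq, hS5, hcard, hW,
    show 2 * k + 5 = 2 * (k + 2) + 1 by ring, six_mul_b_two_mul_add_one]
  rw [hcard] at hlinkA
  rw [hS5, hcard, linkBound, Nat.mul_mod_right] at hlink
  push_cast at hlink hlinkA ⊢
  generalize ∑ z ∈ W \ S, (#(missingPairs E S z) : ℤ) = A at *
  have hk2 : (2 : ℤ) ≤ k := by exact_mod_cast hk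
  rcases lt_trichotomy A (4 * k + 2) with hA | hA | hA
  · nlinarith [mul_nonneg (by linarith : 0 ≤ 4 * k + 1 - A) (by linarith : 0 ≤ 32 * (k : ℤ) - 34)]
  · obtain rfl | hk3 := eq_or_ne k 3
    · have := hexceptional (by omega) hA
      norm_num at hR hA this ⊢
      linarith
    · linarith [hR' hk3]
  · linarith

theorem CliqueFreeOn.count_le_six_mul_b (hE : ¬ ContainsFano E) (hfree : CliqueFreeOn E 5 W)
    (hW : 4 ≤ #W) : count E W ≤ 6 * b #W := by
  induction W using Finset.strongInduction with
  | H W ih =>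
  obtain h4 | h7 | h8 | h56 : #W = 4 ∨ #W = 7 ∨ 8 ≤ #W ∨ 5 ≤ #W ∧ #W ≤ 6 := by omega
  · have hcount := count_le (E := E) (W := W)
    rw [h4] at hcount
    norm_num [h4, six_mul_b] at hcount ⊢
    exact hcount
  · have hcount := count_le_of_card_eq_seven hE h7
    norm_num [h7, six_mul_b]
    exact hcount
  · by_contra! hlt
    obtain ⟨S, hSW, hS4, hS⟩ := exists_isClique_four h8 hlt.le
    have hR := ih (W \ S) (sdiff_ssubset hSW (card_pos.1 (by omega))) (hfree.mono sdiff_subset)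
      (by rw [card_sdiff_of_subset hSW]; omega)
    have hmissing : 0 ≤ ∑ z ∈ W \ S, (#(missingPairs E S z) - 1 : ℤ) := sum_nonneg fun z hz => by
      have := hfree.one_le_card_missingPairs hSW hS hS4 hz
      omega
    linarith [hS.count_add_sum_card_missingPairs_le hE hS4 hSW (by omega) hR]
  · have hcount := hfree.descFactorial_mul_count_le (by norm_num) h56.1
    obtain h5 | h6 : #W = 5 ∨ #W = 6 := by omega
    · norm_num [h5, six_mul_b, cast_descFactorial_three] at hcount ⊢
      linarith
    · norm_num [h6, six_mul_b, cast_descFactorial_three] at hcount ⊢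
      linarith

theorem count_lt_of_not_cliqueFreeOn_five (hE : ¬ ContainsFano E) (hfree : ¬ CliqueFreeOn E 5 W)
    (h9 : 9 ≤ #W) (hodd : Odd #W) (ih : ∀ R ⊂ W, 7 ≤ #R → count E R ≤ 6 * b #R) :
    count E W < 6 * b #W := by
  by_cases hfree6 : CliqueFreeOn E 6 W
  · unfold CliqueFreeOn at hfree
    push Not at hfree
    obtain ⟨S, hSW, hS5, hS⟩ := hfree
    obtain ⟨k, hk⟩ : ∃ k, #W = 2 * k + 5 := by obtain ⟨m, hm⟩ := hodd; exact ⟨m - 2, by omega⟩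
    have hcard : #(W \ S) = 2 * k := by rw [card_sdiff_of_subset hSW]; omega
    have hbound : k ≠ 3 → count E (W \ S) ≤ 6 * b (2 * k) := fun hk3 => by
      obtain rfl | hk4 : k = 2 ∨ 4 ≤ k := by omega
      · have hcount := count_le (E := E) (W := W \ S)
        rw [hcard] at hcount
        norm_num [six_mul_b] at hcount ⊢
        exact hcount
      · rw [← hcard]
        exact ih _ (sdiff_ssubset hSW (card_pos.1 (by omega))) (by omega)
    refine hS.count_lt_of_card_eq_five hE hS5 hSW hfree6 (by omega) hk ?_ hbound
    obtain rfl | hk3 := eq_or_ne k 3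
    · have hcount := count_add_six_le (hfree6 _ sdiff_subset hcard)
      rw [hcard] at hcount
      norm_num [six_mul_b] at hcount ⊢
      linarith
    · linarith [hbound hk3]
  · unfold CliqueFreeOn at hfree6
    push Not at hfree6
    obtain ⟨S, hSW, hS6, hS⟩ := hfree6
    obtain ⟨k, hk⟩ : ∃ k, #W = 2 * k + 7 := by obtain ⟨m, hm⟩ := hodd; exact ⟨m - 3, by omega⟩
    have hcard : #(W \ S) = 2 * k + 1 := by rw [card_sdiff_of_subset hSW]; omega
    refine hS.count_lt_of_card_eq_six hE hS6 hSW (by omega) hk ?_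
    obtain hk2 | hk3 : (k = 1 ∨ k = 2) ∨ 3 ≤ k := by omega
    · have hcount := count_le (E := E) (W := W \ S)
      rw [hcard] at hcount
      obtain rfl | rfl := hk2 <;> norm_num [six_mul_b] at hcount ⊢ <;> linarith
    · rw [← hcard]
      linarith [ih _ (sdiff_ssubset hSW (card_pos.1 (by omega))) (by omega)]

theorem sum_six_mul_b_sub_count_erase (h0 : 0 < #W) (heven : Even #W) :
    ∑ v ∈ W, (6 * b (#W - 1) - count E (W.erase v) : ℤ)
      = (#W - 3) * (6 * b #W - count E W) := by
  obtain ⟨k, hk⟩ : ∃ k, #W = 2 * (k + 1) := by obtain ⟨m, hm⟩ := heven; exact ⟨m - 1, by omega⟩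
  rw [sum_sub_distrib, sum_count_erase, sum_const, hk, show 2 * (k + 1) - 1 = 2 * k + 1 by omega,
    six_mul_b_two_mul, six_mul_b_two_mul_add_one, nsmul_eq_mul]
  push_cast
  ring

theorem count_le_six_mul_b (hE : ¬ ContainsFano E) (h7 : 7 ≤ #W) : count E W ≤ 6 * b #W := by
  induction W using Finset.strongInduction with
  | H W ih =>
  by_cases hfree : CliqueFreeOn E 5 W
  · exact hfree.count_le_six_mul_b hE (by omega)
  · obtain heven | hodd := (#W).even_or_odd
    · have h8 : 8 ≤ #W := by obtain ⟨k, hk⟩ := heven; omega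
      have herase : 0 ≤ ∑ v ∈ W, (6 * b (#W - 1) - count E (W.erase v) : ℤ) :=
        sum_nonneg fun v hv => by
          have hcard := card_erase_of_mem hv
          have := ih _ (erase_ssubset hv) (by omega)
          rw [hcard] at this
          linarith
      rw [sum_six_mul_b_sub_count_erase (by omega) heven] at herase
      linarith [nonneg_of_mul_nonneg_right herase (by omega)]
    · obtain h7' | h9 : #W = 7 ∨ 9 ≤ #W := by obtain ⟨k, hk⟩ := hodd; omega
      · have hcount := count_le_of_card_eq_seven hE h7'
        norm_num [h7', six_mul_b]
        exact hcount
      · exact (count_lt_of_not_cliqueFreeOn_five hE hfree h9 hodd ih).le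

/-! ### Extremal hypergraphs contain no `5`-clique -/

theorem cliqueFreeOn_five_of_odd (hE : ¬ ContainsFano E) (h9 : 9 ≤ #W) (hodd : Odd #W)
    (hb : 6 * (b #W : ℤ) ≤ count E W) : CliqueFreeOn E 5 W := by
  by_contra hfree
  exact hb.not_gt (count_lt_of_not_cliqueFreeOn_five hE hfree h9 hodd fun R _ hR =>
    count_le_six_mul_b hE hR)

theorem count_erase_of_even (hE : ¬ ContainsFano E) (h8 : 8 ≤ #W) (heven : Even #W)
    (hb : 6 * (b #W : ℤ) ≤ count E W) {v : V} (hv : v ∈ W) :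
    count E (W.erase v) = 6 * b (#W - 1) := by
  have hnonneg : ∀ u ∈ W, 0 ≤ (6 * b (#W - 1) - count E (W.erase u) : ℤ) := fun u hu => by
    rw [← card_erase_of_mem hu, sub_nonneg]
    exact count_le_six_mul_b hE (by rw [card_erase_of_mem hu]; omega)
  have hsum : ∑ u ∈ W, (6 * b (#W - 1) - count E (W.erase u) : ℤ) = 0 := by
    rw [sum_six_mul_b_sub_count_erase (by omega) heven,
      (count_le_six_mul_b hE (by omega)).antisymm hb, sub_self, mul_zero]
  linarith [(sum_eq_zero_iff_of_nonneg hnonneg).1 hsum v hv]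

theorem two_le_card_missingPairs (hS : IsClique E S) (hS5 : #S = 5) (hSW : S ⊆ W)
    (hW : #W = 8) (hcount : count E W = 288) (herase : ∀ v ∈ W, count E (W.erase v) = 180) {z : V}
    (hz : z ∈ W \ S) : 2 ≤ #(missingPairs E S z) := by
  have hR : #(W \ S) = 3 := by rw [card_sdiff_of_subset hSW]; omega
  have hcountR := count_le (E := E) (W := W \ S)
  have hsum : count E W = 60 + 3 * ∑ v ∈ W \ S, degree E v S + 3 * (link E S).total (W \ S)
      + count E (W \ S) := by
    rw [count_eq_add_sdiff hSW, hS.count_eq, hS5]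
    norm_num
  have hsumErase : ∀ v ∈ W \ S, ∑ u ∈ W \ S, degree E u S - degree E v S
      + (link E S).total ((W \ S).erase v) = 40 := fun v hv => by
    obtain ⟨hvW, hvS⟩ := mem_sdiff.1 hv
    have hsub : S ⊆ W.erase v := subset_erase.2 ⟨hSW, hvS⟩
    have hcard : #((W \ S).erase v) = 2 := by rw [card_erase_of_mem hv, hR]
    have hpair := count_le (E := E) (W := (W \ S).erase v)
    have hpair0 : 0 ≤ count E ((W \ S).erase v) := by rw [count_eq_six_mul_card]; positivity
    have hv180 := herase v hvW
    rw [count_eq_add_sdiff hsub, erase_sdiff_comm, hS.count_eq, hS5, sum_erase_eq_sub hv] at hv180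
    rw [hcard] at hpair
    norm_num at hv180 hpair
    linarith
  have hdouble := sum_congr rfl hsumErase
  rw [sum_add_distrib, sum_sub_distrib, WeightedGraph.sum_total_erase] at hdouble
  have hlinkz : (link E S).total ((W \ S).erase z) ≤ 10 := by
    have hlink := (link E S).total_le (W := (W \ S).erase z) fun _ _ _ _ _ => link_le_card
    rw [card_erase_of_mem hz, hR, hS5] at hlink
    norm_num at hlink
    exact hlink
  have hdegree := degree_add_two_mul_card_missingPairs (E := E) (mem_sdiff.1 hz).2
  have hz40 := hsumErase z hz
  rw [hS5] at hdegree
  rw [hR] at hcountR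
  simp only [sum_const, hR] at hdouble
  norm_num at hdouble hcountR hdegree
  linarith

theorem eq_or_disjoint_of_card_inter_ne_one {e f : Finset V} (he : #e = 2)
    (hf : #f = 2) (hef : #(e ∩ f) ≠ 1) : e = f ∨ Disjoint e f := by
  rw [disjoint_iff_inter_eq_empty, ← card_eq_zero]
  have hle : #(e ∩ f) ≤ #e := card_le_card inter_subset_left
  obtain h0 | h2 : #(e ∩ f) = 0 ∨ #(e ∩ f) = 2 := by omega
  · exact Or.inr h0
  · rw [← eq_of_subset_of_card_le inter_subset_left (he.trans h2.symm).le]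
    exact Or.inl (eq_of_subset_of_card_le inter_subset_right (hf.trans h2.symm).le)

theorem eq_sdiff_union_of_card_inter_ne_one {e e' f : Finset V} (hS5 : #S = 5)
    (he : e ∈ S.powersetCard 2) (he' : e' ∈ S.powersetCard 2) (hf : f ∈ S.powersetCard 2)
    (hne : e ≠ e') (hee' : ¬ Disjoint e e') (hfe : #(f ∩ e) ≠ 1) (hfe' : #(f ∩ e') ≠ 1) :
    f = S \ (e ∪ e') := by
  rw [mem_powersetCard] at he he' hf
  have hdisj : Disjoint f e := by
    rcases eq_or_disjoint_of_card_inter_ne_one hf.2 he.2 hfe with rfl | h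
    · exact absurd (eq_or_disjoint_of_card_inter_ne_one hf.2 he'.2 hfe') (not_or.2 ⟨hne, hee'⟩)
    · exact h
  have hdisj' : Disjoint f e' := by
    rcases eq_or_disjoint_of_card_inter_ne_one hf.2 he'.2 hfe' with rfl | h
    · exact absurd (eq_or_disjoint_of_card_inter_ne_one hf.2 he.2 hfe)
        (not_or.2 ⟨hne.symm, fun h => hee' h.symm⟩)
    · exact h
  have hinter : #(e ∩ e') = 1 := by
    by_contra h
    exact not_or.2 ⟨hne, hee'⟩ (eq_or_disjoint_of_card_inter_ne_one he.2 he'.2 h)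
  have hunion := card_union_add_card_inter e e'
  refine eq_of_subset_of_card_le (subset_sdiff.2 ⟨hf.1, disjoint_union_right.2 ⟨hdisj, hdisj'⟩⟩) ?_
  rw [card_sdiff_of_subset (union_subset he.1 he'.1)]
  omega

theorem insert_mem_powersetCard_of_mem_missingPairs {e : Finset V} {z : V} (hSW : S ⊆ W)
    (hzW : z ∈ W) (hzS : z ∉ S) (he : e ∈ missingPairs E S z) : insert z e ∈ W.powersetCard 3 := by
  obtain ⟨heS, he2⟩ := mem_powersetCard.1 (mem_filter.1 he).1
  exact mem_powersetCard.2 ⟨insert_subset hzW (heS.trans hSW),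
    by rw [card_insert_of_notMem fun h => hzS (heS h), he2]⟩

theorem card_missingPairs_le_one_of_one_lt (hE : ¬ ContainsFano E) (hS5 : #S = 5) {x y : V}
    (hx : x ∉ S) (hy : y ∉ S) (hxy : x ≠ y) (hcount : count E (insert y (insert x S)) = 180)
    (h2 : 1 < #(missingPairs E S x)) : #(missingPairs E S y) ≤ 1 := by
  obtain ⟨e, he, e', he', hne⟩ := one_lt_card.1 h2
  have hSW : S ⊆ insert y (insert x S) := (subset_insert x S).trans (subset_insert y _)
  have hcard : #(insert y (insert x S)) = 7 := by
    rw [card_insert_of_notMem (by simp [hy, hxy.symm]), card_insert_of_notMem hx, hS5]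
  have hxpair : ∀ f ∈ missingPairs E S x, insert x f ∈ (insert y (insert x S)).powersetCard 3 :=
    fun f hf => insert_mem_powersetCard_of_mem_missingPairs hSW (by simp) hx hf
  have hypair : ∀ f ∈ missingPairs E S y, insert y f ∈ (insert y (insert x S)).powersetCard 3 :=
    fun f hf => insert_mem_powersetCard_of_mem_missingPairs hSW (by simp) hy hf
  have hsub : ∀ {z : V}, ∀ f ∈ missingPairs E S z, f ∈ S.powersetCard 2 := fun f hf =>
    (mem_filter.1 hf).1
  have hnot : ∀ {z : V}, ∀ f ∈ missingPairs E S z, insert z f ∉ E := fun f hf =>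
    (mem_filter.1 hf).2
  have hmeet : ¬ Disjoint e e' := fun h => by
    refine card_inter_ne_one hE hcard hcount (hxpair e he) (hxpair e' he') (hnot e he)
      (hnot e' he') ?_
    rw [← insert_inter_distrib, disjoint_iff_inter_eq_empty.1 h, insert_empty_eq, card_singleton]
  have hcross : ∀ g ∈ missingPairs E S x, ∀ f ∈ missingPairs E S y, #(f ∩ g) ≠ 1 :=
    fun g hg f hf => by
      have hxf : x ∉ insert y f := by
        rw [mem_insert, not_or]
        exact ⟨hxy, fun h => hx ((mem_powersetCard.1 (hsub f hf)).1 h)⟩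
      have hyg : y ∉ g := fun h => hy ((mem_powersetCard.1 (hsub g hg)).1 h)
      have h := card_inter_ne_one hE hcard hcount (hypair f hf) (hxpair g hg) (hnot f hf)
        (hnot g hg)
      rwa [inter_insert_of_notMem hxf, insert_inter_of_notMem hyg] at h
  have hunique : ∀ f ∈ missingPairs E S y, f = S \ (e ∪ e') := fun f hf =>
    eq_sdiff_union_of_card_inter_ne_one hS5 (hsub e he) (hsub e' he') (hsub f hf) hne hmeet
      (hcross e he f hf) (hcross e' he' f hf)
  exact card_le_one.2 fun f hf g hg => (hunique f hf).trans (hunique g hg).symm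

theorem cliqueFreeOn_five_of_card_eq_eight (hE : ¬ ContainsFano E) (hW : #W = 8)
    (hb : 6 * (b #W : ℤ) ≤ count E W) : CliqueFreeOn E 5 W := by
  intro S hSW hS5 hS
  have hcount : count E W = 288 := by
    rw [(count_le_six_mul_b hE (by omega)).antisymm hb, hW, six_mul_b]
    norm_num
  have herase : ∀ v ∈ W, count E (W.erase v) = 180 := fun v hv => by
    rw [count_erase_of_even hE hW.ge (by rw [hW]; decide) hb hv, hW, six_mul_b]
    norm_num
  have hR : #(W \ S) = 3 := by rw [card_sdiff_of_subset hSW]; omega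
  have htwo : ∀ z ∈ W \ S, 2 ≤ #(missingPairs E S z) := fun z =>
    two_le_card_missingPairs hS hS5 hSW hW hcount herase
  obtain ⟨x, y, z, hxy, hxz, hyz, hxyz⟩ := card_eq_three.1 hR
  have hx : x ∈ W \ S := by simp [hxyz]
  have hy : y ∈ W \ S := by simp [hxyz]
  have hz : z ∈ W \ S := by simp [hxyz]
  have herasez : W.erase z = insert y (insert x S) := by
    rw [← union_sdiff_of_subset hSW, hxyz]
    ext v
    have hzS := (mem_sdiff.1 hz).2
    simp only [mem_erase, mem_union, mem_insert, mem_singleton]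
    grind
  have hle := card_missingPairs_le_one_of_one_lt hE hS5 (mem_sdiff.1 hx).2 (mem_sdiff.1 hy).2 hxy
    (herasez ▸ herase z (mem_sdiff.1 hz).1) (htwo x hx)
  exact absurd (htwo y hy) (by omega)

theorem cliqueFreeOn_five (hE : ¬ ContainsFano E) (h8 : 8 ≤ #W)
    (hb : 6 * (b #W : ℤ) ≤ count E W) : CliqueFreeOn E 5 W := by
  obtain heven | hodd := (#W).even_or_odd
  · obtain hW | h10 : #W = 8 ∨ 10 ≤ #W := by obtain ⟨k, hk⟩ := heven; omega
    · exact cliqueFreeOn_five_of_card_eq_eight hE hW hb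
    · intro S hSW hS5
      obtain ⟨v, hvW, hvS⟩ := exists_mem_notMem_of_card_lt_card (by omega : #S < #W)
      have hcard := card_erase_of_mem hvW
      have hodd : Odd #(W.erase v) := by
        rw [hcard]
        exact Nat.Even.sub_odd (by omega) heven odd_one
      refine cliqueFreeOn_five_of_odd hE (by omega) hodd ?_ S (subset_erase.2 ⟨hSW, hvS⟩) hS5
      rw [hcard, count_erase_of_even hE h8 heven hb hvW]
  · exact cliqueFreeOn_five_of_odd hE (by obtain ⟨k, hk⟩ := hodd; omega) hodd hb

theorem IsClique.card_missingPairs_eq_one (hE : ¬ ContainsFano E) (h8 : 8 ≤ #W)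
    (hb : 6 * (b #W : ℤ) ≤ count E W) (hS : IsClique E S) (hS4 : #S = 4) (hSW : S ⊆ W) {z : V}
    (hz : z ∈ W \ S) : #(missingPairs E S z) = 1 := by
  have hfree := cliqueFreeOn_five hE h8 hb
  have hR := (hfree.mono sdiff_subset).count_le_six_mul_b hE (W := W \ S)
    (by rw [card_sdiff_of_subset hSW]; omega)
  have hle := hS.count_add_sum_card_missingPairs_le hE hS4 hSW (by omega) hR
  have hnonneg : ∀ z ∈ W \ S, 0 ≤ (#(missingPairs E S z) - 1 : ℤ) := fun z hz => by
    have := hfree.one_le_card_missingPairs hSW hS hS4 hz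
    omega
  have hzero := (sum_eq_zero_iff_of_nonneg hnonneg).1
    (le_antisymm (by linarith) (sum_nonneg hnonneg)) z hz
  omega

end Extremal

/-! ### The partition -/

section Partition

variable [DecidableEq V] {E : Finset (Finset V)} {S W : Finset V} {x y z u v v' : V}

theorem pair_mem_missingPairs (hx : x ∈ S) (hy : y ∈ S) (hv : v ∉ S) (hxy : x ≠ y) :
    {x, y} ∈ missingPairs E S v ↔ ¬ IsEdge E x y v := by
  have hxv : x ≠ v := fun h => hv (h ▸ hx)
  have hyv : y ≠ v := fun h => hv (h ▸ hy)
  have hmem : ({x, y} : Finset V) ∈ S.powersetCard 2 :=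
    mem_powersetCard.2 ⟨by simp [insert_subset_iff, hx, hy], card_pair hxy⟩
  rw [missingPairs, mem_filter, and_iff_right hmem, isEdge_swap_right, isEdge_swap_left]
  simp [IsEdge, hxv.symm, hyv.symm, hxy]

variable (E W) in
/-- `x`, `y`, `z`, `u` are the vertices of a `4`-clique in `W`. -/
structure IsTetrahedron (x y z u : V) : Prop where
  subset : {x, y, z, u} ⊆ W
  xyz : IsEdge E x y z
  xyu : IsEdge E x y u
  xzu : IsEdge E x z u
  yzu : IsEdge E y z u

variable (E W) in
/-- Every vertex of `W` outside a `4`-clique in `W` misses exactly one pair of it. In `B_n` this is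
the pair in the part of the vertex. -/
def UniqueMissingPairs : Prop :=
  ∀ S ⊆ W, #S = 4 → IsClique E S → ∀ z ∈ W \ S, #(missingPairs E S z) = 1

namespace IsTetrahedron

variable (h : IsTetrahedron E W x y z u)
include h

theorem swap₁₂ : IsTetrahedron E W y x z u where
  subset := by rw [insert_comm]; exact h.subset
  xyz := isEdge_swap_left.1 h.xyz
  xyu := isEdge_swap_left.1 h.xyu
  xzu := h.yzu
  yzu := h.xzu

theorem swap₂₃ : IsTetrahedron E W x z y u where
  subset := by rw [insert_comm z]; exact h.subset
  xyz := isEdge_swap_right.1 h.xyz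
  xyu := h.xzu
  xzu := h.xyu
  yzu := isEdge_swap_left.1 h.yzu

theorem swap₃₄ : IsTetrahedron E W x y u z where
  subset := by rw [pair_comm]; exact h.subset
  xyz := h.xyu
  xyu := h.xyz
  xzu := isEdge_swap_right.1 h.xzu
  yzu := isEdge_swap_right.1 h.yzu

theorem swap_pairs : IsTetrahedron E W z u x y := h.swap₂₃.swap₁₂.swap₃₄.swap₂₃

theorem mem₁ : x ∈ W := h.subset (by simp)
theorem mem₂ : y ∈ W := h.swap₁₂.mem₁
theorem mem₃ : z ∈ W := h.swap₂₃.mem₂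
theorem mem₄ : u ∈ W := h.swap₃₄.mem₃

theorem card_eq : #{x, y, z, u} = 4 := by
  obtain ⟨hxy, hxz, hyz, -⟩ := h.xyz
  obtain ⟨-, hxu, hyu, -⟩ := h.xyu
  have hzu := h.xzu.2.2.1
  rw [card_insert_of_notMem (by simp [*]), card_eq_three.2 ⟨y, z, u, hyz, hyu, hzu, rfl⟩]

theorem isClique : IsClique E {x, y, z, u} := by
  intro e he
  obtain ⟨hsub, he3⟩ := mem_powersetCard.1 he
  obtain ⟨v, hv, hve⟩ := exists_mem_notMem_of_card_lt_card (he3.trans_lt (by rw [h.card_eq]; simp))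
  have heq : e = ({x, y, z, u} : Finset V).erase v := eq_of_subset_of_card_le
    (subset_erase.2 ⟨hsub, hve⟩) (by rw [card_erase_of_mem hv, h.card_eq, he3])
  obtain ⟨hxy, hxz, hyz, hxyz⟩ := h.xyz
  obtain ⟨-, hxu, hyu, hxyu⟩ := h.xyu
  obtain ⟨-, -, hzu, hxzu⟩ := h.xzu
  have hyzu := h.yzu.2.2.2
  simp only [mem_insert, mem_singleton] at hv
  rcases hv with rfl | rfl | rfl | rfl
  · convert hyzu using 1; grind
  · convert hxzu using 1; grind
  · convert hxyu using 1; grind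
  · convert hxyz using 1; grind

variable (hW : UniqueMissingPairs E W) (hv : v ∈ W)
include hW hv

theorem isEdge_of_not_isEdge (hvx : v ≠ x) (hvy : v ≠ y) (hxyv : ¬ IsEdge E x y v) :
    IsEdge E x z v ∧ IsEdge E x u v ∧ IsEdge E y z v ∧ IsEdge E y u v ∧ IsEdge E z u v := by
  have hvS : v ∉ ({x, y, z, u} : Finset V) := by
    simp only [mem_insert, mem_singleton]
    rintro (rfl | rfl | rfl | rfl)
    exacts [hvx rfl, hvy rfl, hxyv h.xyz, hxyv h.xyu]
  have hone := card_le_one.1 (hW _ h.subset h.card_eq h.isClique v (mem_sdiff.2 ⟨hv, hvS⟩)).le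
  obtain ⟨hxy, hxz, hyz, -⟩ := h.xyz
  obtain ⟨-, hxu, hyu, -⟩ := h.xyu
  have hzu := h.xzu.2.2.1
  have hedge : ∀ p ∈ ({x, y, z, u} : Finset V), ∀ q ∈ ({z, u} : Finset V), p ≠ q →
      IsEdge E p q v := fun p hp q hq hpq => by
    by_contra hpqv
    have hpair := hone _ ((pair_mem_missingPairs (by simp) (by simp) hvS hxy).2 hxyv) _
      ((pair_mem_missingPairs hp (by aesop) hvS hpq).2 hpqv)
    have hqxy : q ∈ ({x, y} : Finset V) := hpair ▸ by simp
    grind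
  exact ⟨hedge _ (by simp) _ (by simp) hxz, hedge _ (by simp) _ (by simp) hxu,
    hedge _ (by simp) _ (by simp) hyz, hedge _ (by simp) _ (by simp) hyu,
    hedge _ (by simp) _ (by simp) hzu⟩

theorem not_forall_isEdge : ¬ (IsEdge E x y v ∧ IsEdge E x z v ∧ IsEdge E x u v ∧
    IsEdge E y z v ∧ IsEdge E y u v ∧ IsEdge E z u v) := by
  rintro ⟨hxyv, hxzv, hxuv, hyzv, hyuv, hzuv⟩
  have hvS : v ∉ ({x, y, z, u} : Finset V) := by
    simp [hxyv.2.1.symm, hxyv.2.2.1.symm, hzuv.2.1.symm, hzuv.2.2.1.symm]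
  have hone := hW _ h.subset h.card_eq h.isClique v (mem_sdiff.2 ⟨hv, hvS⟩)
  obtain ⟨e, he⟩ := card_pos.1 (hone.symm ▸ one_pos)
  obtain ⟨hsub, he2⟩ := mem_powersetCard.1 (mem_filter.1 he).1
  obtain ⟨p, q, hpq, rfl⟩ := card_eq_two.1 he2
  have hp : p ∈ ({x, y, z, u} : Finset V) := hsub (by simp)
  have hq : q ∈ ({x, y, z, u} : Finset V) := hsub (by simp)
  have hpqv := (pair_mem_missingPairs hp hq hvS hpq).1 he
  simp only [mem_insert, mem_singleton] at hp hq
  rcases hp with rfl | rfl | rfl | rfl <;> rcases hq with rfl | rfl | rfl | rfl <;>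
    first | exact hpq rfl | exact hpqv ‹_› | exact hpqv (isEdge_swap_left.1 ‹_›)

theorem replace (hvx : v ≠ x) (hvy : v ≠ y) (hxyv : ¬ IsEdge E x y v) :
    IsTetrahedron E W x v z u := by
  obtain ⟨hxzv, hxuv, -, -, hzuv⟩ := h.isEdge_of_not_isEdge hW hv hvx hvy hxyv
  exact {
    subset := by grind [h.subset]
    xyz := isEdge_swap_right.1 hxzv
    xyu := isEdge_swap_right.1 hxuv
    xzu := h.xzu
    yzu := isEdge_swap_left.1 (isEdge_swap_right.1 hzuv) }

variable (hv' : v' ∈ W)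
include hv'

theorem isEdge_of_adjacent_not_isEdge (hvx : v ≠ x) (hvy : v ≠ y) (hxyv : ¬ IsEdge E x y v)
    (hv'x : v' ≠ x) (hv'z : v' ≠ z) : IsEdge E x z v' := by
  by_contra hxzv'
  obtain ⟨-, hxuv', hzyv', hzuv', hyuv'⟩ :=
    h.swap₂₃.isEdge_of_not_isEdge hW hv' hv'x hv'z hxzv'
  have hxv := h.replace hW hv hvx hvy hxyv
  have hyv := h.swap₁₂.replace hW hv hvy hvx fun h => hxyv (isEdge_swap_left.1 h)
  obtain ⟨hxvv', -, hzvv', -, hvuv'⟩ :=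
    hxv.swap₂₃.isEdge_of_not_isEdge hW hv' hv'x hv'z hxzv'
  have hxvv'u : IsTetrahedron E W x v v' u := {
    subset := by grind [hxv.subset]
    xyz := hxvv'
    xyu := hxv.xyu
    xzu := isEdge_swap_right.1 hxuv'
    yzu := isEdge_swap_right.1 hvuv' }
  obtain ⟨-, -, hvv'y, -⟩ := hxvv'u.isEdge_of_not_isEdge hW h.mem₂ h.xyz.1.symm hvy.symm
    fun h => hxyv (isEdge_swap_right.1 h)
  exact hyv.not_forall_isEdge hW hv' ⟨isEdge_swap_left.1 (isEdge_swap_right.1 hvv'y),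
    isEdge_swap_left.1 hzyv', hyuv', isEdge_swap_left.1 hzvv', hvuv', hzuv'⟩

theorem not_isEdge_of_not_isEdge (hxyv : ¬ IsEdge E x y v) (hxyv' : ¬ IsEdge E x y v') :
    ¬ IsEdge E x v v' := by
  intro hxvv'
  have hvx : v ≠ x := hxvv'.1.symm
  have hv'x : v' ≠ x := hxvv'.2.1.symm
  have hvy : v ≠ y := by rintro rfl; exact hxyv' hxvv'
  have hv'y : v' ≠ y := by rintro rfl; exact hxyv (isEdge_swap_right.1 hxvv')
  have hxv := h.replace hW hv hvx hvy hxyv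
  have hxv' := h.replace hW hv' hv'x hv'y hxyv'
  have hnot : ∀ w ∈ W, IsEdge E x v w → IsEdge E x v' w → ¬ IsEdge E v w v' :=
    fun w hw hxvw hxv'w hvwv' => by
      have hxvv'w : IsTetrahedron E W x v v' w :=
        ⟨by grind [h.mem₁], hxvv', hxvw, hxv'w, isEdge_swap_right.1 hvwv'⟩
      obtain ⟨hxv'y, -⟩ := hxvv'w.isEdge_of_not_isEdge hW h.mem₂ h.xyz.1.symm hvy.symm
        fun h => hxyv (isEdge_swap_right.1 h)
      exact hxyv' (isEdge_swap_right.1 hxv'y)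
  have hvzv' := hnot z h.mem₃ hxv.xyz hxv'.xyz
  obtain ⟨-, hvuv', -⟩ := hxv.swap₁₂.swap₂₃.isEdge_of_not_isEdge hW hv' hxvv'.2.2.1.symm
    (by rintro rfl; exact hxyv' h.xyz) hvzv'
  exact hnot u h.mem₄ hxv.xyu hxv'.xyu hvuv'

omit hv hv'

theorem disjoint_powersetCard_filter_not_isEdge :
    Disjoint ({v ∈ W | ¬ IsEdge E x y v}.powersetCard 3) E := by
  have hx : ∀ p ∈ W, ∀ q ∈ W, ¬ IsEdge E x y p → ¬ IsEdge E x y q → ¬ IsEdge E x p q :=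
    fun p hp q hq => h.not_isEdge_of_not_isEdge hW hp hq
  have hy : ∀ p ∈ W, ∀ q ∈ W, ¬ IsEdge E x y p → ¬ IsEdge E x y q → ¬ IsEdge E y p q :=
    fun p hp q hq => by
      rw [isEdge_swap_left, isEdge_swap_left (x := x)]
      exact h.swap₁₂.not_isEdge_of_not_isEdge hW hp hq
  rw [disjoint_left]
  intro e he heE
  obtain ⟨hsub, he3⟩ := mem_powersetCard.1 he
  obtain ⟨p, q, r, hpq, hpr, hqr, rfl⟩ := card_eq_three.1 he3
  have hpqr : IsEdge E p q r := ⟨hpq, hpr, hqr, heE⟩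
  simp only [insert_subset_iff, singleton_subset_iff, mem_filter] at hsub
  obtain ⟨⟨hp, hxyp⟩, ⟨hq, hxyq⟩, hr, hxyr⟩ := hsub
  obtain rfl | hpx := eq_or_ne p x
  · exact hx q hq r hr hxyq hxyr hpqr
  obtain rfl | hpy := eq_or_ne p y
  · exact hy q hq r hr hxyq hxyr hpqr
  refine (h.replace hW hp hpx hpy hxyp).swap₁₂.not_isEdge_of_not_isEdge hW hq hr ?_ ?_ hpqr
  · rw [isEdge_swap_left]; exact hx p hp q hq hxyp hxyq
  · rw [isEdge_swap_left]; exact hx p hp r hr hxyp hxyr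

theorem isEdge_iff_not_isEdge (hv : v ∈ W) (hvx : v ≠ x) (hvy : v ≠ y) (hxyv : ¬ IsEdge E x y v)
    (hv' : v' ∈ W) : IsEdge E x y v' ↔ ¬ IsEdge E z u v' := by
  have hyxv : ¬ IsEdge E y x v := fun h => hxyv (isEdge_swap_left.1 h)
  constructor
  · intro hxyv' hzuv'
    have hv'x := hxyv'.2.1.symm
    have hv'y := hxyv'.2.2.1.symm
    have hv'z := hzuv'.2.1.symm
    have hv'u := hzuv'.2.2.1.symm
    exact h.not_forall_isEdge hW hv' ⟨hxyv',
      h.isEdge_of_adjacent_not_isEdge hW hv hv' hvx hvy hxyv hv'x hv'z,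
      h.swap₃₄.isEdge_of_adjacent_not_isEdge hW hv hv' hvx hvy hxyv hv'x hv'u,
      h.swap₁₂.isEdge_of_adjacent_not_isEdge hW hv hv' hvy hvx hyxv hv'y hv'z,
      h.swap₁₂.swap₃₄.isEdge_of_adjacent_not_isEdge hW hv hv' hvy hvx hyxv hv'y hv'u, hzuv'⟩
  · intro hzuv'
    obtain rfl | hv'z := eq_or_ne v' z
    · exact h.xyz
    obtain rfl | hv'u := eq_or_ne v' u
    · exact h.xyu
    exact (h.swap_pairs.isEdge_of_not_isEdge hW hv' hv'z hv'u hzuv').2.2.2.2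

end IsTetrahedron

theorem UniqueMissingPairs.exists_partition (hW : UniqueMissingPairs E W) (hSW : S ⊆ W)
    (hS4 : #S = 4) (hS : IsClique E S) (hv : v ∈ W \ S) :
    ∃ P ⊆ W, Disjoint (P.powersetCard 3) E ∧ Disjoint ((W \ P).powersetCard 3) E := by
  obtain ⟨hvW, hvS⟩ := mem_sdiff.1 hv
  obtain ⟨e, he⟩ := card_pos.1 ((hW S hSW hS4 hS v hv).symm ▸ one_pos)
  obtain ⟨heS, he2⟩ := mem_powersetCard.1 (mem_filter.1 he).1
  obtain ⟨x, y, hxy, rfl⟩ := card_eq_two.1 he2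
  obtain ⟨z, u, hzu, hSe⟩ := card_eq_two.1
    (show #(S \ {x, y}) = 2 by rw [card_sdiff_of_subset heS, hS4, he2])
  have hx : x ∈ S := heS (by simp)
  have hy : y ∈ S := heS (by simp)
  obtain ⟨hz, hzxy⟩ := mem_sdiff.1 (show z ∈ S \ {x, y} by simp [hSe])
  obtain ⟨hu, huxy⟩ := mem_sdiff.1 (show u ∈ S \ {x, y} by simp [hSe])
  simp only [mem_insert, mem_singleton, not_or] at hzxy huxy
  have htetra : IsTetrahedron E W x y z u := {
    subset := by simp [insert_subset_iff, hSW hx, hSW hy, hSW hz, hSW hu]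
    xyz := hS.isEdge hx hy hz hxy (Ne.symm hzxy.1) (Ne.symm hzxy.2)
    xyu := hS.isEdge hx hy hu hxy (Ne.symm huxy.1) (Ne.symm huxy.2)
    xzu := hS.isEdge hx hz hu (Ne.symm hzxy.1) (Ne.symm huxy.1) hzu
    yzu := hS.isEdge hy hz hu (Ne.symm hzxy.2) (Ne.symm huxy.2) hzu }
  have hxyv := (pair_mem_missingPairs hx hy hvS hxy).1 he
  refine ⟨{w ∈ W | ¬ IsEdge E x y w}, filter_subset _ _,
    htetra.disjoint_powersetCard_filter_not_isEdge hW, ?_⟩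
  have hsdiff : W \ {w ∈ W | ¬ IsEdge E x y w} = {w ∈ W | ¬ IsEdge E z u w} := by
    rw [filter_not, Finset.sdiff_sdiff_eq_self (filter_subset _ _)]
    exact filter_congr fun w => htetra.isEdge_iff_not_isEdge hW hvW
      (fun h => hvS (h ▸ hx)) (fun h => hvS (h ▸ hy)) hxyv
  rw [hsdiff]
  exact htetra.swap_pairs.disjoint_powersetCard_filter_not_isEdge hW

theorem exists_partition (hE : ¬ ContainsFano E) (h8 : 8 ≤ #W)
    (hb : 6 * (b #W : ℤ) ≤ count E W) :
    ∃ P ⊆ W, Disjoint (P.powersetCard 3) E ∧ Disjoint ((W \ P).powersetCard 3) E := by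
  obtain ⟨S, hSW, hS4, hS⟩ := exists_isClique_four h8 hb
  obtain ⟨v, hvW, hvS⟩ := exists_mem_notMem_of_card_lt_card (by omega : #S < #W)
  have hunique : UniqueMissingPairs E W := fun T hTW hT4 hT z hz =>
    hT.card_missingPairs_eq_one hE h8 hb hT4 hTW hz
  exact hunique.exists_partition hSW hS4 hS (mem_sdiff.2 ⟨hvW, hvS⟩)

end Partition

/-! ### Complete bipartite hypergraphs -/

theorem eight_mul_b_add (p q : ℕ) :
    8 * (b (p + q) : ℤ) + ((p + q) % 2 : ℕ) * (p + q - 2) =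
      8 * ((p + q).choose 3 - p.choose 3 - q.choose 3 : ℕ) + (p - q) ^ 2 * (p + q - 2) := by
  have hbip : 8 * (((p + q).choose 3 - p.choose 3 - q.choose 3 : ℕ) : ℤ) =
      4 * (p * q) * (p + q - 2) := by linarith [six_mul_choose_three_add_sub p q]
  have hb : 8 * (b (p + q) : ℤ) = ((p + q) ^ 2 - ((p + q) % 2 : ℕ)) * (p + q - 2) := by
    obtain ⟨k, hk | hk⟩ := (p + q).even_or_odd'
    · have hb := six_mul_b_two_mul k
      rw [← Nat.cast_add, hk, Nat.mul_mod_right]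
      push_cast
      linarith
    · have hb := six_mul_b_two_mul_add_one k
      rw [← Nat.cast_add, hk, show (2 * k + 1) % 2 = 1 by omega]
      push_cast
      linarith
  linear_combination hb - hbip

theorem choose_three_sub_le_b {p q : ℕ} (hpq : 2 ≤ p + q) :
    (p + q).choose 3 - p.choose 3 - q.choose 3 ≤ b (p + q) := by
  have hparity : (((p + q) % 2 : ℕ) : ℤ) ≤ (p - q) ^ 2 := by
    obtain h | h := Nat.mod_two_eq_zero_or_one (p + q)
    · rw [h]
      exact sq_nonneg _
    · rw [h, Nat.cast_one, one_le_sq_iff_one_le_abs]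
      exact Int.one_le_abs (by omega)
  have hnonneg : (0 : ℤ) ≤ p + q - 2 := by omega
  have hmul := mul_le_mul_of_nonneg_right hparity hnonneg
  zify
  linarith [eight_mul_b_add p q]

theorem natAbs_sub_le_one_of_b_le {p q : ℕ} (hpq : 3 ≤ p + q)
    (hb : b (p + q) ≤ (p + q).choose 3 - p.choose 3 - q.choose 3) :
    ((p : ℤ) - q).natAbs ≤ 1 := by
  have hpos : (0 : ℤ) < p + q - 2 := by omega
  have hsq : ((p : ℤ) - q) ^ 2 ≤ ((p + q) % 2 : ℕ) :=
    le_of_mul_le_mul_right (by zify at hb; linarith [eight_mul_b_add p q]) hpos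
  have habs := (sq_le_one_iff_abs_le_one _).1 (hsq.trans (by omega))
  rw [Int.abs_eq_natAbs] at habs
  exact_mod_cast habs

section CompleteBipartite

variable [Fintype V] [DecidableEq V] {E : Finset (Finset V)} {X : Finset V}

/-- The complete bipartite `3`-uniform hypergraph with parts `X` and `Xᶜ`. -/
def completeBipartite (X : Finset V) : Finset (Finset V) :=
  univ.powersetCard 3 \ (X.powersetCard 3 ∪ Xᶜ.powersetCard 3)

theorem mem_completeBipartite {e : Finset V} :
    e ∈ completeBipartite X ↔ #e = 3 ∧ (e ∩ X).Nonempty ∧ (e ∩ Xᶜ).Nonempty := by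
  have hX : (e ∩ X).Nonempty ↔ ¬ e ⊆ Xᶜ := by
    rw [subset_compl_iff_disjoint_right, not_disjoint_iff_nonempty_inter]
  have hXc : (e ∩ Xᶜ).Nonempty ↔ ¬ e ⊆ X := by
    rw [← compl_compl X, subset_compl_iff_disjoint_right, not_disjoint_iff_nonempty_inter,
      compl_compl]
  rw [hX, hXc, completeBipartite, mem_sdiff, mem_union]
  simp only [mem_powersetCard, subset_univ, true_and]
  tauto

theorem card_completeBipartite :
    #(completeBipartite X) =
      (Fintype.card V).choose 3 - (#X).choose 3 - (#Xᶜ).choose 3 := by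
  have hdisj : Disjoint (X.powersetCard 3) (Xᶜ.powersetCard 3) := by
    rw [disjoint_left]
    intro e he he'
    obtain ⟨heX, he3⟩ := mem_powersetCard.1 he
    have hempty := disjoint_compl_right.mono heX (mem_powersetCard.1 he').1
    rw [(disjoint_self_iff_empty e).1 hempty] at he3
    simp at he3
  have hsub := fun s : Finset V => powersetCard_mono (n := 3) (subset_univ s)
  rw [completeBipartite, card_sdiff_of_subset (union_subset (hsub X) (hsub Xᶜ)),
    card_union_of_disjoint hdisj, card_powersetCard, card_powersetCard, card_powersetCard,
    card_univ, Nat.sub_sub]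

end CompleteBipartite

end FanoTuran

open FanoTuran in
theorem fano_extremal_unique_general {V : Type*} [Fintype V] [DecidableEq V]
    (E : Finset (Finset V)) (h8 : 8 ≤ Fintype.card V) (h3 : ∀ e ∈ E, e.card = 3)
    (hcard : b (Fintype.card V) ≤ E.card) (hF : ¬ ContainsFano E) :
    ∃ X Y : Finset V, Disjoint X Y ∧ X ∪ Y = Finset.univ ∧
      ((X.card : ℤ) - (Y.card : ℤ)).natAbs ≤ 1 ∧
      ∀ e : Finset V, e.card = 3 → (e ∈ E ↔ (e ∩ X).Nonempty ∧ (e ∩ Y).Nonempty) := by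
  have hE : E ⊆ Finset.univ.powersetCard 3 := fun e he =>
    Finset.mem_powersetCard.2 ⟨Finset.subset_univ e, h3 e he⟩
  have hcount : 6 * (b (Finset.univ : Finset V).card : ℤ) ≤ count E Finset.univ := by
    rw [count_eq_six_mul_card, Finset.filter_mem_eq_inter, Finset.inter_eq_right.2 hE,
      Finset.card_univ]
    exact_mod_cast Nat.mul_le_mul_left 6 hcard
  obtain ⟨X, -, hX, hXc⟩ := exists_partition hF (by rwa [Finset.card_univ]) hcount
  rw [← Finset.compl_eq_univ_sdiff] at hXc
  have hsub : E ⊆ completeBipartite X :=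
    Finset.subset_sdiff.2 ⟨hE, (Finset.disjoint_union_left.2 ⟨hX, hXc⟩).symm⟩
  have hV : X.card + Xᶜ.card = Fintype.card V := X.card_add_card_compl
  have hle : (completeBipartite X).card ≤ b (Fintype.card V) := by
    rw [card_completeBipartite, ← hV]
    exact choose_three_sub_le_b (by omega)
  have heq : E = completeBipartite X := Finset.eq_of_subset_of_card_le hsub (hle.trans hcard)
  refine ⟨X, Xᶜ, disjoint_compl_right, X.union_compl, natAbs_sub_le_one_of_b_le (by omega) ?_,
    fun e he => ?_⟩
  · rw [hV, ← card_completeBipartite, ← heq]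
    exact hcard
  · rw [heq, mem_completeBipartite, and_iff_right he]

/-- For `n ≥ 8`, the unique extremal Fano-free hypergraph on `n` vertices with `b n`
edges is the balanced, complete, bipartite hypergraph `B_n`. -/
theorem fano_extremal_unique (n : ℕ) (hn : 8 ≤ n) (E : Finset (Finset (Fin n)))
    (h3 : ∀ e ∈ E, e.card = 3) (hcard : E.card = b n) (hF : ¬ ContainsFano E) :
    ∃ X Y : Finset (Fin n), Disjoint X Y ∧ X ∪ Y = Finset.univ ∧
      ((X.card : ℤ) - (Y.card : ℤ)).natAbs ≤ 1 ∧
      ∀ e : Finset (Fin n), e.card = 3 →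
        (e ∈ E ↔ (e ∩ X).Nonempty ∧ (e ∩ Y).Nonempty) :=
  fano_extremal_unique_general E (by simpa using hn) h3 (by simp [hcard]) hF
end

section
/- Every 3-uniform hypergraph H on 7 vertices with exactly 30 edges that does not contain the Fano plane is isomorphic either to B_7 or to J_7. Equivalently, either there is a partition of the vertex set into sets X and Y of sizes 3 and 4 such that the edges of H are exactly the triples meeting both X and Y, or there are two distinct vertices x, y such that the edges of H are exactly the triples not containing both x and y. -/
open Finset
open scoped Pointwise

section TransitiveAveraging

open MulAction

variable {G X : Type*} [Group G] [DecidableEq X] [MulAction G X] {A B : Finset X}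
  {x y : X}

lemma card_filter_smul_eq_mul_ncard_orbit [Fintype G] (hy : y ∈ orbit G x) :
    #{g : G | g • x = y} * (orbit G x).ncard = Fintype.card G := by
  obtain ⟨h, rfl⟩ := hy
  have hcoset : #{g : G | g • x = h • x} = Nat.card (stabilizer G x) := by
    rw [← Nat.card_eq_finsetCard]
    exact Nat.card_congr ((Equiv.mulLeft h⁻¹).subtypeEquiv fun g ↦ by
      simp [mem_stabilizer_iff, mul_smul, inv_smul_eq_iff])
  rw [hcoset, ← index_stabilizer, Subgroup.card_mul_index, Nat.card_eq_fintype_card]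

lemma sum_card_smul_inter_mul_ncard_orbit [Fintype G] (hA : ↑A ⊆ orbit G x) (hB : ↑B ⊆ orbit G x) :
    (∑ g : G, #(g • A ∩ B)) * (orbit G x).ncard = Fintype.card G * (#A * #B) := by
  have hpairs (g : G) : #(g • A ∩ B) = #{p ∈ A ×ˢ B | g • p.1 = p.2} := by
    refine (card_nbij' (fun p ↦ p.2) (fun b ↦ (g⁻¹ • b, b)) ?_ ?_ ?_ ?_).symm
    · rintro ⟨a, b⟩ h
      have := smul_mem_smul_finset (a := g) (b := a) (s := A)
      grind
    · intro b h
      have := inv_smul_mem_iff (a := g) (b := b) (s := A)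
      have := smul_inv_smul g b
      grind
    · rintro ⟨a, b⟩ h
      have := inv_smul_smul g a
      grind
    · intro _ _
      rfl
  have hcount : ∀ p ∈ A ×ˢ B,
      #{g : G | g • p.1 = p.2} * (orbit G x).ncard = Fintype.card G := by
    intro p hp
    rw [mem_product] at hp
    have horbit : orbit G p.1 = orbit G x := orbit_eq_iff.2 (hA hp.1)
    rw [← horbit]
    exact card_filter_smul_eq_mul_ncard_orbit (horbit ▸ hB hp.2)
  calc (∑ g : G, #(g • A ∩ B)) * (orbit G x).ncard
      = ∑ p ∈ A ×ˢ B, #{g : G | g • p.1 = p.2} * (orbit G x).ncard := by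
        simp_rw [hpairs, ← sum_mul]
        congr 1
        exact sum_card_bipartiteAbove_eq_sum_card_bipartiteBelow
          fun (g : G) (p : X × X) ↦ g • p.1 = p.2
    _ = Fintype.card G * (#A * #B) := by
        rw [sum_congr rfl hcount, sum_const, card_product, smul_eq_mul, mul_comm]

lemma ncard_orbit_le_of_forall_smul_inter_nonempty [Finite G] (hA : ↑A ⊆ orbit G x)
    (hB : ↑B ⊆ orbit G x) (hAB : ∀ g : G, (g • A ∩ B).Nonempty) : (orbit G x).ncard ≤ #A * #B := by
  cases nonempty_fintype G
  refine Nat.le_of_mul_le_mul_left ?_ (Fintype.card_pos (α := G))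
  rw [← sum_card_smul_inter_mul_ncard_orbit hA hB]
  gcongr
  simpa using card_nsmul_le_sum univ (fun g : G ↦ #(g • A ∩ B)) 1 fun g _ ↦ (hAB g).card_pos

lemma card_smul_inter_eq_one [Finite G] (hA : ↑A ⊆ orbit G x) (hB : ↑B ⊆ orbit G x)
    (hAB : ∀ g : G, (g • A ∩ B).Nonempty) (hcard : #A * #B = (orbit G x).ncard) (g : G) :
    #(g • A ∩ B) = 1 := by
  cases nonempty_fintype G
  have hpos : 0 < (orbit G x).ncard :=
    (Set.ncard_pos (Set.finite_range _)).2 (nonempty_orbit x)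
  have hsum : ∑ g : G, 1 = ∑ g : G, #(g • A ∩ B) := by
    refine Nat.eq_of_mul_eq_mul_right hpos ?_
    rw [sum_card_smul_inter_mul_ncard_orbit hA hB, hcard]
    simp
  exact ((sum_eq_sum_iff_of_le fun g _ ↦ (hAB g).card_pos).1 hsum g (mem_univ g)).symm

end TransitiveAveraging

section SetFamilies

variable {α : Type*} [DecidableEq α] {A B C : Finset α} {k : ℕ}

section Permutations

lemma orbit_perm_eq_powersetCard (hA : #A = k) :
    MulAction.orbit (Equiv.Perm α) A = Set.powersetCard α k := by
  ext B
  refine ⟨?_, fun hB ↦ ?_⟩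
  · rintro ⟨σ, rfl⟩
    exact (card_smul_finset σ A).trans hA
  · have := Set.powersetCard.isPretransitive (α := α) (n := k)
    obtain ⟨σ, hσ⟩ := MulAction.exists_smul_eq (Equiv.Perm α)
      (⟨A, hA⟩ : Set.powersetCard α k) ⟨B, hB⟩
    exact ⟨σ, congrArg Subtype.val hσ⟩

variable [Fintype α] {𝒜 ℬ : Finset (Finset α)}

lemma ncard_orbit_perm (hA : #A = k) :
    (MulAction.orbit (Equiv.Perm α) A).ncard = (Fintype.card α).choose k := by
  rw [orbit_perm_eq_powersetCard hA, ← Nat.card_coe_set_eq, Set.powersetCard.card,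
    Nat.card_eq_fintype_card]

lemma choose_le_card_mul_card_of_forall_smul_inter_nonempty
    (h𝒜 : (𝒜 : Set (Finset α)).Sized k) (hℬ : (ℬ : Set (Finset α)).Sized k)
    (hmeet : ∀ σ : Equiv.Perm α, (σ • 𝒜 ∩ ℬ).Nonempty) :
    (Fintype.card α).choose k ≤ #𝒜 * #ℬ := by
  obtain ⟨A, hA⟩ := (hmeet 1).mono inter_subset_right
  have horbit := orbit_perm_eq_powersetCard (hℬ hA)
  rw [← ncard_orbit_perm (hℬ hA)]
  exact ncard_orbit_le_of_forall_smul_inter_nonempty (horbit ▸ h𝒜) (horbit ▸ hℬ) hmeet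

lemma card_smul_inter_eq_one_of_card_mul_card_eq_choose
    (h𝒜 : (𝒜 : Set (Finset α)).Sized k) (hℬ : (ℬ : Set (Finset α)).Sized k)
    (hmeet : ∀ σ : Equiv.Perm α, (σ • 𝒜 ∩ ℬ).Nonempty)
    (hcard : #𝒜 * #ℬ = (Fintype.card α).choose k) (σ : Equiv.Perm α) :
    #(σ • 𝒜 ∩ ℬ) = 1 := by
  obtain ⟨A, hA⟩ := (hmeet 1).mono inter_subset_right
  have horbit := orbit_perm_eq_powersetCard (hℬ hA)
  rw [← ncard_orbit_perm (hℬ hA)] at hcard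
  exact card_smul_inter_eq_one (horbit ▸ h𝒜) (horbit ▸ hℬ) hmeet hcard σ

end Permutations

lemma subset_union_or_inter_subset (hC : #C ≤ k + 1) (hAB : #(A ∩ B) ≤ k) (hAC : k ≤ #(A ∩ C))
    (hBC : k ≤ #(B ∩ C)) : C ⊆ A ∪ B ∨ A ∩ B ⊆ C := by
  refine or_iff_not_imp_left.2 fun hCAB ↦ ?_
  have hlt : #((A ∪ B) ∩ C) < #C :=
    card_lt_card (inter_subset_right.ssubset_of_ne fun h ↦ hCAB (inter_eq_right.1 h))
  have hA : A ∩ C = (A ∪ B) ∩ C :=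
    eq_of_subset_of_card_le (inter_subset_inter_right subset_union_left) (by lia)
  have hB : B ∩ C = (A ∪ B) ∩ C :=
    eq_of_subset_of_card_le (inter_subset_inter_right subset_union_right) (by lia)
  have hAB' : A ∩ C = A ∩ B :=
    eq_of_subset_of_card_le (subset_inter inter_subset_left (hA.trans hB.symm ▸ inter_subset_left))
      (hAB.trans hAC)
  exact hAB' ▸ inter_subset_right

lemma inter_union_inter_eq_left_of_not_subset (hA : #A ≤ k + 1) (hAC : k ≤ #(A ∩ C))
    (hABC : ¬ A ∩ B ⊆ C) : A ∩ B ∪ A ∩ C = A := by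
  have hlt : #(A ∩ C) < #(A ∩ B ∪ A ∩ C) := by
    refine card_lt_card (subset_union_right.ssubset_of_ne fun h ↦ hABC ?_)
    exact (union_eq_right.1 h.symm).trans inter_subset_right
  exact eq_of_subset_of_card_le (union_subset inter_subset_left inter_subset_left) (by lia)

lemma exists_forall_subset_or_exists_forall_subset_of_isIntersectingOf_singleton
    {𝒜 : Set (Finset α)} (hnt : 𝒜.Nontrivial) (hsized : 𝒜.Sized (k + 1))
    (hinter : Set.IsIntersectingOf {k} 𝒜) :
    (∃ P : Finset α, #P = k ∧ ∀ C ∈ 𝒜, P ⊆ C) ∨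
      ∃ U : Finset α, #U = k + 2 ∧ ∀ C ∈ 𝒜, C ⊆ U := by
  have hdich : ∀ A ∈ 𝒜, ∀ B ∈ 𝒜, A ≠ B → ∀ C ∈ 𝒜, C ⊆ A ∪ B ∨ A ∩ B ⊆ C := by
    intro A hA B hB hAB C hC
    obtain rfl | hAC := eq_or_ne A C
    · exact .inl subset_union_left
    obtain rfl | hBC := eq_or_ne B C
    · exact .inl subset_union_right
    exact subset_union_or_inter_subset (hsized hC).le (hinter hA hB hAB).le (hinter hA hC hAC).ge
      (hinter hB hC hBC).ge
  have hunion : ∀ A ∈ 𝒜, ∀ B ∈ 𝒜, A ≠ B → #(A ∪ B) = k + 2 := by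
    intro A hA B hB hAB
    have hadd := card_union_add_card_inter A B
    rw [hsized hA, hsized hB, hinter hA hB hAB] at hadd
    lia
  obtain ⟨A, hA, B, hB, hAB⟩ := hnt
  refine or_iff_not_imp_left.2 fun hP ↦ ⟨A ∪ B, hunion A hA B hB hAB, fun D hD ↦ ?_⟩
  obtain ⟨C, hC, hABC⟩ : ∃ C ∈ 𝒜, ¬ A ∩ B ⊆ C := by
    by_contra! h
    exact hP ⟨A ∩ B, hinter hA hB hAB, h⟩
  have hAC : A ≠ C := by
    rintro rfl
    exact hABC inter_subset_left
  have hCU : C ⊆ A ∪ B := (hdich A hA B hB hAB C hC).resolve_right hABC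
  have hU : A ∪ C = A ∪ B :=
    eq_of_subset_of_card_le (union_subset subset_union_left hCU)
      (by rw [hunion A hA B hB hAB, hunion A hA C hC hAC])
  obtain hDU | hABD := hdich A hA B hB hAB D hD
  · exact hDU
  obtain hDU | hACD := hdich A hA C hC hAC D hD
  · exact hU ▸ hDU
  have hAD : A ⊆ D := by
    rw [← inter_union_inter_eq_left_of_not_subset (hsized hA).le (hinter hA hC hAC).ge hABC]
    exact union_subset hABD hACD
  rw [← eq_of_subset_of_card_le hAD (by rw [hsized hA, hsized hD])]
  exact subset_union_left

lemma exists_forall_subset_of_isIntersectingOf_singleton {𝒜 : Finset (Finset α)}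
    (hcard : k + 2 < #𝒜) (hsized : (𝒜 : Set (Finset α)).Sized (k + 1))
    (hinter : Set.IsIntersectingOf {k} (𝒜 : Set (Finset α))) :
    ∃ P : Finset α, #P = k ∧ ∀ C ∈ 𝒜, P ⊆ C := by
  have hnt : (𝒜 : Set (Finset α)).Nontrivial := one_lt_card_iff_nontrivial.1 (by lia)
  refine (exists_forall_subset_or_exists_forall_subset_of_isIntersectingOf_singleton hnt hsized
    hinter).resolve_right ?_
  rintro ⟨U, hU, h𝒜⟩
  have hle : #𝒜 ≤ #(U.powersetCard (k + 1)) :=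
    card_le_card fun C hC ↦ mem_powersetCard.2 ⟨h𝒜 C hC, hsized hC⟩
  rw [card_powersetCard, hU, Nat.choose_succ_self_right] at hle
  lia

end SetFamilies

section SevenPoints

variable {α : Type*} [Fintype α] [DecidableEq α]

section DisjointMembers

variable {M : Set (Finset α)} {A B C : Finset α} (hα : Fintype.card α = 7) (hsized : M.Sized 3)
  (hinter : Set.IsIntersectingOf {0, 2} M) (hA : A ∈ M) (hB : B ∈ M) (hAB : Disjoint A B)
include hα hsized hinter hA hB hAB

lemma disjoint_and_compl_union_subset (hC : C ∈ M) (hCA : C ≠ A) (hdisj : ¬ Disjoint C A) :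
    Disjoint C B ∧ (A ∪ B)ᶜ ⊆ C := by
  have hcompl : #(A ∪ B)ᶜ = 1 := by
    rw [card_compl, card_union_of_disjoint hAB, hsized hA, hsized hB, hα]
  have hCA2 : #(C ∩ A) = 2 :=
    (hinter hC hA hCA).resolve_left fun h ↦ hdisj (disjoint_iff_inter_eq_empty.2 (card_eq_zero.1 h))
  have hCB : C ≠ B := by
    rintro rfl
    exact hdisj hAB.symm
  have hsplit : #(C ∩ A) + #(C ∩ B) + #(C ∩ (A ∪ B)ᶜ) = 3 := by
    rw [← card_union_of_disjoint (hAB.mono inter_subset_right inter_subset_right),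
      ← inter_union_distrib_left, ← sdiff_eq_inter_compl, card_inter_add_card_sdiff, hsized hC]
  have hCB0 : #(C ∩ B) = 0 := (hinter hC hB hCB).resolve_right fun h ↦ by
    rw [Set.mem_singleton_iff] at h
    lia
  exact ⟨disjoint_iff_inter_eq_empty.2 (card_eq_zero.1 hCB0),
    inter_eq_right.1 (eq_of_subset_of_card_le inter_subset_right (by lia))⟩

lemma forall_disjoint_or_forall_disjoint :
    (∀ C ∈ M, C ≠ A → Disjoint C A) ∨ ∀ C ∈ M, C ≠ B → Disjoint C B := by
  by_contra! h
  obtain ⟨⟨C, hC, hCA, hCA'⟩, D, hD, hDB, hDB'⟩ := h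
  obtain ⟨hCB, hpC⟩ := disjoint_and_compl_union_subset hα hsized hinter hA hB hAB hC hCA hCA'
  obtain ⟨hDA, hpD⟩ := disjoint_and_compl_union_subset hα hsized hinter hB hA hAB.symm hD hDB hDB'
  rw [union_comm] at hpD
  have hCD : C ∩ D = (A ∪ B)ᶜ := by
    refine Subset.antisymm (fun x hx ↦ ?_) (subset_inter hpC hpD)
    have := disjoint_left.1 hCB (mem_inter.1 hx).1
    have := disjoint_left.1 hDA (mem_inter.1 hx).2
    simp_all
  have hcard : #(C ∩ D) ∈ ({0, 2} : Set ℕ) := hinter hC hD (by rintro rfl; exact hCA' hDA)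
  rw [hCD, card_compl, card_union_of_disjoint hAB, hsized hA, hsized hB, hα] at hcard
  simp at hcard

end DisjointMembers

lemma notMem_insert_powersetCard_compl_iff {X e : Finset α} {k : ℕ} (hX : #X = k) (he : #e = k) :
    e ∉ insert X (powersetCard k Xᶜ) ↔ (e ∩ X).Nonempty ∧ (e ∩ Xᶜ).Nonempty := by
  have heX : e = X ↔ e ⊆ X := ⟨Eq.subset, fun h ↦ eq_of_subset_of_card_le h (by rw [he, hX])⟩
  rw [mem_insert, mem_powersetCard, and_iff_left he, heX, subset_compl_iff_disjoint_right,
    ← not_disjoint_iff_nonempty_inter, ← not_disjoint_iff_nonempty_inter,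
    disjoint_compl_right_iff]
  tauto

lemma eq_insert_powersetCard_compl {M : Finset (Finset α)} {X : Finset α}
    (hα : Fintype.card α = 7) (hcard : #M = 5) (hsized : (M : Set (Finset α)).Sized 3)
    (hX : X ∈ M) (hdisj : ∀ C ∈ M, C ≠ X → Disjoint C X) : M = insert X (powersetCard 3 Xᶜ) := by
  have hsub : M ⊆ insert X (powersetCard 3 Xᶜ) := fun C hC ↦ by
    rw [mem_insert, mem_powersetCard]
    exact or_iff_not_imp_left.2 fun hCX ↦
      ⟨subset_compl_iff_disjoint_right.2 (hdisj C hC hCX), hsized hC⟩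
  refine eq_of_subset_of_card_le hsub ((card_insert_le _ _).trans ?_)
  rw [card_powersetCard, card_compl, hα, hsized hX, hcard]
  decide

lemma eq_insert_powersetCard_compl_or_eq_filter_subset {M : Finset (Finset α)}
    (hα : Fintype.card α = 7) (hcard : #M = 5) (hsized : (M : Set (Finset α)).Sized 3)
    (hinter : Set.IsIntersectingOf {0, 2} (M : Set (Finset α))) :
    (∃ X : Finset α, #X = 3 ∧ M = insert X (powersetCard 3 Xᶜ)) ∨
      ∃ P : Finset α, #P = 2 ∧ M = {e ∈ powersetCard 3 (univ : Finset α) | P ⊆ e} := by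
  by_cases hdisj : ∃ A ∈ M, ∃ B ∈ M, Disjoint A B
  · obtain ⟨A, hA, B, hB, hAB⟩ := hdisj
    left
    obtain h | h := forall_disjoint_or_forall_disjoint hα hsized hinter hA hB hAB
    · exact ⟨A, hsized hA, eq_insert_powersetCard_compl hα hcard hsized hA h⟩
    · exact ⟨B, hsized hB, eq_insert_powersetCard_compl hα hcard hsized hB h⟩
  · push Not at hdisj
    have htwo : Set.IsIntersectingOf {2} (M : Set (Finset α)) := fun A hA B hB hAB ↦
      (hinter hA hB hAB).resolve_left fun h ↦
        hdisj A hA B hB (disjoint_iff_inter_eq_empty.2 (card_eq_zero.1 h))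
    obtain ⟨P, hP, hPM⟩ :=
      exists_forall_subset_of_isIntersectingOf_singleton (by lia) hsized htwo
    refine .inr ⟨P, hP, eq_of_subset_of_card_le (fun C hC ↦ ?_) ?_⟩
    · exact mem_filter.2 ⟨mem_powersetCard.2 ⟨subset_univ C, hsized hC⟩, hPM C hC⟩
    · rw [card_filter_powersetCard_subset _ _ _ (subset_univ P) (by lia), card_univ, hα, hP, hcard]
      decide

end SevenPoints

section FanoPlane

variable {α : Type*} [DecidableEq α]

/-- The set of lines of the Fano plane with points `v 0, …, v 6`, numbered as in
`ContainsFano`; as a finset, so that permutations act on it and its lines can be counted. -/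
def fanoPlane (v : Fin 7 → α) : Finset (Finset α) :=
  {{v 0, v 1, v 2}, {v 2, v 3, v 4}, {v 0, v 4, v 5}, {v 0, v 3, v 6}, {v 2, v 5, v 6},
    {v 1, v 4, v 6}, {v 1, v 3, v 5}}

lemma fanoPlane_comp {β : Type*} [DecidableEq β] (f : α → β) (v : Fin 7 → α) :
    fanoPlane (f ∘ v) = (fanoPlane v).image (image f) := by
  simp [fanoPlane, image_insert]

lemma smul_fanoPlane (σ : Equiv.Perm α) (v : Fin 7 → α) : σ • fanoPlane v = fanoPlane (σ ∘ v) :=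
  (fanoPlane_comp σ v).symm

lemma card_fanoPlane {v : Fin 7 → α} (hv : v.Injective) : #(fanoPlane v) = 7 := by
  rw [← Function.comp_id v, fanoPlane_comp, card_image_of_injective _ (image_injective hv)]
  decide

lemma sized_fanoPlane {v : Fin 7 → α} (hv : v.Injective) :
    (fanoPlane v : Set (Finset α)).Sized 3 := by
  have hid : ∀ l ∈ fanoPlane (id : Fin 7 → Fin 7), #l = 3 := by decide +kernel
  rw [← Function.comp_id v, fanoPlane_comp]
  intro e he
  obtain ⟨l, hl, rfl⟩ := mem_image.1 he
  rw [card_image_of_injective _ hv, hid l hl]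

variable [Fintype α]

lemma exists_mem_fanoPlane_mem_fanoPlane (hα : Fintype.card α = 7) {s t : Finset α} (hs : #s = 3)
    (ht : #t = 3) (hst : #(s ∩ t) = 1) :
    ∃ v : Fin 7 → α, v.Injective ∧ s ∈ fanoPlane v ∧ t ∈ fanoPlane v := by
  obtain ⟨c, hc⟩ := card_eq_one.1 hst
  obtain ⟨a, b, -, hab⟩ : ∃ a b, a ≠ b ∧ s \ t = {a, b} := card_eq_two.1 (by grind)
  obtain ⟨d, e, -, hde⟩ : ∃ d e, d ≠ e ∧ t \ s = {d, e} := card_eq_two.1 (by grind)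
  obtain ⟨f, g, -, hfg⟩ : ∃ f g, f ≠ g ∧ (s ∪ t)ᶜ = {f, g} :=
    card_eq_two.1 (by grind [card_compl])
  have hsurj : (![a, b, c, d, e, f, g]).Surjective := by
    intro x
    have hx : x ∈ s \ t ∪ s ∩ t ∪ t \ s ∪ (s ∪ t)ᶜ := by
      simp only [mem_union, mem_inter, mem_sdiff, mem_compl]
      tauto
    rw [hab, hc, hde, hfg] at hx
    simp only [Fin.exists_fin_succ, Matrix.cons_val_zero, Matrix.cons_val_succ,
      Matrix.cons_val_fin_one, exists_const]
    grind
  refine ⟨![a, b, c, d, e, f, g],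
    hsurj.injective_of_finite (Fintype.equivFinOfCardEq hα).symm, ?_, ?_⟩
  · have : s = {a, b, c} := by rw [← sdiff_union_inter s t, hab, hc]; grind
    simp [fanoPlane, this]
  · have : t = {c, d, e} := by rw [← sdiff_union_inter t s, inter_comm, hde, hc]; grind
    simp [fanoPlane, this]

lemma fanoPlane_inter_sdiff_nonempty {E : Finset (Finset α)} (hE : ¬ ContainsFano E)
    {v : Fin 7 → α} (hv : v.Injective) : (fanoPlane v ∩ (powersetCard 3 univ \ E)).Nonempty := by
  contrapose! hE
  have hsub : fanoPlane v ⊆ E := fun e he ↦ by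
    by_contra heE
    have hmem : e ∈ fanoPlane v ∩ (powersetCard 3 univ \ E) := by
      simp [he, heE, sized_fanoPlane hv he]
    simp [hE] at hmem
  exact ⟨v, hv, by simpa [fanoPlane, insert_subset_iff] using hsub⟩

section Blocking

variable {M : Finset (Finset α)} (hα : Fintype.card α = 7)
  (hsized : (M : Set (Finset α)).Sized 3)
  (hmeet : ∀ v : Fin 7 → α, v.Injective → (fanoPlane v ∩ M).Nonempty)
include hα hsized hmeet

lemma five_le_card_of_forall_fanoPlane_inter_nonempty : 5 ≤ #M := by
  let v : Fin 7 ≃ α := (Fintype.equivFinOfCardEq hα).symm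
  have hle : (Fintype.card α).choose 3 ≤ #(fanoPlane v) * #M :=
    choose_le_card_mul_card_of_forall_smul_inter_nonempty (sized_fanoPlane v.injective) hsized
      fun σ ↦ smul_fanoPlane σ v ▸ hmeet _ (σ.injective.comp v.injective)
  rw [hα, card_fanoPlane v.injective, show Nat.choose 7 3 = 35 from rfl] at hle
  lia

lemma card_fanoPlane_inter_eq_one (hcard : #M = 5) {v : Fin 7 → α} (hv : v.Injective) :
    #(fanoPlane v ∩ M) = 1 := by
  rw [← one_smul (Equiv.Perm α) (fanoPlane v)]
  refine card_smul_inter_eq_one_of_card_mul_card_eq_choose (sized_fanoPlane hv) hsized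
    (fun σ ↦ smul_fanoPlane σ v ▸ hmeet _ (σ.injective.comp hv)) ?_ 1
  rw [card_fanoPlane hv, hcard, hα]
  rfl

lemma isIntersectingOf_zero_two_of_forall_fanoPlane_inter_nonempty (hcard : #M = 5) :
    Set.IsIntersectingOf {0, 2} (M : Set (Finset α)) := by
  intro s hs t ht hst
  have hlt : #(s ∩ t) < 3 := by
    rw [← hsized hs]
    refine card_lt_card (inter_subset_left.ssubset_of_ne fun h ↦ hst ?_)
    exact eq_of_subset_of_card_le (inter_eq_left.1 h) (by rw [hsized hs, hsized ht])
  have hne : #(s ∩ t) ≠ 1 := by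
    intro h
    obtain ⟨v, hv, hsv, htv⟩ := exists_mem_fanoPlane_mem_fanoPlane hα (hsized hs) (hsized ht) h
    exact hst (card_le_one.1 (card_fanoPlane_inter_eq_one hα hsized hmeet hcard hv).le s
      (mem_inter.2 ⟨hsv, hs⟩) t (mem_inter.2 ⟨htv, ht⟩))
  simp only [Set.mem_insert_iff, Set.mem_singleton_iff]
  lia

end Blocking

theorem fano_extremal_seven_general (hα : Fintype.card α = 7) (E : Finset (Finset α))
    (h3 : ∀ e ∈ E, #e = 3) (hcard : 30 ≤ #E) (hF : ¬ ContainsFano E) :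
    (∃ X Y : Finset α, Disjoint X Y ∧ X ∪ Y = univ ∧ #X = 3 ∧ #Y = 4 ∧
      ∀ e : Finset α, #e = 3 → (e ∈ E ↔ (e ∩ X).Nonempty ∧ (e ∩ Y).Nonempty)) ∨
    (∃ x y : α, x ≠ y ∧ ∀ e : Finset α, #e = 3 → (e ∈ E ↔ ¬ (x ∈ e ∧ y ∈ e))) := by
  set M := powersetCard 3 univ \ E with hM
  have hE : ∀ e, #e = 3 → (e ∈ E ↔ e ∉ M) := by simp +contextual [hM]
  have hsized : (M : Set (Finset α)).Sized 3 := fun e he ↦ by simp_all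
  have hmeet (v : Fin 7 → α) (hv : v.Injective) : (fanoPlane v ∩ M).Nonempty :=
    fanoPlane_inter_sdiff_nonempty hF hv
  have hcardM : #M = 5 := by
    have hge := five_le_card_of_forall_fanoPlane_inter_nonempty hα hsized hmeet
    have hadd : #M + #E = 35 := by
      have hsub : E ⊆ powersetCard 3 univ := fun e he ↦ by simp [h3 e he]
      rw [card_sdiff_add_card_eq_card hsub, card_powersetCard, card_univ, hα]
      rfl
    lia
  have hinter := isIntersectingOf_zero_two_of_forall_fanoPlane_inter_nonempty hα hsized hmeet hcardM
  obtain ⟨X, hX, hMX⟩ | ⟨P, hP, hMP⟩ :=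
    eq_insert_powersetCard_compl_or_eq_filter_subset hα hcardM hsized hinter
  · refine .inl ⟨X, Xᶜ, disjoint_compl_right, union_compl X, hX, by rw [card_compl, hα, hX],
      fun e he ↦ ?_⟩
    rw [hE e he, hMX, notMem_insert_powersetCard_compl_iff hX he]
  · obtain ⟨x, y, hxy, rfl⟩ := card_eq_two.1 hP
    refine .inr ⟨x, y, hxy, fun e he ↦ ?_⟩
    rw [hE e he, hMP]
    simp [he, insert_subset_iff]

end FanoPlane

/-- Every Fano-free hypergraph on `7` vertices with `30` edges is isomorphic to
`B_7` or to `J_7`. -/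
theorem fano_extremal_seven (E : Finset (Finset (Fin 7))) (h3 : ∀ e ∈ E, e.card = 3)
    (hcard : E.card = 30) (hF : ¬ ContainsFano E) :
    (∃ X Y : Finset (Fin 7), Disjoint X Y ∧ X ∪ Y = Finset.univ ∧
      X.card = 3 ∧ Y.card = 4 ∧
      ∀ e : Finset (Fin 7), e.card = 3 →
        (e ∈ E ↔ (e ∩ X).Nonempty ∧ (e ∩ Y).Nonempty)) ∨
    (∃ x y : Fin 7, x ≠ y ∧
      ∀ e : Finset (Fin 7), e.card = 3 → (e ∈ E ↔ ¬ (x ∈ e ∧ y ∈ e))) :=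
  fano_extremal_seven_general (Fintype.card_fin 7) E h3 hcard.ge hF
end
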